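/- Let u be a monotone traveling wave solution of the balanced Allen-Cahn equation in the plane. Then u is even in x after a translation: there exists x₀ ∈ ℝ such that u(x₀ + x, y) = u(x₀ − x, y) for all (x, y) ∈ ℝ², and moreover ∂u/∂x(x, y) < 0 whenever x > x₀. -/

import Mathlib

open Real Filter MeasureTheory Metric

noncomputable def pdx (u : ℝ → ℝ → ℝ) (x y : ℝ) : ℝ := deriv (fun t => u t y) x

noncomputable def pdy (u : ℝ → ℝ → ℝ) (x y : ℝ) : ℝ := deriv (fun t => u x t) y

noncomputable def pdxx (u : ℝ → ℝ → ℝ) (x y : ℝ) : ℝ := deriv (fun t => pdx u t y) x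

noncomputable def pdyy (u : ℝ → ℝ → ℝ) (x y : ℝ) : ℝ := deriv (fun t => pdy u x t) y

/-- `F` is a balanced double-well potential. -/
def BalancedDoubleWell (F : ℝ → ℝ) : Prop :=
  ContDiff ℝ 3 F ∧ deriv F (-1) = 0 ∧ deriv F 1 = 0 ∧
  0 < deriv (deriv F) (-1) ∧ 0 < deriv (deriv F) 1 ∧
  (∀ s ∈ Set.Ioo (-1 : ℝ) 0, 0 < deriv F s) ∧
  (∀ s ∈ Set.Ioo (0 : ℝ) 1, deriv F s < 0) ∧
  F (-1) = 0 ∧ F 1 = 0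

/-- `u` is a `C³` solution of `Δu + c uᵧ = F'(u)` on `ℝ²` with `|u| ≤ 1`
which is monotone in `y`. -/
def IsSolution (F : ℝ → ℝ) (c : ℝ) (u : ℝ → ℝ → ℝ) : Prop :=
  ContDiff ℝ 3 (fun p : ℝ × ℝ => u p.1 p.2) ∧
  (∀ x y : ℝ, pdxx u x y + pdyy u x y + c * pdy u x y = deriv F (u x y)) ∧
  (∀ x y : ℝ, |u x y| ≤ 1) ∧
  (∀ x y : ℝ, 0 < pdy u x y)

/-- A monotone traveling wave solution connecting `-1` to `1`. -/
def IsTravelingWave (F : ℝ → ℝ) (c : ℝ) (u : ℝ → ℝ → ℝ) : Prop :=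
  IsSolution F c u ∧
  (∀ x : ℝ, Tendsto (fun y => u x y) atTop (nhds 1)) ∧
  (∀ x : ℝ, Tendsto (fun y => u x y) atBot (nhds (-1)))

/-!
Read `y` as time. Along the horizontal slices the Hamiltonian of the equation changes by the
dissipation `c ∫ (∂u/∂y)²`, up to bounded fluxes, so the total dissipation is finite and, by
interior estimates, `∂u/∂y` and its gradient decay at infinity: far out, slices nearly solve the
one-dimensional equation. A Modica–Mortola argument then gives `u → -1` as `x → ±∞` and shows
that, high enough up, the right part of a slice nearly solves the profile equation
`∂u/∂x = -√(2F(u))`, and its left part the mirror image of that equation.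

Compare a high slice with its reflection across a vertical line. Two approximate solutions of the
same first-order equation cannot cross by more than a small amount (Grönwall), so to the right of
the line one lies below the other up to an error, in a direction that persists along a sequence of
heights with errors tending to `0`. To bring this ordering down to all lower heights, slide a
vertical translate of `u` against the reflection, perturbed vertically by `ε e^{κ (y - Y)}` and by
a matching horizontal shift. The perturbation rules out touching points far away; as `ε → 0` the
remaining ones converge to a touching point of the unperturbed reflection with a translate, which
the strong maximum principle excludes.

Hence `u` compares with its reflection across every vertical line, in one direction or the other.
Both directions occur and both are closed conditions on the line, so by connectedness of `ℝ` they
hold together for some line, which is an axis of symmetry. To the right of it `u` is nonincreasing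
in `x`, strictly so by the strong maximum principle for `∂u/∂x`.
-/

/-! ### Partial derivatives -/

section Calculus

variable {u : ℝ → ℝ → ℝ}

lemma hasDerivAt_fst_of_hasFDerivAt {f : ℝ × ℝ → ℝ} {f' : ℝ × ℝ →L[ℝ] ℝ} {x y : ℝ}
    (h : HasFDerivAt f f' (x, y)) : HasDerivAt (fun t => f (t, y)) (f' (1, 0)) x :=
  h.comp_hasDerivAt x ((hasDerivAt_id x).prodMk (hasDerivAt_const x y))

lemma hasDerivAt_snd_of_hasFDerivAt {f : ℝ × ℝ → ℝ} {f' : ℝ × ℝ →L[ℝ] ℝ} {x y : ℝ}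
    (h : HasFDerivAt f f' (x, y)) : HasDerivAt (fun t => f (x, t)) (f' (0, 1)) y :=
  h.comp_hasDerivAt y ((hasDerivAt_const y x).prodMk (hasDerivAt_id y))

lemma pdx_eq_fderiv (h : Differentiable ℝ (fun p : ℝ × ℝ => u p.1 p.2)) (x y : ℝ) :
    pdx u x y = fderiv ℝ (fun p : ℝ × ℝ => u p.1 p.2) (x, y) (1, 0) :=
  (hasDerivAt_fst_of_hasFDerivAt (h (x, y)).hasFDerivAt).deriv

lemma pdy_eq_fderiv (h : Differentiable ℝ (fun p : ℝ × ℝ => u p.1 p.2)) (x y : ℝ) :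
    pdy u x y = fderiv ℝ (fun p : ℝ × ℝ => u p.1 p.2) (x, y) (0, 1) :=
  (hasDerivAt_snd_of_hasFDerivAt (h (x, y)).hasFDerivAt).deriv

lemma hasDerivAt_pdx (h : Differentiable ℝ (fun p : ℝ × ℝ => u p.1 p.2)) (x y : ℝ) :
    HasDerivAt (fun t => u t y) (pdx u x y) x := by
  rw [pdx_eq_fderiv h]
  exact hasDerivAt_fst_of_hasFDerivAt (h (x, y)).hasFDerivAt

lemma hasDerivAt_pdy (h : Differentiable ℝ (fun p : ℝ × ℝ => u p.1 p.2)) (x y : ℝ) :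
    HasDerivAt (fun t => u x t) (pdy u x y) y := by
  rw [pdy_eq_fderiv h]
  exact hasDerivAt_snd_of_hasFDerivAt (h (x, y)).hasFDerivAt

lemma contDiff_pdx {n m : WithTop ℕ∞} (h : ContDiff ℝ n (fun p : ℝ × ℝ => u p.1 p.2))
    (hnm : m + 1 ≤ n) : ContDiff ℝ m (fun p : ℝ × ℝ => pdx u p.1 p.2) := by
  have hdiff : Differentiable ℝ (fun p : ℝ × ℝ => u p.1 p.2) :=
    h.differentiable (by rintro rfl; simp at hnm)
  simp_rw [pdx_eq_fderiv hdiff]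
  exact (h.fderiv_right hnm).clm_apply contDiff_const

lemma contDiff_pdy {n m : WithTop ℕ∞} (h : ContDiff ℝ n (fun p : ℝ × ℝ => u p.1 p.2))
    (hnm : m + 1 ≤ n) : ContDiff ℝ m (fun p : ℝ × ℝ => pdy u p.1 p.2) := by
  have hdiff : Differentiable ℝ (fun p : ℝ × ℝ => u p.1 p.2) :=
    h.differentiable (by rintro rfl; simp at hnm)
  simp_rw [pdy_eq_fderiv hdiff]
  exact (h.fderiv_right hnm).clm_apply contDiff_const

lemma pdx_pdy_comm (h : ContDiff ℝ 2 (fun p : ℝ × ℝ => u p.1 p.2)) :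
    pdx (pdy u) = pdy (pdx u) := by
  funext x y
  have hdiff : Differentiable ℝ (fun p : ℝ × ℝ => u p.1 p.2) := h.differentiable (by simp)
  have hx := (contDiff_pdx (m := 1) h (by norm_num)).differentiable (by simp)
  have hy := (contDiff_pdy (m := 1) h (by norm_num)).differentiable (by simp)
  have hfderiv : DifferentiableAt ℝ (fderiv ℝ (fun p : ℝ × ℝ => u p.1 p.2)) (x, y) :=
    ((h.fderiv_right (m := 1) (by norm_num)).differentiable (by simp)) _
  have hs := (h.contDiffAt (x := (x, y))).isSymmSndFDerivAt (by simp)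
  rw [pdx_eq_fderiv hy, pdy_eq_fderiv hx]
  simp_rw [pdx_eq_fderiv hdiff, pdy_eq_fderiv hdiff]
  rw [fderiv_clm_apply hfderiv (differentiableAt_const _),
    fderiv_clm_apply hfderiv (differentiableAt_const _)]
  simpa using hs (1, 0) (0, 1)

lemma nonneg_of_isLocalMin_of_hasDerivAt {f f' : ℝ → ℝ} {x s : ℝ}
    (hf : ∀ t, HasDerivAt f (f' t) t) (hf' : HasDerivAt f' s x) (hmin : IsLocalMin f x) :
    0 ≤ s := by
  by_contra! hs
  have hderiv : deriv f = f' := funext fun t => (hf t).deriv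
  have hmax : IsLocalMax f x :=
    isLocalMax_of_deriv_deriv_neg (by rwa [hderiv, hf'.deriv]) hmin.deriv_eq_zero
      (hf x).continuousAt
  have hconst : f =ᶠ[nhds x] fun _ => f x := by
    filter_upwards [hmin, hmax] with t hle hge using le_antisymm hge hle
  have hzero : deriv (deriv f) x = 0 := by
    rw [hconst.deriv.deriv_eq]
    simp
  rw [hderiv, hf'.deriv] at hzero
  exact hs.ne hzero

lemma pdxx_nonneg_of_isLocalMin (hu : ContDiff ℝ 2 (fun p : ℝ × ℝ => u p.1 p.2)) {x y : ℝ}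
    (hmin : IsLocalMin (fun t => u t y) x) : 0 ≤ pdxx u x y :=
  nonneg_of_isLocalMin_of_hasDerivAt
    (fun t => hasDerivAt_pdx (hu.differentiable (by simp)) t y)
    (hasDerivAt_pdx ((contDiff_pdx (m := 1) hu (by norm_num)).differentiable (by simp)) x y) hmin

lemma pdyy_nonneg_of_isLocalMin (hu : ContDiff ℝ 2 (fun p : ℝ × ℝ => u p.1 p.2)) {x y : ℝ}
    (hmin : IsLocalMin (fun t => u x t) y) : 0 ≤ pdyy u x y :=
  nonneg_of_isLocalMin_of_hasDerivAt
    (fun t => hasDerivAt_pdy (hu.differentiable (by simp)) x t)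
    (hasDerivAt_pdy ((contDiff_pdy (m := 1) hu (by norm_num)).differentiable (by simp)) x y) hmin

lemma pdx_neg : pdx (fun x y => -u x y) = fun x y => -pdx u x y := by
  funext x y
  exact deriv.fun_neg

lemma pdy_neg : pdy (fun x y => -u x y) = fun x y => -pdy u x y := by
  funext x y
  exact deriv.fun_neg

lemma pdxx_neg : pdxx (fun x y => -u x y) = fun x y => -pdxx u x y := by
  change pdx (pdx _) = fun x y => -pdx (pdx u) x y
  rw [pdx_neg, pdx_neg]

lemma pdyy_neg : pdyy (fun x y => -u x y) = fun x y => -pdyy u x y := by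
  change pdy (pdy _) = fun x y => -pdy (pdy u) x y
  rw [pdy_neg, pdy_neg]

lemma abs_sub_le_of_hasDerivAt {f f' : ℝ → ℝ} {a b C : ℝ} (hab : a ≤ b)
    (hf : ∀ t, HasDerivAt f (f' t) t) (hC : ∀ t ∈ Set.Icc a b, |f' t| ≤ C) :
    |f b - f a| ≤ C * (b - a) := by
  have hmvt := (convex_Icc a b).norm_image_sub_le_of_norm_hasDerivWithin_le
    (fun t _ => (hf t).hasDerivWithinAt) hC (Set.left_mem_Icc.2 hab) (Set.right_mem_Icc.2 hab)
  rwa [Real.norm_eq_abs, Real.norm_eq_abs, abs_of_nonneg (sub_nonneg.2 hab)] at hmvt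

lemma le_of_symmetric_difference_le {f : ℝ → ℝ} {f' x C r : ℝ} (hf : HasDerivAt f f' x)
    (hr : 0 < r) (h : ∀ t ∈ Set.Ioc 0 r, (f (x + t) - f (x - t)) / 2 ≤ C * t) : f' ≤ C := by
  have hright : HasDerivAt (fun t => f (x + t)) f' 0 := by
    simpa using HasDerivAt.comp_const_add x 0 (by simpa using hf)
  have hleft : HasDerivAt (fun t => f (x - t)) (-f') 0 := by
    simpa using HasDerivAt.comp_const_sub x 0 (by simpa using hf)
  have hdiff : HasDerivAt (fun t => (f (x + t) - f (x - t)) / 2) f' 0 :=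
    ((hright.sub hleft).div_const 2).congr_deriv (by ring)
  refine le_of_tendsto hdiff.tendsto_slope_zero_right ?_
  filter_upwards [Ioc_mem_nhdsGT hr] with t ht
  simpa [← div_eq_inv_mul, div_le_iff₀ ht.1] using h t ht

/-- Landau's inequality: move from `x` against the slope by `f' x / (2 * K)`. -/
lemma sq_deriv_le_of_nonneg {f f' f'' : ℝ → ℝ} {K x : ℝ} {S : Set ℝ} (hK : 0 < K)
    (hS : Convex ℝ S) (hf : ∀ t ∈ S, HasDerivAt f (f' t) t)
    (hf' : ∀ t ∈ S, HasDerivAt f' (f'' t) t) (hb : ∀ t ∈ S, |f'' t| ≤ K) (hx : x ∈ S)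
    (hmem : x - f' x / (2 * K) ∈ S) (hnonneg : 0 ≤ f (x - f' x / (2 * K))) :
    f' x ^ 2 ≤ 4 * K * f x := by
  set h := f' x / (2 * K) with hh
  have hslope : ∀ t ∈ S, |f' t - f' x| ≤ K * |t - x| := fun t ht =>
    hS.norm_image_sub_le_of_norm_hasDerivWithin_le
      (fun t ht => (hf' t ht).hasDerivWithinAt) hb hx ht
  have htaylor : |f (x - h) - f' x * (x - h) - (f x - f' x * x)| ≤ K * |h| * |x - h - x| := by
    refine (hS.inter (convex_closedBall x |h|)).norm_image_sub_le_of_norm_hasDerivWithin_le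
      (f := fun t => f t - f' x * t) (f' := fun t => f' t - f' x)
      (fun t ht => ?_) (fun t ht => ?_) ⟨hx, mem_closedBall_self (abs_nonneg _)⟩
      ⟨hmem, by simp⟩
    · exact (((hf t ht.1).sub ((hasDerivAt_id t).const_mul (f' x))).congr_deriv
        (by simp)).hasDerivWithinAt
    · have hdist := ht.2
      rw [mem_closedBall, Real.dist_eq] at hdist
      exact (hslope t ht.1).trans (by gcongr)
  rw [sub_sub_cancel_left, abs_neg, mul_assoc, abs_mul_abs_self] at htaylor
  have hupper := (abs_le.1 htaylor).2
  have hslope_eq : f' x = 2 * K * h := by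
    rw [hh]
    field_simp
  rw [hslope_eq] at hupper ⊢
  nlinarith

end Calculus

/-! ### Interior gradient estimates -/

section GradientBound

variable {v : ℝ → ℝ → ℝ}

lemma nonneg_of_laplacian_neg_of_boundary_nonneg
    (hv : ContDiff ℝ 2 (fun p : ℝ × ℝ => v p.1 p.2)) {a b c d : ℝ}
    (hlap : ∀ x ∈ Set.Ioo a b, ∀ y ∈ Set.Ioo c d, pdxx v x y + pdyy v x y < 0)
    (hbdry : ∀ x ∈ Set.Icc a b, ∀ y ∈ Set.Icc c d,
      x ∉ Set.Ioo a b ∨ y ∉ Set.Ioo c d → 0 ≤ v x y) :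
    ∀ x ∈ Set.Icc a b, ∀ y ∈ Set.Icc c d, 0 ≤ v x y := by
  intro x hx y hy
  obtain ⟨⟨s, z⟩, ⟨hs, hz⟩, hmin⟩ := (isCompact_Icc.prod isCompact_Icc).exists_isMinOn
    (s := Set.Icc a b ×ˢ Set.Icc c d) ⟨(x, y), hx, hy⟩ hv.continuous.continuousOn
  refine le_trans ?_ (hmin (a := (x, y)) ⟨hx, hy⟩)
  by_cases hint : s ∈ Set.Ioo a b ∧ z ∈ Set.Ioo c d
  · have hxmin : IsLocalMin (fun t => v t z) s := by
      filter_upwards [Ioo_mem_nhds hint.1.1 hint.1.2] with t ht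
      exact hmin (a := (t, z)) ⟨Set.Ioo_subset_Icc_self ht, hz⟩
    have hymin : IsLocalMin (fun t => v s t) z := by
      filter_upwards [Ioo_mem_nhds hint.2.1 hint.2.2] with t ht
      exact hmin (a := (s, t)) ⟨hs, Set.Ioo_subset_Icc_self ht⟩
    linarith [hlap s hint.1 z hint.2, pdxx_nonneg_of_isLocalMin hv hxmin,
      pdyy_nonneg_of_isLocalMin hv hymin]
  · exact hbdry s hs z hz (by tauto)

/-- A quadratic barrier minus the odd part of `v` about the vertical line `x = x₀`, as a function
of the distance `t` to that line. -/
noncomputable def oddPartBarrier (v : ℝ → ℝ → ℝ) (A x₀ y₀ t y : ℝ) : ℝ :=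
  A * ((y - y₀) ^ 2 + 2 * t * (2 - t)) - (v (x₀ + t) y - v (x₀ - t) y) / 2

lemma contDiff_oddPartBarrier (hv : ContDiff ℝ 2 (fun p : ℝ × ℝ => v p.1 p.2)) (A x₀ y₀ : ℝ) :
    ContDiff ℝ 2 (fun p : ℝ × ℝ => oddPartBarrier v A x₀ y₀ p.1 p.2) := by
  have hadd : ContDiff ℝ 2 (fun p : ℝ × ℝ => v (x₀ + p.1) p.2) :=
    hv.comp (f := fun p : ℝ × ℝ => (x₀ + p.1, p.2)) (by fun_prop)
  have hsub : ContDiff ℝ 2 (fun p : ℝ × ℝ => v (x₀ - p.1) p.2) :=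
    hv.comp (f := fun p : ℝ × ℝ => (x₀ - p.1, p.2)) (by fun_prop)
  exact ContDiff.sub (by fun_prop) ((hadd.sub hsub).div_const 2)

lemma pdxx_oddPartBarrier (hv : ContDiff ℝ 2 (fun p : ℝ × ℝ => v p.1 p.2)) (A x₀ y₀ t y : ℝ) :
    pdxx (oddPartBarrier v A x₀ y₀) t y =
      -4 * A - (pdxx v (x₀ + t) y - pdxx v (x₀ - t) y) / 2 := by
  have hd := hv.differentiable (by simp)
  have hdx := (contDiff_pdx (m := 1) hv (by norm_num)).differentiable (by simp)
  have hpdx : ∀ t, pdx (oddPartBarrier v A x₀ y₀) t y =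
      A * (4 - 4 * t) - (pdx v (x₀ + t) y + pdx v (x₀ - t) y) / 2 := fun t =>
    (((((((hasDerivAt_id t).const_mul 2).mul ((hasDerivAt_id t).const_sub 2)).const_add
      ((y - y₀) ^ 2)).const_mul A).sub ((((hasDerivAt_pdx hd (x₀ + t) y).comp_const_add x₀ t).sub
        ((hasDerivAt_pdx hd (x₀ - t) y).comp_const_sub x₀ t)).div_const 2)).congr_deriv
      (by simp only [id]; ring)).deriv
  simp only [pdxx, hpdx]
  exact (((((hasDerivAt_id t).const_mul 4).const_sub 4).const_mul A).sub
    ((((hasDerivAt_pdx hdx (x₀ + t) y).comp_const_add x₀ t).add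
      ((hasDerivAt_pdx hdx (x₀ - t) y).comp_const_sub x₀ t)).div_const 2)).congr_deriv
    (by simp only [pdx]; ring) |>.deriv

lemma pdyy_oddPartBarrier (hv : ContDiff ℝ 2 (fun p : ℝ × ℝ => v p.1 p.2)) (A x₀ y₀ t y : ℝ) :
    pdyy (oddPartBarrier v A x₀ y₀) t y =
      2 * A - (pdyy v (x₀ + t) y - pdyy v (x₀ - t) y) / 2 := by
  have hd := hv.differentiable (by simp)
  have hdy := (contDiff_pdy (m := 1) hv (by norm_num)).differentiable (by simp)
  have hpdy : ∀ y, pdy (oddPartBarrier v A x₀ y₀) t y =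
      A * (2 * (y - y₀)) - (pdy v (x₀ + t) y - pdy v (x₀ - t) y) / 2 := fun y =>
    ((((((hasDerivAt_id y).sub_const y₀).pow 2).add_const (2 * t * (2 - t))).const_mul A).sub
      (((hasDerivAt_pdy hd (x₀ + t) y).sub (hasDerivAt_pdy hd (x₀ - t) y)).div_const 2)
      |>.congr_deriv (by simp)).deriv
  simp only [pdyy, hpdy]
  exact (((((hasDerivAt_id y).sub_const y₀).const_mul 2).const_mul A).sub
    (((hasDerivAt_pdy hdy (x₀ + t) y).sub (hasDerivAt_pdy hdy (x₀ - t) y)).div_const 2)).congr_deriv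
    (by simp only [pdy]; ring) |>.deriv

lemma oddPartBarrier_nonneg (hv : ContDiff ℝ 2 (fun p : ℝ × ℝ => v p.1 p.2)) {A x₀ y₀ : ℝ}
    (hA : 0 < A)
    (hb : ∀ x y, |x - x₀| ≤ 1 → |y - y₀| ≤ 1 → |v x y| ≤ A ∧ |pdxx v x y + pdyy v x y| ≤ A) :
    ∀ t ∈ Set.Icc 0 1, ∀ y ∈ Set.Icc (y₀ - 1) (y₀ + 1), 0 ≤ oddPartBarrier v A x₀ y₀ t y := by
  have hbound : ∀ t ∈ Set.Icc (0 : ℝ) 1, ∀ y ∈ Set.Icc (y₀ - 1) (y₀ + 1),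
      (|v (x₀ + t) y| ≤ A ∧ |pdxx v (x₀ + t) y + pdyy v (x₀ + t) y| ≤ A) ∧
      (|v (x₀ - t) y| ≤ A ∧ |pdxx v (x₀ - t) y + pdyy v (x₀ - t) y| ≤ A) := fun t ht y hy =>
    have hy' : |y - y₀| ≤ 1 := abs_le.2 ⟨by linarith [hy.1], by linarith [hy.2]⟩
    ⟨hb _ y (by simpa [abs_of_nonneg ht.1] using ht.2) hy',
      hb _ y (by simpa [abs_of_nonneg ht.1] using ht.2) hy'⟩
  refine nonneg_of_laplacian_neg_of_boundary_nonneg (contDiff_oddPartBarrier hv A x₀ y₀) ?_ ?_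
  · intro t ht y hy
    obtain ⟨⟨-, hright⟩, -, hleft⟩ :=
      hbound t (Set.Ioo_subset_Icc_self ht) y (Set.Ioo_subset_Icc_self hy)
    rw [pdxx_oddPartBarrier hv, pdyy_oddPartBarrier hv]
    linarith [(abs_le.1 hright).1, (abs_le.1 hleft).2]
  · intro t ht y hy hbdry
    obtain ⟨⟨hright, -⟩, hleft, -⟩ := hbound t ht y hy
    have hodd : (v (x₀ + t) y - v (x₀ - t) y) / 2 ≤ A := by
      linarith [(abs_le.1 hright).2, (abs_le.1 hleft).1]
    have ht2 : 0 ≤ 2 * t * (2 - t) := by nlinarith [ht.1, ht.2]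
    have hcases : t = 0 ∨ 1 ≤ (y - y₀) ^ 2 + 2 * t * (2 - t) := by
      simp only [Set.mem_Ioo, not_and_or, not_lt] at hbdry
      rcases hbdry with (h | h) | (h | h)
      · exact .inl (h.antisymm ht.1)
      · right
        nlinarith [sq_nonneg (y - y₀), ht.2]
      · right
        nlinarith [hy.1]
      · right
        nlinarith [hy.2]
    unfold oddPartBarrier
    rcases hcases with rfl | hone
    · simp only [add_zero, sub_zero, sub_self, zero_div, mul_zero, zero_mul]
      positivity
    · nlinarith

lemma pdx_le_of_laplacian_bound (hv : ContDiff ℝ 2 (fun p : ℝ × ℝ => v p.1 p.2)) {A x₀ y₀ : ℝ}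
    (hA : 0 < A)
    (hb : ∀ x y, |x - x₀| ≤ 1 → |y - y₀| ≤ 1 → |v x y| ≤ A ∧ |pdxx v x y + pdyy v x y| ≤ A) :
    pdx v x₀ y₀ ≤ 4 * A := by
  refine le_of_symmetric_difference_le (hasDerivAt_pdx (hv.differentiable (by simp)) x₀ y₀)
    one_pos fun t ht => ?_
  have hbarrier := oddPartBarrier_nonneg hv hA hb t (Set.Ioc_subset_Icc_self ht) y₀ (by simp)
  unfold oddPartBarrier at hbarrier
  nlinarith [mul_nonneg hA.le (sq_nonneg t)]

lemma abs_pdx_le_of_laplacian_bound (hv : ContDiff ℝ 2 (fun p : ℝ × ℝ => v p.1 p.2))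
    {A x₀ y₀ : ℝ} (hA : 0 < A)
    (hb : ∀ x y, |x - x₀| ≤ 1 → |y - y₀| ≤ 1 → |v x y| ≤ A ∧ |pdxx v x y + pdyy v x y| ≤ A) :
    |pdx v x₀ y₀| ≤ 4 * A := by
  refine abs_le.2 ⟨?_, pdx_le_of_laplacian_bound hv hA hb⟩
  have hneg := pdx_le_of_laplacian_bound (v := fun x y => -v x y) hv.neg hA
    (x₀ := x₀) (y₀ := y₀) (fun x y hx hy => by
      rw [pdxx_neg, pdyy_neg, abs_neg, ← neg_add, abs_neg]
      exact hb x y hx hy)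
  rw [pdx_neg] at hneg
  linarith

lemma abs_pdy_le_of_laplacian_bound (hv : ContDiff ℝ 2 (fun p : ℝ × ℝ => v p.1 p.2))
    {A x₀ y₀ : ℝ} (hA : 0 < A)
    (hb : ∀ x y, |x - x₀| ≤ 1 → |y - y₀| ≤ 1 → |v x y| ≤ A ∧ |pdxx v x y + pdyy v x y| ≤ A) :
    |pdy v x₀ y₀| ≤ 4 * A :=
  abs_pdx_le_of_laplacian_bound (v := fun x y => v y x) (x₀ := y₀) (y₀ := x₀)
    (hv.comp (f := fun p : ℝ × ℝ => (p.2, p.1)) (contDiff_snd.prodMk contDiff_fst)) hA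
    (fun x y hx hy => ⟨(hb y x hy hx).1, by rw [add_comm]; exact (hb y x hy hx).2⟩)

/-- The multiple `e^{c (y - y₀) / 2} v` of `v`, for which the first-order term of
`Δv + c ∂ᵧv` is absorbed into the Laplacian. -/
noncomputable def driftConjugate (c y₀ : ℝ) (v : ℝ → ℝ → ℝ) (x y : ℝ) : ℝ :=
  exp (c / 2 * (y - y₀)) * v x y

lemma contDiff_driftConjugate (hv : ContDiff ℝ 2 (fun p : ℝ × ℝ => v p.1 p.2)) (c y₀ : ℝ) :
    ContDiff ℝ 2 (fun p : ℝ × ℝ => driftConjugate c y₀ v p.1 p.2) := by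
  unfold driftConjugate
  fun_prop

lemma hasDerivAt_exp_mul_sub (k y₀ y : ℝ) :
    HasDerivAt (fun y => exp (k * (y - y₀))) (k * exp (k * (y - y₀))) y := by
  simpa [mul_comm] using (((hasDerivAt_id y).sub_const y₀).const_mul k).exp

lemma pdx_driftConjugate (hv : Differentiable ℝ (fun p : ℝ × ℝ => v p.1 p.2)) (c y₀ : ℝ) :
    pdx (driftConjugate c y₀ v) = driftConjugate c y₀ (pdx v) := by
  funext x y
  exact ((hasDerivAt_pdx hv x y).const_mul _).deriv

lemma pdy_driftConjugate (hv : Differentiable ℝ (fun p : ℝ × ℝ => v p.1 p.2)) (c y₀ : ℝ) :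
    pdy (driftConjugate c y₀ v) =
      driftConjugate c y₀ (fun x y => c / 2 * v x y + pdy v x y) := by
  funext x y
  refine (((hasDerivAt_exp_mul_sub (c / 2) y₀ y).mul (hasDerivAt_pdy hv x y)).congr_deriv ?_).deriv
  simp only [driftConjugate]
  ring

lemma laplacian_driftConjugate (hv : ContDiff ℝ 2 (fun p : ℝ × ℝ => v p.1 p.2))
    (c y₀ x y : ℝ) :
    pdxx (driftConjugate c y₀ v) x y + pdyy (driftConjugate c y₀ v) x y =
      exp (c / 2 * (y - y₀)) *
        ((pdxx v x y + pdyy v x y + c * pdy v x y) + c ^ 2 / 4 * v x y) := by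
  have hd := hv.differentiable (by simp)
  have hdx := (contDiff_pdx (m := 1) hv (by norm_num)).differentiable (by simp)
  have hdy := (contDiff_pdy (m := 1) hv (by norm_num)).differentiable (by simp)
  have hxx : pdxx (driftConjugate c y₀ v) x y = driftConjugate c y₀ (pdxx v) x y := by
    change pdx (pdx (driftConjugate c y₀ v)) x y = _
    rw [pdx_driftConjugate hd, pdx_driftConjugate hdx]
    rfl
  have hyy : pdyy (driftConjugate c y₀ v) x y = driftConjugate c y₀
      (fun x y => c / 2 * (c / 2 * v x y + pdy v x y) + (c / 2 * pdy v x y + pdyy v x y)) x y := by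
    change pdy (pdy (driftConjugate c y₀ v)) x y = _
    rw [pdy_driftConjugate hd, pdy_driftConjugate ((hd.const_mul (c / 2)).add hdy)]
    simp only [driftConjugate, mul_eq_mul_left_iff, add_right_inj]
    exact .inl (((hasDerivAt_pdy hd x y).const_mul (c / 2)).add (hasDerivAt_pdy hdy x y)).deriv
  rw [hxx, hyy]
  simp only [driftConjugate]
  ring

lemma abs_driftConjugate_le (hv : ContDiff ℝ 2 (fun p : ℝ × ℝ => v p.1 p.2)) {c A x y y₀ : ℝ}
    (hy : |y - y₀| ≤ 1) (hvA : |v x y| ≤ A)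
    (hLA : |pdxx v x y + pdyy v x y + c * pdy v x y| ≤ A) :
    |driftConjugate c y₀ v x y| ≤ exp (|c| / 2) * (1 + c ^ 2 / 4) * A ∧
      |pdxx (driftConjugate c y₀ v) x y + pdyy (driftConjugate c y₀ v) x y| ≤
        exp (|c| / 2) * (1 + c ^ 2 / 4) * A := by
  have hA : 0 ≤ A := (abs_nonneg _).trans hvA
  have hexp : exp (c / 2 * (y - y₀)) ≤ exp (|c| / 2) := by
    gcongr
    calc c / 2 * (y - y₀) ≤ |c / 2| * |y - y₀| := (le_abs_self _).trans (abs_mul _ _).le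
      _ ≤ |c| / 2 * 1 := by rw [abs_div, abs_two]; gcongr
      _ = |c| / 2 := mul_one _
  rw [laplacian_driftConjugate hv, driftConjugate, abs_mul, abs_mul, abs_exp, mul_assoc]
  constructor
  · gcongr
    nlinarith [mul_nonneg (sq_nonneg c) hA]
  · gcongr
    refine (abs_add_le _ _).trans ?_
    rw [abs_mul, abs_of_nonneg (by positivity : 0 ≤ c ^ 2 / 4), one_add_mul]
    gcongr

lemma exists_gradient_bound (c : ℝ) : ∃ C : ℝ, 0 < C ∧
    ∀ v : ℝ → ℝ → ℝ, ContDiff ℝ 2 (fun p : ℝ × ℝ => v p.1 p.2) → ∀ A x₀ y₀ : ℝ, 0 < A →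
    (∀ x y, |x - x₀| ≤ 1 → |y - y₀| ≤ 1 →
      |v x y| ≤ A ∧ |pdxx v x y + pdyy v x y + c * pdy v x y| ≤ A) →
    |pdx v x₀ y₀| ≤ C * A ∧ |pdy v x₀ y₀| ≤ C * A := by
  set k : ℝ := exp (|c| / 2) * (1 + c ^ 2 / 4)
  have hkpos : 0 < k := by positivity
  refine ⟨4 * k + |c| / 2, by positivity, fun v hv A x₀ y₀ hA hb => ?_⟩
  have hd := hv.differentiable (by simp)
  have hw := contDiff_driftConjugate hv c y₀
  have hbw := fun x y (hx : |x - x₀| ≤ 1) (hy : |y - y₀| ≤ 1) =>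
    abs_driftConjugate_le hv hy (hb x y hx hy).1 (hb x y hx hy).2
  have hgx := abs_pdx_le_of_laplacian_bound hw (mul_pos hkpos hA) hbw
  have hgy := abs_pdy_le_of_laplacian_bound hw (mul_pos hkpos hA) hbw
  simp only [pdx_driftConjugate hd, pdy_driftConjugate hd, driftConjugate, sub_self, mul_zero,
    exp_zero, one_mul] at hgx hgy
  have hzero : |c / 2 * v x₀ y₀| ≤ |c| / 2 * A := by
    rw [abs_mul, abs_div, abs_two]
    gcongr
    exact (hb x₀ y₀ (by simp) (by simp)).1
  constructor
  · nlinarith [mul_nonneg (abs_nonneg c) hA.le]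
  · have htri := abs_sub (c / 2 * v x₀ y₀ + pdy v x₀ y₀) (c / 2 * v x₀ y₀)
    rw [add_sub_cancel_left] at htri
    linarith

end GradientBound

/-! ### Double-well potentials -/

section Potential

/-- A nonnegative `C²` potential on `[-1, 1]` vanishing exactly at the two nondegenerate wells
`±1`. In contrast to `BalancedDoubleWell`, it may have any number of critical points between
the wells. -/
structure IsDoubleWell (F : ℝ → ℝ) : Prop where
  contDiff : ContDiff ℝ 2 F
  left_eq_zero : F (-1) = 0
  right_eq_zero : F 1 = 0
  deriv_left_eq_zero : deriv F (-1) = 0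
  deriv_right_eq_zero : deriv F 1 = 0
  deriv_deriv_left_pos : 0 < deriv (deriv F) (-1)
  deriv_deriv_right_pos : 0 < deriv (deriv F) 1
  pos {s : ℝ} : -1 < s → s < 1 → 0 < F s

lemma BalancedDoubleWell.isDoubleWell {F : ℝ → ℝ} (hF : BalancedDoubleWell F) :
    IsDoubleWell F := by
  obtain ⟨hC3, hleft', hright', hleft'', hright'', hincr, hdecr, hleft, hright⟩ := hF
  refine ⟨hC3.of_le (by norm_num), hleft, hright, hleft', hright', hleft'', hright'', ?_⟩
  intro s hs₁ hs₂
  rcases le_total s 0 with hs | hs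
  · have hmono := strictMonoOn_of_deriv_pos (convex_Icc (-1 : ℝ) 0) hC3.continuous.continuousOn
      (fun x hx => hincr x (by rwa [interior_Icc] at hx))
    linarith [hmono ⟨le_rfl, by norm_num⟩ ⟨hs₁.le, hs⟩ hs₁]
  · have hanti := strictAntiOn_of_deriv_neg (convex_Icc (0 : ℝ) 1) hC3.continuous.continuousOn
      (fun x hx => hdecr x (by rwa [interior_Icc] at hx))
    linarith [hanti ⟨hs, hs₂.le⟩ ⟨by norm_num, le_rfl⟩ hs₂]

/-- The speed `√(2F)` of the heteroclinic connection; it is `0` where `F` is negative. -/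
noncomputable def wellSpeed (F : ℝ → ℝ) (s : ℝ) : ℝ := √(2 * F s)

/-- The primitive of `√(2F)` vanishing at `-1`, which calibrates the one-dimensional energy
`∫ |q'|² / 2 + F(q)`. -/
noncomputable def wellEnergy (F : ℝ → ℝ) (s : ℝ) : ℝ := ∫ t in (-1)..s, wellSpeed F t

lemma wellSpeed_nonneg (F : ℝ → ℝ) (s : ℝ) : 0 ≤ wellSpeed F s := Real.sqrt_nonneg _

lemma exists_slope_lower_bound {G : ℝ → ℝ} (hG : ContDiff ℝ 1 G) {a : ℝ} (ha : 0 < deriv G a) :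
    ∃ μ > 0, ∃ δ > 0, ∀ s t, a - δ ≤ s → s ≤ t → t ≤ a + δ → μ * (t - s) ≤ G t - G s := by
  have hnear : ∀ᶠ s in nhds a, deriv G a / 2 < deriv G s :=
    (hG.continuous_deriv le_rfl).continuousAt.eventually (lt_mem_nhds (by linarith))
  obtain ⟨δ, hδ, hball⟩ := Metric.eventually_nhds_iff.1 hnear
  refine ⟨deriv G a / 2, by linarith, δ / 2, by linarith, fun s t hs hst ht => ?_⟩
  refine Convex.mul_sub_le_image_sub_of_le_deriv (convex_Icc (a - δ / 2) (a + δ / 2))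
    hG.continuous.continuousOn (hG.differentiable (by simp)).differentiableOn
    (fun x hx => (hball ?_).le) s ⟨hs, by linarith⟩ t ⟨by linarith, ht⟩ hst
  rw [interior_Icc] at hx
  rw [Real.dist_eq, abs_lt]
  constructor <;> linarith [hx.1, hx.2]

namespace IsDoubleWell

variable {F : ℝ → ℝ}

lemma continuous (hF : IsDoubleWell F) : Continuous F := hF.contDiff.continuous

lemma contDiff_deriv (hF : IsDoubleWell F) : ContDiff ℝ 1 (deriv F) :=
  ((contDiff_succ_iff_deriv (n := 1)).1 hF.contDiff).2.2

lemma hasDerivAt (hF : IsDoubleWell F) (s : ℝ) : HasDerivAt F (deriv F s) s :=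
  (hF.contDiff.differentiable (by simp) s).hasDerivAt

lemma hasDerivAt_deriv (hF : IsDoubleWell F) (s : ℝ) :
    HasDerivAt (deriv F) (deriv (deriv F) s) s :=
  (hF.contDiff_deriv.differentiable (by simp) s).hasDerivAt

lemma continuous_deriv_deriv (hF : IsDoubleWell F) : Continuous (deriv (deriv F)) :=
  hF.contDiff_deriv.continuous_deriv le_rfl

lemma nonneg (hF : IsDoubleWell F) {s : ℝ} (hs : |s| ≤ 1) : 0 ≤ F s := by
  obtain ⟨hs₁, hs₂⟩ := abs_le.1 hs
  rcases hs₁.eq_or_lt with rfl | hs₁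
  · exact hF.left_eq_zero.ge
  rcases hs₂.eq_or_lt with rfl | hs₂
  · exact hF.right_eq_zero.ge
  exact (hF.pos hs₁ hs₂).le

lemma exists_deriv_slope_lower_bound (hF : IsDoubleWell F) : ∃ μ > 0, ∃ δ > 0, δ < 1 ∧
    (∀ s t, -1 ≤ s → s ≤ t → t ≤ -1 + δ → μ * (t - s) ≤ deriv F t - deriv F s) ∧
    (∀ s t, 1 - δ ≤ s → s ≤ t → t ≤ 1 → μ * (t - s) ≤ deriv F t - deriv F s) := by
  obtain ⟨μ₁, hμ₁, δ₁, hδ₁, hleft⟩ :=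
    exists_slope_lower_bound hF.contDiff_deriv hF.deriv_deriv_left_pos
  obtain ⟨μ₂, hμ₂, δ₂, hδ₂, hright⟩ :=
    exists_slope_lower_bound hF.contDiff_deriv hF.deriv_deriv_right_pos
  refine ⟨min μ₁ μ₂, lt_min hμ₁ hμ₂, min (1 / 2) (min δ₁ δ₂), by positivity,
    (min_le_left _ _).trans_lt (by norm_num), fun s t hs hst ht => ?_, fun s t hs hst ht => ?_⟩
  · have hδ : min (1 / 2) (min δ₁ δ₂) ≤ δ₁ := (min_le_right _ _).trans (min_le_left _ _)
    exact (mul_le_mul_of_nonneg_right (min_le_left _ _) (by linarith)).trans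
      (hleft s t (by linarith) hst (by linarith))
  · have hδ : min (1 / 2) (min δ₁ δ₂) ≤ δ₂ := (min_le_right _ _).trans (min_le_right _ _)
    exact (mul_le_mul_of_nonneg_right (min_le_right _ _) (by linarith)).trans
      (hright s t (by linarith) hst (by linarith))

lemma exists_bound (hF : IsDoubleWell F) : ∃ M > 0, ∀ s, |s| ≤ 1 →
    |F s| ≤ M ∧ |deriv F s| ≤ M ∧ |deriv (deriv F) s| ≤ M := by
  have hcont : Continuous fun s => |F s| + |deriv F s| + |deriv (deriv F) s| :=
    (hF.continuous.abs.add hF.contDiff_deriv.continuous.abs).add hF.continuous_deriv_deriv.abs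
  obtain ⟨M, hM⟩ := (isCompact_Icc (a := (-1 : ℝ)) (b := 1)).bddAbove_image hcont.continuousOn
  refine ⟨max M 1, by positivity, fun s hs => ?_⟩
  have hsum : |F s| + |deriv F s| + |deriv (deriv F) s| ≤ max M 1 :=
    (hM ⟨s, abs_le.1 hs, rfl⟩).trans (le_max_left _ _)
  refine ⟨?_, ?_, ?_⟩ <;>
    linarith [abs_nonneg (F s), abs_nonneg (deriv F s), abs_nonneg (deriv (deriv F) s)]

lemma abs_deriv_sub_le (hF : IsDoubleWell F) {M : ℝ}
    (hM : ∀ s, |s| ≤ 1 → |deriv (deriv F) s| ≤ M) {s t : ℝ} (hs : |s| ≤ 1) (ht : |t| ≤ 1) :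
    |deriv F t - deriv F s| ≤ M * |t - s| :=
  Convex.norm_image_sub_le_of_norm_hasDerivWithin_le (s := Set.Icc (-1 : ℝ) 1)
    (fun x _ => (hF.hasDerivAt_deriv x).hasDerivWithinAt) (fun x hx => hM x (abs_le.2 hx))
    (convex_Icc _ _) (abs_le.1 hs) (abs_le.1 ht)

lemma continuous_wellSpeed (hF : IsDoubleWell F) : Continuous (wellSpeed F) :=
  (continuous_const.mul hF.continuous).sqrt

lemma wellSpeed_sq (hF : IsDoubleWell F) {s : ℝ} (hs : |s| ≤ 1) : wellSpeed F s ^ 2 = 2 * F s :=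
  Real.sq_sqrt (by linarith [hF.nonneg hs])

lemma wellSpeed_pos (hF : IsDoubleWell F) {s : ℝ} (hs₁ : -1 < s) (hs₂ : s < 1) :
    0 < wellSpeed F s :=
  Real.sqrt_pos.2 (by linarith [hF.pos hs₁ hs₂])

lemma wellSpeed_neg_one (hF : IsDoubleWell F) : wellSpeed F (-1) = 0 := by
  simp [wellSpeed, hF.left_eq_zero]

lemma exists_le_wellSpeed (hF : IsDoubleWell F) {δ : ℝ} (hδ : 0 < δ) :
    ∃ m > 0, ∀ s, -1 + δ ≤ s → s ≤ 1 - δ → m ≤ wellSpeed F s := by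
  rcases (Set.Icc (-1 + δ) (1 - δ)).eq_empty_or_nonempty with hempty | hne
  · exact ⟨1, one_pos, fun s hs₁ hs₂ => (Set.eq_empty_iff_forall_notMem.1 hempty s ⟨hs₁, hs₂⟩).elim⟩
  · obtain ⟨s, hs, hmin⟩ := isCompact_Icc.exists_isMinOn hne hF.continuous_wellSpeed.continuousOn
    exact ⟨wellSpeed F s, hF.wellSpeed_pos (by linarith [hs.1]) (by linarith [hs.2]),
      fun t ht₁ ht₂ => hmin ⟨ht₁, ht₂⟩⟩

lemma hasDerivAt_wellEnergy (hF : IsDoubleWell F) (s : ℝ) :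
    HasDerivAt (wellEnergy F) (wellSpeed F s) s :=
  intervalIntegral.integral_hasDerivAt_right (hF.continuous_wellSpeed.intervalIntegrable _ _)
    (hF.continuous_wellSpeed.stronglyMeasurableAtFilter _ _) hF.continuous_wellSpeed.continuousAt

lemma monotone_wellEnergy (hF : IsDoubleWell F) : Monotone (wellEnergy F) :=
  monotone_of_hasDerivAt_nonneg hF.hasDerivAt_wellEnergy fun s => wellSpeed_nonneg F s

lemma continuous_wellEnergy (hF : IsDoubleWell F) : Continuous (wellEnergy F) :=
  continuous_iff_continuousAt.2 fun s => (hF.hasDerivAt_wellEnergy s).continuousAt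

lemma exists_abs_deriv_le_wellSpeed (hF : IsDoubleWell F) :
    ∃ Λ > 0, ∀ s, |s| ≤ 1 → |deriv F s| ≤ Λ * wellSpeed F s := by
  obtain ⟨M, hM, hb⟩ := hF.exists_bound
  refine ⟨√(2 * M), by positivity, fun s hs => ?_⟩
  have hlip := fun r (hr : |r| ≤ 1) => hF.abs_deriv_sub_le (fun s hs => (hb s hs).2.2) hr hs
  have hleft := (le_abs_self _).trans (hlip (-1) (by norm_num))
  have hright := (neg_le_abs _).trans (hlip 1 (by norm_num))
  obtain ⟨hs₁, hs₂⟩ := abs_le.1 hs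
  rw [hF.deriv_left_eq_zero, abs_of_nonneg (by linarith)] at hleft
  rw [hF.deriv_right_eq_zero, abs_of_nonpos (by linarith)] at hright
  -- The Landau step stays in `[-1, 1]` because `F'` vanishes at both ends.
  have hmem : s - deriv F s / (2 * M) ∈ Set.Icc (-1) 1 := by
    have hup : deriv F s / (2 * M) ≤ s + 1 := by
      rw [div_le_iff₀ (by positivity)]
      nlinarith
    have hdown : -(1 - s) ≤ deriv F s / (2 * M) := by
      rw [le_div_iff₀ (by positivity)]
      nlinarith
    constructor <;> linarith
  have hlandau := sq_deriv_le_of_nonneg hM (convex_Icc (-1 : ℝ) 1)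
    (fun t _ => hF.hasDerivAt t) (fun t _ => hF.hasDerivAt_deriv t)
    (fun t ht => (hb t (abs_le.2 ht)).2.2) (abs_le.1 hs) hmem (hF.nonneg (abs_le.2 hmem))
  refine abs_le_of_sq_le_sq ?_ (by have := wellSpeed_nonneg F s; positivity)
  rw [mul_pow, Real.sq_sqrt (by positivity), hF.wellSpeed_sq hs]
  linarith

lemma exists_lipschitz_wellSpeed (hF : IsDoubleWell F) :
    ∃ Λ > 0, ∀ s t, |s| ≤ 1 → |t| ≤ 1 → |wellSpeed F s - wellSpeed F t| ≤ Λ * |s - t| := by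
  obtain ⟨Λ, hΛ, hderiv⟩ := hF.exists_abs_deriv_le_wellSpeed
  refine ⟨Λ, hΛ, fun s t hs ht => ?_⟩
  wlog hst : s < t generalizing s t
  · rcases (not_lt.1 hst).eq_or_lt with rfl | hts
    · simp
    · rw [abs_sub_comm, abs_sub_comm s t]
      exact this t s ht hs hts
  obtain ⟨r, hr, hslope⟩ := exists_hasDerivAt_eq_slope (wellSpeed F)
    (fun r => 2 * deriv F r / (2 * wellSpeed F r)) hst hF.continuous_wellSpeed.continuousOn
    (fun r hr => ((hF.hasDerivAt r).const_mul 2).sqrt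
      (mul_pos two_pos
        (hF.pos ((abs_le.1 hs).1.trans_lt hr.1) (hr.2.trans_le (abs_le.1 ht).2))).ne')
  have hr₁ : -1 < r := (abs_le.1 hs).1.trans_lt hr.1
  have hr₂ : r < 1 := hr.2.trans_le (abs_le.1 ht).2
  have hpos := hF.wellSpeed_pos hr₁ hr₂
  have hle : |(wellSpeed F t - wellSpeed F s) / (t - s)| ≤ Λ := by
    rw [← hslope, mul_div_mul_left _ _ two_ne_zero, abs_div, abs_of_pos hpos, div_le_iff₀ hpos]
    exact hderiv r (abs_le.2 ⟨hr₁.le, hr₂.le⟩)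
  rw [abs_div, div_le_iff₀ (abs_pos.2 (sub_ne_zero.2 hst.ne'))] at hle
  rwa [abs_sub_comm, abs_sub_comm s t]

end IsDoubleWell

end Potential

/-! ### Regularity and a priori bounds -/

section Regularity

variable {F : ℝ → ℝ} {c : ℝ} {u : ℝ → ℝ → ℝ}

lemma pdx_comp_neg (u : ℝ → ℝ → ℝ) :
    pdx (fun x y => u (-x) y) = fun x y => -pdx u (-x) y := by
  funext x y
  exact deriv_comp_neg (fun t => u t y) x

lemma pdxx_comp_neg (u : ℝ → ℝ → ℝ) (x y : ℝ) :
    pdxx (fun x y => u (-x) y) x y = pdxx u (-x) y := by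
  change pdx (pdx fun x y => u (-x) y) x y = pdx (pdx u) (-x) y
  rw [pdx_comp_neg]
  change deriv (fun t => -pdx u (-t) y) x = _
  rw [deriv.fun_neg, deriv_comp_neg (fun t => pdx u t y) x, neg_neg]
  rfl

namespace IsSolution

lemma contDiff (hu : IsSolution F c u) : ContDiff ℝ 3 (fun p : ℝ × ℝ => u p.1 p.2) := hu.1

lemma contDiff_two (hu : IsSolution F c u) : ContDiff ℝ 2 (fun p : ℝ × ℝ => u p.1 p.2) :=
  hu.contDiff.of_le (by norm_num)

lemma contDiff_pdx (hu : IsSolution F c u) : ContDiff ℝ 2 (fun p : ℝ × ℝ => pdx u p.1 p.2) :=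
  _root_.contDiff_pdx hu.contDiff (by norm_num)

lemma contDiff_pdy (hu : IsSolution F c u) : ContDiff ℝ 2 (fun p : ℝ × ℝ => pdy u p.1 p.2) :=
  _root_.contDiff_pdy hu.contDiff (by norm_num)

lemma contDiff_pdx_pdx (hu : IsSolution F c u) :
    ContDiff ℝ 1 (fun p : ℝ × ℝ => pdx (pdx u) p.1 p.2) :=
  _root_.contDiff_pdx hu.contDiff_pdx (by norm_num)

lemma contDiff_pdy_pdy (hu : IsSolution F c u) :
    ContDiff ℝ 1 (fun p : ℝ × ℝ => pdy (pdy u) p.1 p.2) :=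
  _root_.contDiff_pdy hu.contDiff_pdy (by norm_num)

lemma continuous (hu : IsSolution F c u) : Continuous (fun p : ℝ × ℝ => u p.1 p.2) :=
  hu.contDiff.continuous

lemma differentiable (hu : IsSolution F c u) :
    Differentiable ℝ (fun p : ℝ × ℝ => u p.1 p.2) := hu.contDiff.differentiable (by simp)

lemma hasDerivAt_fst (hu : IsSolution F c u) (x y : ℝ) :
    HasDerivAt (fun t => u t y) (pdx u x y) x := hasDerivAt_pdx hu.differentiable x y

lemma hasDerivAt_snd (hu : IsSolution F c u) (x y : ℝ) :
    HasDerivAt (fun t => u x t) (pdy u x y) y := hasDerivAt_pdy hu.differentiable x y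

lemma pdy_pdx (hu : IsSolution F c u) : pdy (pdx u) = pdx (pdy u) :=
  (pdx_pdy_comm hu.contDiff_two).symm

lemma hasDerivAt_pdx_fst (hu : IsSolution F c u) (x y : ℝ) :
    HasDerivAt (fun t => pdx u t y) (pdx (pdx u) x y) x :=
  hasDerivAt_pdx (hu.contDiff_pdx.differentiable (by simp)) x y

lemma hasDerivAt_pdx_snd (hu : IsSolution F c u) (x y : ℝ) :
    HasDerivAt (fun t => pdx u x t) (pdx (pdy u) x y) y := by
  rw [← hu.pdy_pdx]
  exact hasDerivAt_pdy (hu.contDiff_pdx.differentiable (by simp)) x y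

lemma hasDerivAt_pdy_fst (hu : IsSolution F c u) (x y : ℝ) :
    HasDerivAt (fun t => pdy u t y) (pdx (pdy u) x y) x :=
  hasDerivAt_pdx (hu.contDiff_pdy.differentiable (by simp)) x y

lemma hasDerivAt_pdy_snd (hu : IsSolution F c u) (x y : ℝ) :
    HasDerivAt (fun t => pdy u x t) (pdy (pdy u) x y) y :=
  hasDerivAt_pdy (hu.contDiff_pdy.differentiable (by simp)) x y

lemma equation (hu : IsSolution F c u) (x y : ℝ) :
    pdx (pdx u) x y + pdy (pdy u) x y + c * pdy u x y = deriv F (u x y) := hu.2.1 x y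

lemma abs_le_one (hu : IsSolution F c u) (x y : ℝ) : |u x y| ≤ 1 := hu.2.2.1 x y

lemma pdy_pos (hu : IsSolution F c u) (x y : ℝ) : 0 < pdy u x y := hu.2.2.2 x y

lemma strictMono (hu : IsSolution F c u) (x : ℝ) : StrictMono (u x) :=
  strictMono_of_deriv_pos (hu.pdy_pos x)

lemma neg_one_lt (hu : IsSolution F c u) (x y : ℝ) : -1 < u x y :=
  (abs_le.1 (hu.abs_le_one x (y - 1))).1.trans_lt (hu.strictMono x (sub_one_lt y))

lemma lt_one (hu : IsSolution F c u) (x y : ℝ) : u x y < 1 :=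
  (hu.strictMono x (lt_add_one y)).trans_le (abs_le.1 (hu.abs_le_one x (y + 1))).2

lemma reflect (hu : IsSolution F c u) : IsSolution F c (fun x y => u (-x) y) := by
  refine ⟨hu.contDiff.comp (contDiff_fst.neg.prodMk contDiff_snd), fun x y => ?_,
    fun x y => hu.abs_le_one _ _, fun x y => hu.pdy_pos (-x) y⟩
  rw [pdxx_comp_neg]
  exact hu.equation (-x) y

lemma equation_pdx (hF : IsDoubleWell F) (hu : IsSolution F c u) (x y : ℝ) :
    pdxx (pdx u) x y + pdyy (pdx u) x y + c * pdy (pdx u) x y =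
      deriv (deriv F) (u x y) * pdx u x y := by
  have hxx : HasDerivAt (fun t => pdx (pdx u) t y) (pdxx (pdx u) x y) x :=
    hasDerivAt_pdx (hu.contDiff_pdx_pdx.differentiable (by simp)) x y
  have hyy : HasDerivAt (fun t => pdy (pdy u) t y) (pdyy (pdx u) x y) x := by
    have h := hasDerivAt_pdx (hu.contDiff_pdy_pdy.differentiable (by simp)) x y
    rw [pdx_pdy_comm hu.contDiff_pdy, ← hu.pdy_pdx] at h
    exact h
  have hdrift : HasDerivAt (fun t => pdy u t y) (pdy (pdx u) x y) x := by
    rw [hu.pdy_pdx]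
    exact hu.hasDerivAt_pdy_fst x y
  have hrhs := (hF.hasDerivAt_deriv (u x y)).comp x (hu.hasDerivAt_fst x y)
  exact ((hxx.add hyy).add (hdrift.const_mul c)).unique
    (hrhs.congr_of_eventuallyEq (Eventually.of_forall fun t => hu.equation t y))

lemma equation_pdy (hF : IsDoubleWell F) (hu : IsSolution F c u) (x y : ℝ) :
    pdxx (pdy u) x y + pdyy (pdy u) x y + c * pdy (pdy u) x y =
      deriv (deriv F) (u x y) * pdy u x y := by
  have hxx : HasDerivAt (fun t => pdx (pdx u) x t) (pdxx (pdy u) x y) y := by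
    have h := hasDerivAt_pdy (hu.contDiff_pdx_pdx.differentiable (by simp)) x y
    rw [← pdx_pdy_comm hu.contDiff_pdx, hu.pdy_pdx] at h
    exact h
  have hyy : HasDerivAt (fun t => pdy (pdy u) x t) (pdyy (pdy u) x y) y :=
    hasDerivAt_pdy (hu.contDiff_pdy_pdy.differentiable (by simp)) x y
  have hrhs := (hF.hasDerivAt_deriv (u x y)).comp y (hu.hasDerivAt_snd x y)
  exact ((hxx.add hyy).add ((hu.hasDerivAt_pdy_snd x y).const_mul c)).unique
    (hrhs.congr_of_eventuallyEq (Eventually.of_forall fun t => hu.equation x t))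

lemma exists_local_bound (hF : IsDoubleWell F) (hu : IsSolution F c u) :
    ∃ C > 0, ∀ A x₀ y₀, 0 < A → (∀ x y, |x - x₀| ≤ 1 → |y - y₀| ≤ 1 → |pdy u x y| ≤ A) →
      |pdx (pdy u) x₀ y₀| ≤ C * A ∧ |pdy (pdy u) x₀ y₀| ≤ C * A := by
  obtain ⟨C, hC, hgrad⟩ := exists_gradient_bound c
  obtain ⟨M, hM, hFM⟩ := hF.exists_bound
  refine ⟨C * (1 + M), by positivity, fun A x₀ y₀ hA h => ?_⟩
  rw [mul_assoc]
  refine hgrad (pdy u) hu.contDiff_pdy ((1 + M) * A) x₀ y₀ (by positivity)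
    fun x y hx hy => ⟨?_, ?_⟩
  · nlinarith [h x y hx hy, mul_pos hM hA]
  · rw [hu.equation_pdy hF, abs_mul]
    have := mul_le_mul (hFM _ (hu.abs_le_one x y)).2.2 (h x y hx hy) (abs_nonneg _) hM.le
    linarith

lemma exists_bound (hF : IsDoubleWell F) (hu : IsSolution F c u) :
    ∃ K > 0, ∀ x y, |pdx u x y| ≤ K ∧ |pdy u x y| ≤ K ∧ |pdx (pdx u) x y| ≤ K ∧
      |pdx (pdy u) x y| ≤ K ∧ |pdy (pdy u) x y| ≤ K := by
  obtain ⟨C, hC, hgrad⟩ := exists_gradient_bound c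
  obtain ⟨M, hM, hFM⟩ := hF.exists_bound
  obtain ⟨D, hD, hloc⟩ := hu.exists_local_bound hF
  set K₁ := C * (1 + M)
  have hK₁ : 0 < K₁ := by positivity
  have hfirst : ∀ x y, |pdx u x y| ≤ K₁ ∧ |pdy u x y| ≤ K₁ := fun x₀ y₀ =>
    hgrad u hu.contDiff_two (1 + M) x₀ y₀ (by positivity) fun x y _ _ =>
      ⟨by linarith [hu.abs_le_one x y], by
        rw [hu.2.1]
        linarith [(hFM _ (hu.abs_le_one x y)).2.1]⟩
  have hxx : ∀ x y, |pdx (pdx u) x y| ≤ C * ((1 + M) * K₁) := fun x₀ y₀ =>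
    (hgrad (pdx u) hu.contDiff_pdx ((1 + M) * K₁) x₀ y₀ (by positivity) fun x y _ _ =>
      ⟨by nlinarith [(hfirst x y).1, mul_pos hM hK₁], by
        have := mul_le_mul (hFM _ (hu.abs_le_one x y)).2.2 (hfirst x y).1 (abs_nonneg _) hM.le
        rw [hu.equation_pdx hF, abs_mul]
        linarith⟩).1
  have hxy := fun x y => hloc K₁ x y hK₁ fun x y _ _ => (hfirst x y).2
  have hposxx : 0 < C * ((1 + M) * K₁) := by positivity
  have hposxy : 0 < D * K₁ := by positivity
  refine ⟨K₁ + C * ((1 + M) * K₁) + D * K₁, by positivity, fun x y => ⟨?_, ?_, ?_, ?_, ?_⟩⟩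
  · linarith [(hfirst x y).1]
  · linarith [(hfirst x y).2]
  · linarith [hxx x y]
  · linarith [(hxy x y).1]
  · linarith [(hxy x y).2]

end IsSolution

namespace IsTravelingWave

lemma isSolution (hu : IsTravelingWave F c u) : IsSolution F c u := hu.1

lemma tendsto_snd_atTop (hu : IsTravelingWave F c u) (x : ℝ) : Tendsto (u x) atTop (nhds 1) :=
  hu.2.1 x

lemma tendsto_snd_atBot (hu : IsTravelingWave F c u) (x : ℝ) : Tendsto (u x) atBot (nhds (-1)) :=
  hu.2.2 x

lemma reflect (hu : IsTravelingWave F c u) : IsTravelingWave F c (fun x y => u (-x) y) :=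
  ⟨hu.isSolution.reflect, fun x => hu.tendsto_snd_atTop (-x), fun x => hu.tendsto_snd_atBot (-x)⟩

end IsTravelingWave

end Regularity

/-! ### Integrals over rectangles and decay -/

section Integrals

lemma setIntegral_Icc_prod {g : ℝ × ℝ → ℝ} (hg : Continuous g) {a b y₁ y₂ : ℝ} (hab : a ≤ b)
    (hy : y₁ ≤ y₂) :
    ∫ p in Set.Icc (a, y₁) (b, y₂), g p = ∫ t in y₁..y₂, ∫ x in a..b, g (x, t) := by
  rw [← Set.Icc_prod_Icc, Measure.volume_eq_prod, ← setIntegral_prod_swap, setIntegral_prod,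
    intervalIntegral.integral_of_le hy, integral_Icc_eq_integral_Ioc]
  · refine setIntegral_congr_fun measurableSet_Ioc fun t _ => ?_
    simp only [Prod.swap]
    rw [intervalIntegral.integral_of_le hab, integral_Icc_eq_integral_Ioc]
  · exact ((hg.comp continuous_swap).continuousOn).integrableOn_compact
      (isCompact_Icc.prod isCompact_Icc)

lemma continuous_integral_slice {g : ℝ × ℝ → ℝ} (hg : Continuous g) (a b : ℝ) :
    Continuous fun t => ∫ x in a..b, g (x, t) :=
  intervalIntegral.continuous_parametric_intervalIntegral_of_continuous'
    (f := fun t x => g (x, t)) (hg.comp continuous_swap) a b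

lemma exists_slice_le {g : ℝ × ℝ → ℝ} (hg : Continuous g) {a b : ℝ} (hab : a ≤ b) (y : ℝ) :
    ∃ y' ∈ Set.Icc y (y + 1),
      ∫ x in a..b, g (x, y') ≤ ∫ p in Set.Icc (a, y) (b, y + 1), g p := by
  have hy : y ≤ y + 1 := by linarith
  have hcont := continuous_integral_slice hg a b
  rw [setIntegral_Icc_prod hg hab hy]
  obtain ⟨y', hy', hmin⟩ := isCompact_Icc.exists_isMinOn (Set.nonempty_Icc.2 hy) hcont.continuousOn
  refine ⟨y', hy', ?_⟩
  have hmono := intervalIntegral.integral_mono_on hy (intervalIntegrable_const (μ := volume))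
    (hcont.intervalIntegrable (μ := volume) y (y + 1)) (fun t ht => hmin ht)
  simpa using hmono

lemma exists_norm_tail_le {S : Set (ℝ × ℝ)} {g : ℝ × ℝ → ℝ} (hS : MeasurableSet S)
    (hi : IntegrableOn g S) {ε : ℝ} (hε : 0 < ε) :
    ∃ R : ℝ, ∫ p in S \ ball 0 R, g p < ε := by
  have h := tendsto_setIntegral_of_antitone (μ := (volume : Measure (ℝ × ℝ))) (f := g)
    (s := fun n : ℕ => S \ ball 0 (n : ℝ)) (fun n => hS.diff measurableSet_ball)
    (fun m n hmn => Set.sdiff_subset_sdiff_right (ball_subset_ball (by exact_mod_cast hmn)))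
    ⟨0, hi.mono_set Set.sdiff_subset⟩
  have hempty : ⋂ n : ℕ, S \ ball (0 : ℝ × ℝ) (n : ℝ) = ∅ := by
    refine Set.eq_empty_of_forall_notMem fun p hp => ?_
    obtain ⟨n, hn⟩ := exists_nat_gt ‖p‖
    exact (Set.mem_iInter.1 hp n).2 (by simpa using hn)
  rw [hempty, setIntegral_empty] at h
  obtain ⟨n, hn⟩ := (h.eventually (gt_mem_nhds hε)).exists
  exact ⟨n, hn⟩

lemma volume_real_closedBall_prod (p : ℝ × ℝ) {r : ℝ} (hr : 0 ≤ r) :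
    (volume : Measure (ℝ × ℝ)).real (closedBall p r) = (2 * r) ^ 2 := by
  have hprod : closedBall p r = closedBall p.1 r ×ˢ closedBall p.2 r :=
    (closedBall_prod_same _ _ _).symm
  rw [hprod, Measure.volume_eq_prod, measureReal_prod_prod, Measure.real, Measure.real,
    Real.volume_closedBall, Real.volume_closedBall, ENNReal.toReal_ofReal (by positivity), sq]

lemma half_sq_le_sq_of_lipschitz {E : Type*} [SeminormedAddCommGroup E] {g : E → ℝ} {K η : ℝ}
    (hK : 0 < K) (hη : 0 ≤ η) (hg : ∀ p q, |g p - g q| ≤ K * ‖p - q‖) {p q : E} (hp : η ≤ |g p|)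
    (hq : ‖p - q‖ ≤ η / (2 * K)) : (η / 2) ^ 2 ≤ g q ^ 2 := by
  have hdist : K * ‖p - q‖ ≤ η / 2 := by
    calc K * ‖p - q‖ ≤ K * (η / (2 * K)) := by gcongr
      _ = η / 2 := by field_simp
  rw [← sq_abs (g q)]
  gcongr
  linarith [hg p q, abs_sub_abs_le_abs_sub (g p) (g q)]

lemma sq_mul_sq_le_setIntegral_closedBall {g : ℝ × ℝ → ℝ} {K η r : ℝ} (hK : 0 < K) (hη : 0 ≤ η)
    (hg : ∀ p q, |g p - g q| ≤ K * ‖p - q‖) {p : ℝ × ℝ} (hp : η ≤ |g p|) (hr : 0 ≤ r)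
    (hrη : r ≤ η / (2 * K)) (hi : IntegrableOn (fun p => g p ^ 2) (closedBall p r)) :
    η ^ 2 * r ^ 2 ≤ ∫ q in closedBall p r, g q ^ 2 := by
  have h := setIntegral_mono_on (μ := (volume : Measure (ℝ × ℝ))) (f := fun _ => (η / 2) ^ 2)
    (integrableOn_const measure_closedBall_lt_top.ne) hi measurableSet_closedBall fun q hq =>
      half_sq_le_sq_of_lipschitz hK hη hg hp
        ((mem_closedBall_iff_norm'.1 hq).trans hrη)
  rw [setIntegral_const, smul_eq_mul, volume_real_closedBall_prod p hr] at h
  linarith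

lemma exists_abs_le_of_integrableOn_sq {S : Set (ℝ × ℝ)} {g : ℝ × ℝ → ℝ} {K : ℝ} (hK : 0 < K)
    (hS : MeasurableSet S) (hg : ∀ p q, |g p - g q| ≤ K * ‖p - q‖)
    (hi : IntegrableOn (fun p => g p ^ 2) S) {η : ℝ} (hη : 0 < η) :
    ∃ R : ℝ, ∀ p, R ≤ ‖p‖ → closedBall p 1 ⊆ S → |g p| ≤ η := by
  set r := min 1 (η / (2 * K))
  have hr : 0 < r := by positivity
  obtain ⟨R, hR⟩ := exists_norm_tail_le hS hi (ε := η ^ 2 * r ^ 2) (by positivity)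
  refine ⟨R + 1, fun p hp hpS => ?_⟩
  by_contra! hlt
  have hsub : closedBall p r ⊆ S \ ball 0 R := fun q hq => by
    have hq₁ : q ∈ closedBall p 1 := closedBall_subset_closedBall (min_le_left _ _) hq
    refine ⟨hpS hq₁, fun hqR => ?_⟩
    rw [mem_ball_zero_iff] at hqR
    linarith [norm_sub_norm_le p q, mem_closedBall_iff_norm'.1 hq₁]
  have htail : IntegrableOn (fun p => g p ^ 2) (S \ ball 0 R) := hi.mono_set Set.sdiff_subset
  have hle : ∫ q in closedBall p r, g q ^ 2 ≤ ∫ q in S \ ball 0 R, g q ^ 2 :=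
    setIntegral_mono_set htail (Eventually.of_forall fun q => sq_nonneg _) hsub.eventuallyLE
  exact absurd (sq_mul_sq_le_setIntegral_closedBall hK hη.le hg hlt.le hr.le (min_le_right _ _)
    (htail.mono_set hsub)) (hle.trans_lt hR).not_ge

lemma abs_le_of_integral_sq_le {f : ℝ → ℝ} {K η x l : ℝ} (hK : 0 < K) (hη : 0 < η)
    (hf : ∀ s t, |f s - f t| ≤ K * |s - t|) (hl : η / (2 * K) ≤ l)
    (h : ∫ t in (x - l)..x, f t ^ 2 < η ^ 3 / (8 * K)) : |f x| ≤ η := by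
  by_contra! hlt
  set r := η / (2 * K) with hr
  have hrpos : 0 < r := by positivity
  have hcont : Continuous f := (LipschitzWith.of_dist_le_mul (K := ⟨K, hK.le⟩) hf).continuous
  have hi : ∀ a b, IntervalIntegrable (fun t => f t ^ 2) volume a b := fun a b =>
    (hcont.pow 2).intervalIntegrable a b
  have hshort := intervalIntegral.integral_mono_on (show x - r ≤ x by linarith)
    (intervalIntegrable_const (μ := volume)) (hi (x - r) x) fun t ht =>
      half_sq_le_sq_of_lipschitz hK hη.le hf hlt.le
        (by rw [Real.norm_of_nonneg (by linarith [ht.2])]; linarith [ht.1])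
  have hlong : ∫ t in (x - r)..x, f t ^ 2 ≤ ∫ t in (x - l)..x, f t ^ 2 :=
    intervalIntegral.integral_mono_interval (by linarith) (by linarith) le_rfl
      (Eventually.of_forall fun t => sq_nonneg _) (hi _ _)
  rw [intervalIntegral.integral_const, smul_eq_mul, sub_sub_cancel] at hshort
  have hvalue : r * (η / 2) ^ 2 = η ^ 3 / (8 * K) := by rw [hr]; field_simp; ring
  linarith

end Integrals

/-! ### The energy identity -/

section Energy

variable {F : ℝ → ℝ} {c : ℝ} {u : ℝ → ℝ → ℝ}

/-- The density whose integral over a horizontal slice is the energy of that slice. The sign of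
the `y` derivative is that of the Hamiltonian of the equation with `y` as time. -/
noncomputable def waveEnergy (F : ℝ → ℝ) (u : ℝ → ℝ → ℝ) (x y : ℝ) : ℝ :=
  pdx u x y ^ 2 / 2 - pdy u x y ^ 2 / 2 + F (u x y)

lemma sq_deriv_le_mul_abs_sub {f f' f'' : ℝ → ℝ} {K s : ℝ} (hs : s = 1 ∨ s = -1) (hK : 0 < K)
    (hf : ∀ t, HasDerivAt f (f' t) t) (hf' : ∀ t, HasDerivAt f' (f'' t) t)
    (hb : ∀ t, |f'' t| ≤ K) (hle : ∀ t, |f t| ≤ 1) (x : ℝ) : f' x ^ 2 ≤ 4 * K * |s - f x| := by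
  rcases hs with rfl | rfl
  · rw [abs_of_nonneg (sub_nonneg.2 (abs_le.1 (hle x)).2), ← neg_sq]
    exact sq_deriv_le_of_nonneg hK convex_univ (fun t _ => (hf t).const_sub 1)
      (fun t _ => (hf' t).neg) (fun t _ => (abs_neg _).trans_le (hb t)) trivial trivial
      (sub_nonneg.2 (abs_le.1 (hle _)).2)
  · rw [abs_sub_comm, abs_of_nonneg (sub_nonneg.2 (abs_le.1 (hle x)).1)]
    exact sq_deriv_le_of_nonneg hK convex_univ (fun t _ => (hf t).sub_const (-1))
      (fun t _ => hf' t) (fun t _ => hb t) trivial trivial (sub_nonneg.2 (abs_le.1 (hle _)).1)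

namespace IsSolution

lemma contDiff_waveEnergy (hF : IsDoubleWell F) (hu : IsSolution F c u) :
    ContDiff ℝ 1 (fun p : ℝ × ℝ => waveEnergy F u p.1 p.2) := by
  have hx := hu.contDiff_pdx.of_le (show (1 : WithTop ℕ∞) ≤ 2 by norm_num)
  have hy := hu.contDiff_pdy.of_le (show (1 : WithTop ℕ∞) ≤ 2 by norm_num)
  have hpot : ContDiff ℝ 1 (fun p : ℝ × ℝ => F (u p.1 p.2)) :=
    (hF.contDiff.comp hu.contDiff_two).of_le (by norm_num)
  exact (((hx.pow 2).div_const 2).sub ((hy.pow 2).div_const 2)).add hpot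

lemma continuous_waveEnergy_slice (hF : IsDoubleWell F) (hu : IsSolution F c u) (y : ℝ) :
    Continuous (fun x => waveEnergy F u x y) :=
  (hu.contDiff_waveEnergy hF).continuous.comp (continuous_id.prodMk continuous_const)

lemma hasDerivAt_waveEnergy_snd (hF : IsDoubleWell F) (hu : IsSolution F c u) (x y : ℝ) :
    HasDerivAt (fun t => waveEnergy F u x t)
      (pdx (pdx u) x y * pdy u x y + pdx u x y * pdx (pdy u) x y + c * pdy u x y ^ 2) y := by
  have hx := ((hu.hasDerivAt_pdx_snd x y).pow 2).div_const 2
  have hy := ((hu.hasDerivAt_pdy_snd x y).pow 2).div_const 2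
  have hpot := (hF.hasDerivAt (u x y)).comp y (hu.hasDerivAt_snd x y)
  refine ((hx.sub hy).add hpot).congr_deriv ?_
  rw [← hu.equation x y]
  push_cast
  ring

lemma energy_identity (hF : IsDoubleWell F) (hu : IsSolution F c u) {a b y₁ y₂ : ℝ}
    (hab : a ≤ b) (hy : y₁ ≤ y₂) :
    (∫ x in a..b, waveEnergy F u x y₂) - ∫ x in a..b, waveEnergy F u x y₁ =
      (∫ y in y₁..y₂, pdx u b y * pdy u b y) - (∫ y in y₁..y₂, pdx u a y * pdy u a y) +
        c * ∫ p in Set.Icc (a, y₁) (b, y₂), pdy u p.1 p.2 ^ 2 := by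
  have hf : ContDiff ℝ 1 (fun p : ℝ × ℝ => -(pdx u p.1 p.2 * pdy u p.1 p.2)) :=
    ((hu.contDiff_pdx.mul hu.contDiff_pdy).neg).of_le (by norm_num)
  have hg := hu.contDiff_waveEnergy hF
  have hdf := hf.differentiable (by simp)
  have hdg := hg.differentiable (by simp)
  have hdiv : ∀ p : ℝ × ℝ,
      fderiv ℝ (fun p : ℝ × ℝ => -(pdx u p.1 p.2 * pdy u p.1 p.2)) p (1, 0) +
      fderiv ℝ (fun p : ℝ × ℝ => waveEnergy F u p.1 p.2) p (0, 1) = c * pdy u p.1 p.2 ^ 2 := by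
    rintro ⟨x, y⟩
    have hfx := hasDerivAt_fst_of_hasFDerivAt (hdf (x, y)).hasFDerivAt
    have hgy := hasDerivAt_snd_of_hasFDerivAt (hdg (x, y)).hasFDerivAt
    rw [hfx.unique ((hu.hasDerivAt_pdx_fst x y).mul (hu.hasDerivAt_pdy_fst x y)).neg,
      hgy.unique (hu.hasDerivAt_waveEnergy_snd hF x y)]
    ring
  have hcont : Continuous fun p : ℝ × ℝ => c * pdy u p.1 p.2 ^ 2 :=
    continuous_const.mul (hu.contDiff_pdy.continuous.pow 2)
  have hstokes := integral_divergence_prod_Icc_of_hasFDerivAt_of_le _ _ _ _ (a, y₁) (b, y₂)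
    ⟨hab, hy⟩ hf.continuous.continuousOn hg.continuous.continuousOn
    (fun p _ => (hdf p).hasFDerivAt) (fun p _ => (hdg p).hasFDerivAt)
    (by simp_rw [hdiv]; exact hcont.continuousOn.integrableOn_compact isCompact_Icc)
  simp_rw [hdiv] at hstokes
  rw [integral_const_mul] at hstokes
  simp only [intervalIntegral.integral_neg] at hstokes
  linarith

lemma abs_flux_le (hu : IsSolution F c u) {H h : ℝ → ℝ} {b y₁ y₂ : ℝ}
    (hH : ∀ s, HasDerivAt H (h s) s) (hh : Continuous h) (hy : y₁ ≤ y₂)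
    (hb : ∀ y ∈ Set.Icc y₁ y₂, |pdx u b y| ≤ h (u b y)) :
    |∫ y in y₁..y₂, pdx u b y * pdy u b y| ≤ H (u b y₂) - H (u b y₁) := by
  have hslice : Continuous fun y => u b y :=
    hu.continuous.comp (continuous_const.prodMk continuous_id)
  have hslice' : Continuous fun y => pdy u b y :=
    hu.contDiff_pdy.continuous.comp (continuous_const.prodMk continuous_id)
  have hi : IntervalIntegrable (fun y => h (u b y) * pdy u b y) volume y₁ y₂ :=
    ((hh.comp hslice).mul hslice').intervalIntegrable _ _
  have hd : ∀ y, HasDerivAt (fun y => H (u b y)) (h (u b y) * pdy u b y) y := fun y =>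
    (hH (u b y)).comp y (hu.hasDerivAt_snd b y)
  rw [← intervalIntegral.integral_eq_sub_of_hasDerivAt (fun y _ => hd y) hi, ← Real.norm_eq_abs]
  refine intervalIntegral.norm_integral_le_of_norm_le hy (Eventually.of_forall fun y hy' => ?_) hi
  rw [Real.norm_eq_abs, abs_mul, abs_of_pos (hu.pdy_pos b y)]
  exact mul_le_mul_of_nonneg_right (hb y ⟨hy'.1.le, hy'.2⟩) (hu.pdy_pos b y).le

lemma exists_abs_waveEnergy_le (hF : IsDoubleWell F) (hu : IsSolution F c u) :
    ∃ K : ℝ, ∀ s, s = 1 ∨ s = -1 → ∀ x y,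
      |waveEnergy F u x y| ≤ K * |s - u x y| + |F (u x y)| := by
  obtain ⟨K, hK, hb⟩ := hu.exists_bound hF
  refine ⟨4 * K, fun s hs x y => ?_⟩
  have hx : pdx u x y ^ 2 ≤ 4 * K * |s - u x y| :=
    sq_deriv_le_mul_abs_sub hs hK (fun t => hu.hasDerivAt_fst t y)
      (fun t => hu.hasDerivAt_pdx_fst t y) (fun t => (hb t y).2.2.1) (fun t => hu.abs_le_one t y) x
  have hy : pdy u x y ^ 2 ≤ 4 * K * |s - u x y| :=
    sq_deriv_le_mul_abs_sub hs hK (hu.hasDerivAt_snd x) (hu.hasDerivAt_pdy_snd x)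
      (fun t => (hb x t).2.2.2.2) (hu.abs_le_one x) y
  refine (abs_add_le _ _).trans ?_
  gcongr
  rw [abs_le]
  constructor <;> linarith [sq_nonneg (pdx u x y), sq_nonneg (pdy u x y)]

lemma tendsto_energy (hF : IsDoubleWell F) (hu : IsSolution F c u)
    {l : Filter ℝ} [l.IsCountablyGenerated] {s : ℝ} (hs : s = 1 ∨ s = -1)
    (hl : ∀ x, Tendsto (u x) l (nhds s)) (a b : ℝ) :
    Tendsto (fun y => ∫ x in a..b, waveEnergy F u x y) l (nhds 0) := by
  obtain ⟨K, hK⟩ := hu.exists_abs_waveEnergy_le hF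
  have hK := hK s hs
  have hFs : F s = 0 := by
    rcases hs with rfl | rfl
    exacts [hF.right_eq_zero, hF.left_eq_zero]
  have hcont : Continuous fun r => K * |s - r| + |F r| := by
    have := hF.continuous
    fun_prop
  obtain ⟨B, hB⟩ := (isCompact_Icc (a := (-1 : ℝ)) (b := 1)).bddAbove_image hcont.continuousOn
  rw [← intervalIntegral.integral_zero (a := a) (b := b) (μ := volume)]
  refine intervalIntegral.tendsto_integral_filter_of_dominated_convergence
    (fun _ => B) (Eventually.of_forall fun y =>
      (hu.continuous_waveEnergy_slice hF y).aestronglyMeasurable)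
    (Eventually.of_forall fun y => Eventually.of_forall fun x _ =>
      (hK x y).trans (hB ⟨_, abs_le.1 (hu.abs_le_one x y), rfl⟩))
    intervalIntegrable_const (Eventually.of_forall fun x _ => ?_)
  refine squeeze_zero_norm (hK x) ?_
  simpa [hFs, Function.comp_def] using (hcont.tendsto s).comp (hl x)

lemma integrableOn_sq_pdy (hu : IsSolution F c u) {s : Set (ℝ × ℝ)} (hs : IsCompact s) :
    IntegrableOn (fun p : ℝ × ℝ => pdy u p.1 p.2 ^ 2) s :=
  (hu.contDiff_pdy.continuous.pow 2).continuousOn.integrableOn_compact hs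

lemma integral_sq_pdy_mono (hu : IsSolution F c u) {s t : Set (ℝ × ℝ)} (ht : IsCompact t)
    (hst : s ⊆ t) : ∫ p in s, pdy u p.1 p.2 ^ 2 ≤ ∫ p in t, pdy u p.1 p.2 ^ 2 :=
  setIntegral_mono_set (hu.integrableOn_sq_pdy ht)
    (Eventually.of_forall fun _ => sq_nonneg _) (Eventually.of_forall hst)

end IsSolution

namespace IsTravelingWave

/-- Let the upper edge of the rectangle in `energy_identity` go to infinity, where the slice
energy vanishes. -/
lemma energy_add_le (hF : IsDoubleWell F) (hc : 0 ≤ c) (hu : IsTravelingWave F c u)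
    {Ha ha Hb hb : ℝ → ℝ} {a b y₁ : ℝ} (hab : a ≤ b)
    (hHa : ∀ s, HasDerivAt Ha (ha s) s) (hha : Continuous ha)
    (hHb : ∀ s, HasDerivAt Hb (hb s) s) (hhb : Continuous hb)
    (hxa : ∀ y, y₁ ≤ y → |pdx u a y| ≤ ha (u a y)) (hxb : ∀ y, y₁ ≤ y → |pdx u b y| ≤ hb (u b y))
    {y₂ : ℝ} (hy : y₁ ≤ y₂) :
    (∫ x in a..b, waveEnergy F u x y₁) +
      c * (∫ p in Set.Icc (a, y₁) (b, y₂), pdy u p.1 p.2 ^ 2) ≤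
        (Ha 1 - Ha (u a y₁)) + (Hb 1 - Hb (u b y₁)) := by
  have hsol := hu.isSolution
  have hlim : ∀ (H h : ℝ → ℝ) (t : ℝ), (∀ s, HasDerivAt H (h s) s) →
      Tendsto (fun y => H (u t y)) atTop (nhds (H 1)) := fun H h t hH =>
    (hH 1).continuousAt.tendsto.comp (hu.tendsto_snd_atTop t)
  have hlimit : Tendsto (fun y => (∫ x in a..b, waveEnergy F u x y) +
      ((Ha (u a y) - Ha (u a y₁)) + (Hb (u b y) - Hb (u b y₁)))) atTop
      (nhds (0 + ((Ha 1 - Ha (u a y₁)) + (Hb 1 - Hb (u b y₁))))) :=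
    (hsol.tendsto_energy hF (Or.inl rfl) hu.tendsto_snd_atTop a b).add
      (((hlim Ha ha a hHa).sub_const _).add ((hlim Hb hb b hHb).sub_const _))
  rw [zero_add] at hlimit
  refine ge_of_tendsto hlimit ?_
  filter_upwards [eventually_ge_atTop y₂] with y hyy
  have hident := hsol.energy_identity hF hab (hy.trans hyy)
  have hfluxa := abs_le.1 (hsol.abs_flux_le hHa hha (hy.trans hyy) fun t ht => hxa t ht.1)
  have hfluxb := abs_le.1 (hsol.abs_flux_le hHb hhb (hy.trans hyy) fun t ht => hxb t ht.1)
  have hmono := mul_le_mul_of_nonneg_left (hsol.integral_sq_pdy_mono isCompact_Icc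
    (Set.Icc_subset_Icc (le_refl (a, y₁)) (Prod.mk_le_mk.2 ⟨le_refl b, hyy⟩))) hc
  linarith [hfluxa.1, hfluxa.2, hfluxb.1, hfluxb.2]

lemma energy_add_le_const (hF : IsDoubleWell F) (hc : 0 ≤ c) (hu : IsTravelingWave F c u)
    {K : ℝ} (hK : ∀ x y, |pdx u x y| ≤ K) {a b y₁ y₂ : ℝ} (hab : a ≤ b) (hy : y₁ ≤ y₂) :
    (∫ x in a..b, waveEnergy F u x y₁) +
      c * (∫ p in Set.Icc (a, y₁) (b, y₂), pdy u p.1 p.2 ^ 2) ≤ 4 * K := by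
  have hd : ∀ s, HasDerivAt (fun s => K * s) K s := fun s => by
    simpa using (hasDerivAt_id s).const_mul K
  have h := hu.energy_add_le hF hc hab hd continuous_const hd continuous_const
    (fun y _ => hK a y) (fun y _ => hK b y) hy
  have hKnonneg : 0 ≤ K := (abs_nonneg _).trans (hK 0 0)
  nlinarith [hu.isSolution.neg_one_lt a y₁, hu.isSolution.neg_one_lt b y₁]

lemma integral_sq_pdy_le (hF : IsDoubleWell F) (hc : 0 ≤ c) (hu : IsTravelingWave F c u)
    {K : ℝ} (hK : ∀ x y, |pdx u x y| ≤ K) {a b y₁ y₂ : ℝ} (hab : a ≤ b) (hy : y₁ ≤ y₂) :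
    c * (∫ p in Set.Icc (a, y₁) (b, y₂), pdy u p.1 p.2 ^ 2) ≤ 4 * K := by
  have hlimit := (hu.isSolution.tendsto_energy hF (Or.inr rfl)
    hu.tendsto_snd_atBot a b).const_sub (4 * K)
  rw [sub_zero] at hlimit
  refine ge_of_tendsto hlimit ?_
  filter_upwards [eventually_le_atBot y₁] with y hyy
  have hmono := mul_le_mul_of_nonneg_left (hu.isSolution.integral_sq_pdy_mono isCompact_Icc
    (Set.Icc_subset_Icc (Prod.mk_le_mk.2 ⟨le_refl a, hyy⟩) (le_refl (b, y₂)))) hc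
  linarith [hu.energy_add_le_const hF hc hK hab (hyy.trans hy)]

lemma integrable_sq_pdy (hF : IsDoubleWell F) (hc : 0 < c) (hu : IsTravelingWave F c u) :
    Integrable (fun p : ℝ × ℝ => pdy u p.1 p.2 ^ 2) := by
  obtain ⟨K, -, hb⟩ := hu.isSolution.exists_bound hF
  refine (aecover_closedBall (x := (0 : ℝ × ℝ)) (r := fun n : ℕ => (n : ℝ))
    tendsto_natCast_atTop_atTop).integrable_of_integral_bounded_of_nonneg_ae (4 * K / c)
    (fun n => hu.isSolution.integrableOn_sq_pdy (isCompact_closedBall _ _))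
    (Eventually.of_forall fun p => sq_nonneg _) (Eventually.of_forall fun n => ?_)
  have hball : closedBall (0 : ℝ × ℝ) (n : ℝ) = Set.Icc (-(n : ℝ), -(n : ℝ)) (n, n) := by
    change closedBall ((0 : ℝ), (0 : ℝ)) n = _
    rw [← closedBall_prod_same, Real.closedBall_eq_Icc, Set.Icc_prod_Icc]
    simp
  have hn : -(n : ℝ) ≤ n := neg_le_self n.cast_nonneg
  rw [hball, le_div_iff₀ hc, mul_comm]
  exact hu.integral_sq_pdy_le hF hc.le (fun x y => (hb x y).1) hn hn

end IsTravelingWave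

end Energy

/-! ### Decay at infinity -/

section Decay

variable {F : ℝ → ℝ} {c : ℝ} {u : ℝ → ℝ → ℝ}

lemma abs_sub_le_of_partial_bound {v : ℝ → ℝ → ℝ} {K : ℝ}
    (hv : Differentiable ℝ (fun p : ℝ × ℝ => v p.1 p.2))
    (hx : ∀ x y, |pdx v x y| ≤ K) (hy : ∀ x y, |pdy v x y| ≤ K) (p q : ℝ × ℝ) :
    |v p.1 p.2 - v q.1 q.2| ≤ 2 * K * ‖p - q‖ := by
  have hK : 0 ≤ K := (abs_nonneg _).trans (hx 0 0)
  have hhor : |v p.1 p.2 - v q.1 p.2| ≤ K * |p.1 - q.1| :=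
    convex_univ.norm_image_sub_le_of_norm_hasDerivWithin_le
      (fun t _ => (hasDerivAt_pdx hv t p.2).hasDerivWithinAt) (fun t _ => hx t _) trivial trivial
  have hver : |v q.1 p.2 - v q.1 q.2| ≤ K * |p.2 - q.2| :=
    convex_univ.norm_image_sub_le_of_norm_hasDerivWithin_le
      (fun t _ => (hasDerivAt_pdy hv q.1 t).hasDerivWithinAt) (fun t _ => hy _ t) trivial trivial
  have hfst : |p.1 - q.1| ≤ ‖p - q‖ := norm_fst_le (p - q)
  have hsnd : |p.2 - q.2| ≤ ‖p - q‖ := norm_snd_le (p - q)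
  calc |v p.1 p.2 - v q.1 q.2| ≤ K * |p.1 - q.1| + K * |p.2 - q.2| :=
        (abs_sub_le _ _ _).trans (add_le_add hhor hver)
    _ ≤ K * ‖p - q‖ + K * ‖p - q‖ := by gcongr
    _ = 2 * K * ‖p - q‖ := by ring

lemma exists_le_of_integral_le {f : ℝ → ℝ} (hf : Continuous f) {a b C : ℝ} (hab : a < b)
    (h : ∫ x in a..b, f x ≤ C) : ∃ x ∈ Set.Icc a b, f x ≤ C / (b - a) := by
  obtain ⟨x, hx, hmin⟩ :=
    isCompact_Icc.exists_isMinOn (Set.nonempty_Icc.2 hab.le) hf.continuousOn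
  refine ⟨x, hx, ?_⟩
  have hle := intervalIntegral.integral_mono_on hab.le (intervalIntegrable_const (μ := volume))
    (hf.intervalIntegrable (μ := volume) a b) (fun t ht => hmin ht)
  rw [intervalIntegral.integral_const, smul_eq_mul] at hle
  rw [le_div_iff₀ (sub_pos.2 hab)]
  linarith

lemma sub_le_norm_of_abs_sub_le {x y x' y' R L : ℝ} (hR : R ≤ ‖(x, y)‖) (hx : |x' - x| ≤ L)
    (hy : |y' - y| ≤ L) : R - L ≤ ‖(x', y')‖ := by
  have hdist : ‖(x, y) - (x', y')‖ ≤ L := by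
    rw [norm_sub_rev]
    exact max_le hx hy
  linarith [norm_sub_norm_le (x, y) (x', y')]

namespace IsSolution

lemma continuous_slice (hu : IsSolution F c u) (y : ℝ) : Continuous fun x => u x y :=
  hu.continuous.comp (continuous_id.prodMk continuous_const)

lemma continuous_slice_pdx (hu : IsSolution F c u) (y : ℝ) : Continuous fun x => pdx u x y :=
  hu.contDiff_pdx.continuous.comp (continuous_id.prodMk continuous_const)

lemma continuous_slice_pdy (hu : IsSolution F c u) (y : ℝ) : Continuous fun x => pdy u x y :=
  hu.contDiff_pdy.continuous.comp (continuous_id.prodMk continuous_const)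

lemma hasDerivAt_sq_pdx_sub (hF : IsDoubleWell F) (hu : IsSolution F c u) (x y : ℝ) :
    HasDerivAt (fun t => pdx u t y ^ 2 / 2 - F (u t y))
      (-(pdx u x y * (pdy (pdy u) x y + c * pdy u x y))) x := by
  refine ((((hu.hasDerivAt_pdx_fst x y).pow 2).div_const 2).sub
    ((hF.hasDerivAt _).comp x (hu.hasDerivAt_fst x y))).congr_deriv ?_
  rw [← hu.equation x y]
  push_cast
  ring

/-- Along a slice on which `∂ᵧu` and `∂ᵧᵧu` are small, the wave nearly solves the
one-dimensional equation, so `(∂ₓu)² / 2 - F(u)` is nearly constant. -/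
lemma abs_sq_pdx_sub_le (hF : IsDoubleWell F) (hu : IsSolution F c u) {K η x x' y : ℝ}
    (hK : ∀ x y, |pdx u x y| ≤ K) (hx : x ≤ x')
    (hη : ∀ t ∈ Set.Icc x x', |pdy u t y| ≤ η ∧ |pdy (pdy u) t y| ≤ η) :
    |(pdx u x' y ^ 2 / 2 - F (u x' y)) - (pdx u x y ^ 2 / 2 - F (u x y))| ≤
      K * ((1 + |c|) * η) * (x' - x) := by
  refine abs_sub_le_of_hasDerivAt hx (fun t => hu.hasDerivAt_sq_pdx_sub hF t y) fun t ht => ?_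
  have hforce : |pdy (pdy u) t y + c * pdy u t y| ≤ (1 + |c|) * η := by
    refine (abs_add_le _ _).trans ?_
    rw [abs_mul, one_add_mul]
    gcongr
    exacts [(hη t ht).2, (hη t ht).1]
  rw [abs_neg, abs_mul]
  exact mul_le_mul (hK t y) hforce (abs_nonneg _) ((abs_nonneg _).trans (hK t y))

end IsSolution

namespace IsTravelingWave

lemma exists_pdy_le (hF : IsDoubleWell F) (hc : 0 < c) (hu : IsTravelingWave F c u)
    {η : ℝ} (hη : 0 < η) : ∃ R : ℝ, ∀ x y, R ≤ ‖(x, y)‖ →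
      |pdy u x y| ≤ η ∧ |pdx (pdy u) x y| ≤ η ∧ |pdy (pdy u) x y| ≤ η := by
  obtain ⟨K, hK, hb⟩ := hu.isSolution.exists_bound hF
  obtain ⟨C, hC, hloc⟩ := hu.isSolution.exists_local_bound hF
  set A := min η (η / C)
  have hA : 0 < A := by positivity
  obtain ⟨R, hR⟩ := exists_abs_le_of_integrableOn_sq (S := Set.univ)
    (g := fun p : ℝ × ℝ => pdy u p.1 p.2) (K := 2 * K) (by positivity) MeasurableSet.univ
    (abs_sub_le_of_partial_bound (hu.isSolution.contDiff_pdy.differentiable (by simp))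
      (fun x y => (hb x y).2.2.2.1) (fun x y => (hb x y).2.2.2.2))
    (hu.integrable_sq_pdy hF hc).integrableOn hA
  refine ⟨R + 1, fun x y hxy => ?_⟩
  have hpdy := hR (x, y) (by linarith) (Set.subset_univ _)
  have hpdy' := hloc A x y hA fun x' y' hx' hy' => hR (x', y')
    (by linarith [sub_le_norm_of_abs_sub_le hxy hx' hy']) (Set.subset_univ _)
  have hCA : C * A ≤ η := by
    calc C * A ≤ C * (η / C) := by gcongr; exact min_le_right _ _
      _ = η := by field_simp
  exact ⟨hpdy.trans (min_le_left _ _), hpdy'.1.trans hCA, hpdy'.2.trans hCA⟩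

lemma energy_le_const (hF : IsDoubleWell F) (hc : 0 ≤ c) (hu : IsTravelingWave F c u)
    {K : ℝ} (hK : ∀ x y, |pdx u x y| ≤ K) {a b : ℝ} (y : ℝ) (hab : a ≤ b) :
    ∫ x in a..b, waveEnergy F u x y ≤ 4 * K := by
  have hdiss : 0 ≤ ∫ p in Set.Icc (a, y) (b, y), pdy u p.1 p.2 ^ 2 :=
    integral_nonneg fun p => sq_nonneg _
  linarith [hu.energy_add_le_const hF hc hK hab (le_refl y), mul_nonneg hc hdiss]

/-- Some point of the slice has energy density at most `4 * K / L`; compare with it. -/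
lemma sq_pdx_le_of_pdy_le (hF : IsDoubleWell F) (hc : 0 ≤ c) (hu : IsTravelingWave F c u)
    {K L η x y : ℝ} (hK : ∀ x y, |pdx u x y| ≤ K) (hL : 0 < L)
    (hη : ∀ t ∈ Set.Icc x (x + L), |pdy u t y| ≤ η ∧ |pdy (pdy u) t y| ≤ η) :
    pdx u x y ^ 2 ≤ 2 * F (u x y) + 8 * K / L + η ^ 2 + 2 * (K * ((1 + c) * η) * L) := by
  obtain ⟨x', hx', hmin⟩ := exists_le_of_integral_le
    (hu.isSolution.continuous_waveEnergy_slice hF y) (lt_add_of_pos_right x hL)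
    (hu.energy_le_const hF hc hK y (le_add_of_nonneg_right hL.le))
  rw [add_sub_cancel_left, waveEnergy] at hmin
  have hη₀ : 0 ≤ η := (abs_nonneg _).trans (hη x' hx').1
  have hK₀ : 0 ≤ K := (abs_nonneg _).trans (hK x y)
  have hpdy : pdy u x' y ^ 2 ≤ η ^ 2 := sq_le_sq' (abs_le.1 (hη x' hx').1).1
    (abs_le.1 (hη x' hx').1).2
  have hpot : 0 ≤ F (u x' y) := hF.nonneg (hu.isSolution.abs_le_one x' y)
  have hvar := (abs_le.1 (hu.isSolution.abs_sq_pdx_sub_le hF hK hx'.1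
    fun t ht => hη t ⟨ht.1, ht.2.trans hx'.2⟩)).1
  rw [abs_of_nonneg hc] at hvar
  have hlen : K * ((1 + c) * η) * (x' - x) ≤ K * ((1 + c) * η) * L := by
    gcongr
    linarith [hx'.2]
  have hscale : 8 * K / L = 2 * (4 * K / L) := by ring
  linarith

/-- An asymptotic form of Modica's inequality. -/
lemma exists_abs_pdx_le (hF : IsDoubleWell F) (hc : 0 < c) (hu : IsTravelingWave F c u)
    {θ : ℝ} (hθ : 0 < θ) : ∃ R : ℝ, ∀ x y, R ≤ ‖(x, y)‖ →
      |pdx u x y| ≤ wellSpeed F (u x y) + θ := by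
  obtain ⟨K, hK, hb⟩ := hu.isSolution.exists_bound hF
  set L := 32 * K / θ ^ 2 with hL
  have hLpos : 0 < L := by positivity
  set η := min (θ / 2) (θ ^ 2 / (4 * (K * (1 + c) * L)))
  have hηpos : 0 < η := by positivity
  have hη₁ : η ^ 2 ≤ (θ / 2) ^ 2 := by gcongr; exact min_le_left _ _
  have hη₂ : K * ((1 + c) * η) * L ≤ θ ^ 2 / 4 := by
    calc K * ((1 + c) * η) * L ≤ K * ((1 + c) * (θ ^ 2 / (4 * (K * (1 + c) * L)))) * L := by
          gcongr; exact min_le_right _ _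
      _ = θ ^ 2 / 4 := by field_simp
  have hKL : 8 * K / L = θ ^ 2 / 4 := by rw [hL]; field_simp; norm_num
  obtain ⟨R, hR⟩ := hu.exists_pdy_le hF hc hηpos
  refine ⟨R + L, fun x y hxy => ?_⟩
  have hsq := hu.sq_pdx_le_of_pdy_le hF hc.le (x := x) (y := y) (fun x y => (hb x y).1) hLpos
    fun t ht => by
      have hnorm : R + L - L ≤ ‖(t, y)‖ := sub_le_norm_of_abs_sub_le hxy
        (by rw [abs_of_nonneg (sub_nonneg.2 ht.1)]; linarith [ht.2]) (by simpa using hLpos.le)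
      have hdecay := hR t y (by linarith)
      exact ⟨hdecay.1, hdecay.2.2⟩
  have hspeed := hF.wellSpeed_sq (hu.isSolution.abs_le_one x y)
  have hspeed₀ := wellSpeed_nonneg F (u x y)
  refine abs_le_of_sq_le_sq ?_ (by positivity)
  nlinarith [mul_nonneg hspeed₀ hθ.le]

end IsTravelingWave

end Decay

/-! ### Horizontal limits -/

section HorizontalLimits

variable {F : ℝ → ℝ} {c : ℝ} {u : ℝ → ℝ → ℝ}

lemma tendsto_or_tendsto_of_eventually_near {f : ℝ → ℝ} (hf : Continuous f) {a b : ℝ} (hab : a < b)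
    (hnear : ∀ ε > 0, ∀ᶠ x in atBot, |f x - a| < ε ∨ |f x - b| < ε) :
    Tendsto f atBot (nhds a) ∨ Tendsto f atBot (nhds b) := by
  have hgap : 0 < (b - a) / 2 := by linarith
  obtain ⟨X, hX⟩ := eventually_atBot.1 (hnear _ hgap)
  have hside : (∀ x ≤ X, f x < (a + b) / 2) ∨ ∀ x ≤ X, (a + b) / 2 < f x := by
    by_contra! hcross
    obtain ⟨⟨x, hx, hfx⟩, z, hz, hfz⟩ := hcross
    obtain ⟨t, ht, hft⟩ :=
      isPreconnected_Iic.intermediate_value hz hx hf.continuousOn ⟨hfz, hfx⟩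
    rcases hX t ht with hlt | hlt <;> linarith [abs_lt.1 hlt]
  refine hside.imp (fun hbelow => ?_) fun habove => ?_ <;>
    refine Metric.tendsto_nhds.2 fun ε hε => ?_ <;>
    filter_upwards [hnear (min ε ((b - a) / 2)) (lt_min hε hgap), eventually_le_atBot X]
      with x hx hxX
  · refine (hx.resolve_right fun hlt => ?_).trans_le (min_le_left _ _)
    linarith [(abs_lt.1 hlt).1, min_le_right ε ((b - a) / 2), hbelow x hxX]
  · refine (hx.resolve_left fun hlt => ?_).trans_le (min_le_left _ _)
    linarith [(abs_lt.1 hlt).2, min_le_right ε ((b - a) / 2), habove x hxX]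

lemma exists_pos_mul_le_and_sub_le {f : ℝ → ℝ} {a : ℝ} (hf : ContinuousAt f a) (K : ℝ)
    {δ : ℝ} (hδ : 0 < δ) : ∃ ε > 0, K * ε ≤ δ ∧ f a - f (a - ε) ≤ δ := by
  have hmul : Tendsto (fun ε => K * ε) (nhdsWithin 0 (Set.Ioi 0)) (nhds 0) := by
    simpa using ((continuous_const_mul K).tendsto 0).mono_left nhdsWithin_le_nhds
  have hshift : Tendsto (fun ε => a - ε) (nhds 0) (nhds a) := by
    simpa using (continuous_sub_left a).tendsto 0
  have hsub : Tendsto (fun ε => f a - f (a - ε)) (nhdsWithin 0 (Set.Ioi 0)) (nhds 0) := by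
    simpa using ((hf.tendsto.comp hshift).const_sub (f a)).mono_left nhdsWithin_le_nhds
  obtain ⟨ε, ⟨hεmul, hεsub⟩, hε⟩ := (((hmul.eventually (gt_mem_nhds hδ)).and
    (hsub.eventually (gt_mem_nhds hδ))).and self_mem_nhdsWithin).exists
  exact ⟨ε, hε, hεmul.le, hεsub.le⟩

namespace IsSolution

lemma continuous_sq_wellSpeed (hF : IsDoubleWell F) (hu : IsSolution F c u) :
    Continuous fun p : ℝ × ℝ => wellSpeed F (u p.1 p.2) ^ 2 :=
  (hF.continuous_wellSpeed.comp hu.continuous).pow 2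

lemma integral_sq_pdy_pos (hu : IsSolution F c u) {a b y₁ y₂ : ℝ} (hab : a < b) (hy : y₁ < y₂) :
    0 < ∫ p in Set.Icc (a, y₁) (b, y₂), pdy u p.1 p.2 ^ 2 := by
  have hcont : Continuous fun p : ℝ × ℝ => pdy u p.1 p.2 ^ 2 := hu.contDiff_pdy.continuous.pow 2
  rw [setIntegral_Icc_prod hcont hab.le hy.le]
  refine intervalIntegral.intervalIntegral_pos_of_pos
    ((continuous_integral_slice hcont _ _).intervalIntegrable _ _) (fun t => ?_) hy
  exact intervalIntegral.intervalIntegral_pos_of_pos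
    (((hu.continuous_slice_pdy t).pow 2).intervalIntegrable _ _)
    (fun x => pow_pos (hu.pdy_pos x t) 2) hab

/-- Modica–Mortola: the energy of a slice as a perfect square plus boundary terms. -/
lemma integral_sq_pdx_sub_wellSpeed (hF : IsDoubleWell F) (hu : IsSolution F c u) {σ : ℝ}
    (hσ : σ ^ 2 = 1) (a b y : ℝ) :
    ∫ x in a..b, (pdx u x y - σ * wellSpeed F (u x y)) ^ 2 =
      2 * (∫ x in a..b, waveEnergy F u x y) + (∫ x in a..b, pdy u x y ^ 2) -
        2 * σ * (wellEnergy F (u b y) - wellEnergy F (u a y)) := by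
  have hi : IntervalIntegrable (fun x => wellSpeed F (u x y) * pdx u x y) volume a b :=
    ((hF.continuous_wellSpeed.comp (hu.continuous_slice y)).mul
      (hu.continuous_slice_pdx y)).intervalIntegrable _ _
  have hie := (hu.continuous_waveEnergy_slice hF y).intervalIntegrable (μ := volume) a b
  have hiy : IntervalIntegrable (fun x => pdy u x y ^ 2) volume a b :=
    ((hu.continuous_slice_pdy y).pow 2).intervalIntegrable a b
  have hd : ∀ x, HasDerivAt (fun x => wellEnergy F (u x y)) (wellSpeed F (u x y) * pdx u x y) x :=
    fun x => (hF.hasDerivAt_wellEnergy _).comp x (hu.hasDerivAt_fst x y)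
  rw [← intervalIntegral.integral_eq_sub_of_hasDerivAt (fun x _ => hd x) hi,
    ← intervalIntegral.integral_const_mul, ← intervalIntegral.integral_const_mul,
    ← intervalIntegral.integral_add (hie.const_mul 2) hiy,
    ← intervalIntegral.integral_sub ((hie.const_mul 2).add hiy) (hi.const_mul (2 * σ))]
  refine intervalIntegral.integral_congr fun x _ => ?_
  simp only [waveEnergy]
  linear_combination σ ^ 2 * hF.wellSpeed_sq (hu.abs_le_one x y) + 2 * F (u x y) * hσ

lemma wellEnergy_sub_le (hF : IsDoubleWell F) (hu : IsSolution F c u) {a b : ℝ}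
    (y : ℝ) (hab : a ≤ b) : wellEnergy F (u a y) - wellEnergy F (u b y) ≤
      (∫ x in a..b, waveEnergy F u x y) + (∫ x in a..b, pdy u x y ^ 2) / 2 := by
  have hsq : 0 ≤ ∫ x in a..b, (pdx u x y - -1 * wellSpeed F (u x y)) ^ 2 :=
    intervalIntegral.integral_nonneg hab fun x _ => sq_nonneg _
  rw [hu.integral_sq_pdx_sub_wellSpeed hF (by norm_num)] at hsq
  linarith

end IsSolution

namespace IsTravelingWave

lemma integral_sq_wellSpeed_le (hF : IsDoubleWell F) (hc : 0 < c) (hu : IsTravelingWave F c u)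
    {K : ℝ} (hK : ∀ x y, |pdx u x y| ≤ K) {a b y₁ y₂ : ℝ} (hab : a ≤ b) (hy : y₁ ≤ y₂) :
    ∫ p in Set.Icc (a, y₁) (b, y₂), wellSpeed F (u p.1 p.2) ^ 2 ≤
      2 * (4 * K * (y₂ - y₁)) + 4 * K / c := by
  have hcont := (hu.isSolution.contDiff_waveEnergy hF).continuous
  have henergy : ∫ p in Set.Icc (a, y₁) (b, y₂), waveEnergy F u p.1 p.2 ≤ 4 * K * (y₂ - y₁) := by
    rw [setIntegral_Icc_prod hcont hab hy]
    have hmono := intervalIntegral.integral_mono_on hy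
      ((continuous_integral_slice hcont a b).intervalIntegrable (μ := volume) y₁ y₂)
      (intervalIntegrable_const (μ := volume)) fun t _ => hu.energy_le_const hF hc.le hK t hab
    rw [intervalIntegral.integral_const, smul_eq_mul] at hmono
    linarith
  have hdiss : ∫ p in Set.Icc (a, y₁) (b, y₂), pdy u p.1 p.2 ^ 2 ≤ 4 * K / c := by
    rw [le_div_iff₀ hc, mul_comm]
    exact hu.integral_sq_pdy_le hF hc.le hK hab hy
  have hie : IntegrableOn (fun p : ℝ × ℝ => waveEnergy F u p.1 p.2) (Set.Icc (a, y₁) (b, y₂)) :=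
    hcont.continuousOn.integrableOn_compact isCompact_Icc
  have hiy := hu.isSolution.integrableOn_sq_pdy (isCompact_Icc (a := (a, y₁)) (b := (b, y₂)))
  have hspeed : ∫ p in Set.Icc (a, y₁) (b, y₂), wellSpeed F (u p.1 p.2) ^ 2 ≤
      ∫ p in Set.Icc (a, y₁) (b, y₂), (2 * waveEnergy F u p.1 p.2 + pdy u p.1 p.2 ^ 2) := by
    refine setIntegral_mono_on ?_ ((hie.const_mul 2).add hiy) measurableSet_Icc fun p _ => ?_
    · exact (hu.isSolution.continuous_sq_wellSpeed hF).continuousOn.integrableOn_compact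
        isCompact_Icc
    · rw [hF.wellSpeed_sq (hu.isSolution.abs_le_one _ _), waveEnergy]
      linarith [sq_nonneg (pdx u p.1 p.2)]
  rw [integral_add (hie.const_mul 2) hiy, integral_const_mul] at hspeed
  linarith

lemma integrableOn_sq_wellSpeed (hF : IsDoubleWell F) (hc : 0 < c)
    (hu : IsTravelingWave F c u) {y₁ y₂ : ℝ} (hy : y₁ ≤ y₂) :
    IntegrableOn (fun p : ℝ × ℝ => wellSpeed F (u p.1 p.2) ^ 2) (Set.univ ×ˢ Set.Icc y₁ y₂) := by
  obtain ⟨K, -, hb⟩ := hu.isSolution.exists_bound hF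
  have hcont := hu.isSolution.continuous_sq_wellSpeed hF
  refine (aecover_closedBall (x := (0 : ℝ × ℝ)) (r := fun n : ℕ => (n : ℝ))
    tendsto_natCast_atTop_atTop).integrable_of_integral_bounded_of_nonneg_ae
    (2 * (4 * K * (y₂ - y₁)) + 4 * K / c) (fun n => ?_)
    (Eventually.of_forall fun p => sq_nonneg _) (Eventually.of_forall fun n => ?_)
  · exact (hcont.continuousOn.integrableOn_compact (isCompact_closedBall _ _)).restrict
  · rw [Measure.restrict_restrict measurableSet_closedBall]
    have hsub : closedBall (0 : ℝ × ℝ) (n : ℝ) ∩ Set.univ ×ˢ Set.Icc y₁ y₂ ⊆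
        Set.Icc (-(n : ℝ), y₁) (n, y₂) := by
      rintro p ⟨hp, -, hpy⟩
      rw [mem_closedBall_zero_iff] at hp
      have hpx := abs_le.1 ((norm_fst_le p).trans hp)
      exact ⟨⟨hpx.1, hpy.1⟩, hpx.2, hpy.2⟩
    exact (setIntegral_mono_set (hcont.continuousOn.integrableOn_compact isCompact_Icc)
      (Eventually.of_forall fun p => sq_nonneg _) hsub.eventuallyLE).trans
      (hu.integral_sq_wellSpeed_le hF hc (fun x y => (hb x y).1) (neg_le_self n.cast_nonneg) hy)

lemma exists_wellSpeed_le (hF : IsDoubleWell F) (hc : 0 < c) (hu : IsTravelingWave F c u)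
    (y : ℝ) {η : ℝ} (hη : 0 < η) : ∃ R : ℝ, ∀ x, R ≤ |x| → wellSpeed F (u x y) ≤ η := by
  obtain ⟨K, hK, hb⟩ := hu.isSolution.exists_bound hF
  obtain ⟨Λ, hΛ, hlip⟩ := hF.exists_lipschitz_wellSpeed
  have habs := hu.isSolution.abs_le_one
  have hlip' : ∀ p q : ℝ × ℝ, |wellSpeed F (u p.1 p.2) - wellSpeed F (u q.1 q.2)| ≤
      Λ * (2 * K) * ‖p - q‖ := fun p q => by
    refine (hlip _ _ (habs _ _) (habs _ _)).trans ?_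
    rw [mul_assoc]
    gcongr
    exact abs_sub_le_of_partial_bound hu.isSolution.differentiable (fun x y => (hb x y).1)
      (fun x y => (hb x y).2.1) p q
  obtain ⟨R, hR⟩ := exists_abs_le_of_integrableOn_sq (S := Set.univ ×ˢ Set.Icc (y - 1) (y + 1))
    (by positivity) (MeasurableSet.univ.prod measurableSet_Icc) hlip'
    (hu.integrableOn_sq_wellSpeed hF hc (by linarith)) hη
  refine ⟨R, fun x hx => (le_abs_self _).trans
    (hR (x, y) (hx.trans (norm_fst_le (x, y))) fun p hp => ⟨trivial, ?_⟩)⟩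
  rw [← Real.closedBall_eq_Icc]
  exact (le_max_right (dist p.1 x) (dist p.2 y)).trans hp

lemma exists_integral_sq_pdy_lt (hF : IsDoubleWell F) (hc : 0 < c) (hu : IsTravelingWave F c u)
    {ε : ℝ} (hε : 0 < ε) : ∃ R : ℝ,
      ∀ T : Set (ℝ × ℝ), (∀ p ∈ T, R ≤ ‖p‖) → ∫ p in T, pdy u p.1 p.2 ^ 2 < ε := by
  have hi := hu.integrable_sq_pdy hF hc
  obtain ⟨R, hR⟩ := exists_norm_tail_le MeasurableSet.univ hi.integrableOn hε
  refine ⟨R, fun T hT => lt_of_le_of_lt ?_ hR⟩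
  have hsub : T ⊆ Set.univ \ ball 0 R := fun p hp =>
    ⟨trivial, fun hball => (mem_ball_zero_iff.1 hball).not_ge (hT p hp)⟩
  exact setIntegral_mono_set hi.integrableOn (Eventually.of_forall fun _ => sq_nonneg _)
    hsub.eventuallyLE

lemma eventually_le_of_tendsto_one_atBot (hF : IsDoubleWell F) (hc : 0 < c)
    (hu : IsTravelingWave F c u) {y₀ : ℝ} (hlim : Tendsto (fun x => u x y₀) atBot (nhds 1))
    (y : ℝ) {ε : ℝ} (hε : 0 < ε) : ∀ᶠ x in atBot, 1 - ε ≤ u x y := by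
  obtain ⟨R, hR⟩ := hu.exists_pdy_le hF hc (η := ε / (2 * (|y₀ - y| + 1))) (by positivity)
  filter_upwards [hlim.eventually (lt_mem_nhds (show 1 - ε / 2 < 1 by linarith)),
    eventually_le_atBot (-R)] with x hone hxR
  rcases le_total y₀ y with hy | hy
  · linarith [(hu.isSolution.strictMono x).monotone hy]
  · have hRx : R ≤ |x| := le_abs.2 (Or.inr (by linarith))
    have hvar := abs_sub_le_of_hasDerivAt hy (fun t => hu.isSolution.hasDerivAt_snd x t)
      (fun t _ => (hR x t (hRx.trans (norm_fst_le (x, t)))).1)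
    have hsmall : ε / (2 * (|y₀ - y| + 1)) * (y₀ - y) ≤ ε / 2 := by
      rw [div_mul_eq_mul_div, div_le_iff₀ (by positivity)]
      nlinarith [le_abs_self (y₀ - y)]
    linarith [(abs_le.1 hvar).2]

lemma integral_sq_pdy_le_of_near_one (hF : IsDoubleWell F) (hc : 0 ≤ c)
    (hu : IsTravelingWave F c u) {K δ ε a b y₁ y₂ : ℝ} (hδ : 0 ≤ δ) (hab : a ≤ b) (hy : y₁ ≤ y₂)
    (hK : ∀ y, |pdx u a y| ≤ K) (hb : ∀ y, |pdx u b y| ≤ wellSpeed F (u b y) + δ)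
    (ha : 1 - ε ≤ u a y₁) :
    c * (∫ p in Set.Icc (a, y₁) (b, y₂), pdy u p.1 p.2 ^ 2) ≤
      K * ε + (wellEnergy F 1 - wellEnergy F (1 - ε)) + 2 * δ +
        (∫ x in a..b, pdy u x y₁ ^ 2) / 2 := by
  have hK₀ : 0 ≤ K := (abs_nonneg _).trans (hK y₁)
  have hleft : ∀ s, HasDerivAt (fun s => K * s) K s := fun s => by
    simpa using (hasDerivAt_id s).const_mul K
  have hright : ∀ s, HasDerivAt (fun s => wellEnergy F s + δ * s) (wellSpeed F s + δ) s :=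
    fun s => ((hF.hasDerivAt_wellEnergy s).add ((hasDerivAt_id s).const_mul δ)).congr_deriv
      (by simp)
  have hflux := hu.energy_add_le hF hc hab hleft continuous_const hright
    (hF.continuous_wellSpeed.add continuous_const) (fun y _ => hK y) (fun y _ => hb y) hy
  have htransition := hu.isSolution.wellEnergy_sub_le hF y₁ hab
  have hmono := hF.monotone_wellEnergy ha
  have hKε : K * (1 - u a y₁) ≤ K * ε := by gcongr; linarith
  have hδ₂ : δ * (1 - u b y₁) ≤ δ * 2 := by
    gcongr
    linarith [hu.isSolution.neg_one_lt b y₁]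
  linarith

/-- Otherwise the slices far below, where the dissipation is negligible, would join `1` on the
left to the boundary value on the right; their energy then pays for all the flux, which leaves
nothing for the dissipation in a fixed rectangle. -/
lemma not_tendsto_one_atBot (hF : IsDoubleWell F) (hc : 0 < c) (hu : IsTravelingWave F c u)
    (y₀ : ℝ) : ¬ Tendsto (fun x => u x y₀) atBot (nhds 1) := by
  intro hlim
  obtain ⟨K, -, hbound⟩ := hu.isSolution.exists_bound hF
  set m := c * ∫ p in Set.Icc ((-1 : ℝ), (0 : ℝ)) (1, 1), pdy u p.1 p.2 ^ 2
  have hmpos : 0 < m :=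
    mul_pos hc (hu.isSolution.integral_sq_pdy_pos (by norm_num) zero_lt_one)
  obtain ⟨R, htail⟩ := hu.exists_integral_sq_pdy_lt hF hc hmpos
  obtain ⟨b₀, hmodica⟩ := hu.exists_abs_pdx_le hF hc (θ := m / 16) (by positivity)
  obtain ⟨ε, hε, hKε, hwell⟩ := exists_pos_mul_le_and_sub_le (δ := m / 16)
    (hF.hasDerivAt_wellEnergy 1).continuousAt K (by positivity)
  set b := max b₀ 1
  set y₁ := -|R| - 1
  obtain ⟨a, hone, ha⟩ := ((hu.eventually_le_of_tendsto_one_atBot hF hc hlim y₁ hε).and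
    (eventually_le_atBot (-1))).exists
  have hb : 1 ≤ b := le_max_right _ _
  have hab : a ≤ b := by linarith
  obtain ⟨y', hy', hslice⟩ :=
    exists_slice_le (hu.isSolution.contDiff_pdy.continuous.pow 2) hab y₁
  have hy₀ : y' ≤ 0 := by linarith [hy'.2, abs_nonneg R]
  have hsmall : ∫ x in a..b, pdy u x y' ^ 2 < m := hslice.trans_lt <| htail _ fun p hp => by
    have hp₂ : p.2 ≤ y₁ + 1 := hp.2.2
    exact (le_abs.2 (Or.inr (by linarith [le_abs_self R]))).trans (norm_snd_le p)
  have hdiss : m ≤ c * ∫ p in Set.Icc (a, y') (b, 1), pdy u p.1 p.2 ^ 2 :=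
    mul_le_mul_of_nonneg_left (hu.isSolution.integral_sq_pdy_mono isCompact_Icc
      (Set.Icc_subset_Icc (Prod.mk_le_mk.2 ⟨ha, hy₀⟩) (Prod.mk_le_mk.2 ⟨hb, le_rfl⟩))) hc.le
  have hbR : b₀ ≤ |b| := (le_max_left _ _).trans (le_abs_self b)
  have hupper := hu.integral_sq_pdy_le_of_near_one hF hc.le (δ := m / 16) (by positivity) hab
    (hy₀.trans zero_le_one) (fun y => (hbound a y).1)
    (fun y => hmodica b y (hbR.trans (norm_fst_le (b, y))))
    (hone.trans ((hu.isSolution.strictMono a).monotone hy'.1))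
  linarith

lemma tendsto_fst_atBot (hF : IsDoubleWell F) (hc : 0 < c) (hu : IsTravelingWave F c u)
    (y : ℝ) : Tendsto (fun x => u x y) atBot (nhds (-1)) := by
  refine (tendsto_or_tendsto_of_eventually_near (hu.isSolution.continuous_slice y)
    (by norm_num) fun ε hε => ?_).resolve_right (hu.not_tendsto_one_atBot hF hc y)
  obtain ⟨m, hm, hmid⟩ := hF.exists_le_wellSpeed hε
  obtain ⟨R, hR⟩ := hu.exists_wellSpeed_le hF hc y (η := m / 2) (by positivity)
  filter_upwards [eventually_le_atBot (-R)] with x hx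
  have hspeed := hR x (le_abs.2 (Or.inr (by linarith)))
  by_contra! hfar
  rw [abs_of_nonneg (by linarith [hu.isSolution.neg_one_lt x y]),
    abs_of_nonpos (by linarith [hu.isSolution.lt_one x y])] at hfar
  linarith [hmid (u x y) (by linarith) (by linarith)]

lemma tendsto_fst_atTop (hF : IsDoubleWell F) (hc : 0 < c) (hu : IsTravelingWave F c u)
    (y : ℝ) : Tendsto (fun x => u x y) atTop (nhds (-1)) := by
  simpa [Function.comp_def] using
    (hu.reflect.tendsto_fst_atBot hF hc y).comp tendsto_neg_atTop_atBot

lemma exists_forall_lt_of_isCompact (hu : IsTravelingWave F c u) {S : Set ℝ} (hS : IsCompact S)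
    {ε : ℝ} (hε : 0 < ε) : ∃ y₀ : ℝ, ∀ x ∈ S, ∀ y ≤ y₀, u x y < -1 + ε := by
  have hmono : ∀ x, Monotone (u x) := fun x => (hu.isSolution.strictMono x).monotone
  obtain ⟨y₀, hy₀⟩ := hS.elim_directed_cover (fun y => {x | u x y < -1 + ε})
    (fun y => isOpen_lt (hu.isSolution.continuous_slice y) continuous_const)
    (fun x _ => Set.mem_iUnion.2 ((hu.tendsto_snd_atBot x).eventually
      (gt_mem_nhds (lt_add_of_pos_right (-1) hε))).exists)
    (Antitone.directed_le fun y y' hy x hx => (hmono x hy).trans_lt hx)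
  exact ⟨y₀, fun x hx y hy => (hmono x hy).trans_lt (hy₀ hx)⟩

lemma exists_le_of_le (hF : IsDoubleWell F) (hc : 0 < c) (hu : IsTravelingWave F c u)
    (Y : ℝ) {ε : ℝ} (hε : 0 < ε) :
    ∃ R : ℝ, ∀ x y, y ≤ Y → R ≤ ‖(x, y)‖ → u x y ≤ -1 + ε := by
  have hlt : (-1 : ℝ) < -1 + ε := by linarith
  obtain ⟨X₁, hX₁⟩ :=
    eventually_atBot.1 ((hu.tendsto_fst_atBot hF hc Y).eventually (gt_mem_nhds hlt))
  obtain ⟨X₂, hX₂⟩ :=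
    eventually_atTop.1 ((hu.tendsto_fst_atTop hF hc Y).eventually (gt_mem_nhds hlt))
  obtain ⟨y₀, hy₀⟩ := hu.exists_forall_lt_of_isCompact (isCompact_Icc (a := X₁) (b := X₂)) hε
  refine ⟨max (max |X₁| |X₂|) (max |y₀| |Y|) + 1, fun x y hy hR => ?_⟩
  have hmono := (hu.isSolution.strictMono x).monotone hy
  rcases le_total x X₁ with hx₁ | hx₁
  · exact hmono.trans (hX₁ x hx₁).le
  rcases le_total X₂ x with hx₂ | hx₂
  · exact hmono.trans (hX₂ x hx₂).le
  refine (hy₀ x ⟨hx₁, hx₂⟩ y ?_).le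
  by_contra! hy'
  have hnorm : ‖(x, y)‖ ≤ max (max |X₁| |X₂|) (max |y₀| |Y|) :=
    max_le_max (abs_le_max_abs_abs hx₁ hx₂) (abs_le_max_abs_abs hy'.le hy)
  linarith

end IsTravelingWave

end HorizontalLimits

/-! ### The asymptotic profile equation -/

section ProfileEquation

variable {F : ℝ → ℝ} {c : ℝ} {u : ℝ → ℝ → ℝ}

/-- How far a slice of the wave is from solving `∂ₓu = √(2F(u))`, the first-order equation of an
increasing one-dimensional profile. -/
noncomputable def profileDefect (F : ℝ → ℝ) (u : ℝ → ℝ → ℝ) (x y : ℝ) : ℝ :=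
  pdx u x y - wellSpeed F (u x y)

namespace IsSolution

lemma continuous_slice_profileDefect (hF : IsDoubleWell F) (hu : IsSolution F c u) (y : ℝ) :
    Continuous fun x => profileDefect F u x y :=
  (hu.continuous_slice_pdx y).sub (hF.continuous_wellSpeed.comp (hu.continuous_slice y))

lemma abs_profileDefect_sub_le (hu : IsSolution F c u) {Λ : ℝ}
    (hΛ : ∀ s t, |s| ≤ 1 → |t| ≤ 1 → |wellSpeed F s - wellSpeed F t| ≤ Λ * |s - t|)
    (x y x' y' : ℝ) : |profileDefect F u x y - profileDefect F u x' y'| ≤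
      |pdx u x y - pdx u x' y'| + Λ * |u x y - u x' y'| :=
  calc |profileDefect F u x y - profileDefect F u x' y'|
      = |(pdx u x y - pdx u x' y') - (wellSpeed F (u x y) - wellSpeed F (u x' y'))| := by
        rw [profileDefect, profileDefect, sub_sub_sub_comm]
    _ ≤ |pdx u x y - pdx u x' y'| + |wellSpeed F (u x y) - wellSpeed F (u x' y')| := abs_sub _ _
    _ ≤ |pdx u x y - pdx u x' y'| + Λ * |u x y - u x' y'| := by
        gcongr
        exact hΛ _ _ (hu.abs_le_one _ _) (hu.abs_le_one _ _)

lemma exists_lipschitz_profileDefect_fst (hF : IsDoubleWell F) (hu : IsSolution F c u) :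
    ∃ K > 0, ∀ y x x', |profileDefect F u x y - profileDefect F u x' y| ≤ K * |x - x'| := by
  obtain ⟨K, hK, hb⟩ := hu.exists_bound hF
  obtain ⟨Λ, hΛ, hlip⟩ := hF.exists_lipschitz_wellSpeed
  refine ⟨K + Λ * K, by positivity, fun y x x' =>
    (hu.abs_profileDefect_sub_le hlip x y x' y).trans ?_⟩
  have hpdx : |pdx u x y - pdx u x' y| ≤ K * |x - x'| :=
    convex_univ.norm_image_sub_le_of_norm_hasDerivWithin_le
      (fun t _ => (hu.hasDerivAt_pdx_fst t y).hasDerivWithinAt) (fun t _ => (hb t y).2.2.1)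
      trivial trivial
  have hval : |u x y - u x' y| ≤ K * |x - x'| :=
    convex_univ.norm_image_sub_le_of_norm_hasDerivWithin_le
      (fun t _ => (hu.hasDerivAt_fst t y).hasDerivWithinAt) (fun t _ => (hb t y).1) trivial trivial
  calc |pdx u x y - pdx u x' y| + Λ * |u x y - u x' y|
      ≤ K * |x - x'| + Λ * (K * |x - x'|) := by gcongr
    _ = (K + Λ * K) * |x - x'| := by ring

end IsSolution

namespace IsTravelingWave

lemma integral_sq_profileDefect_le (hF : IsDoubleWell F) (hc : 0 ≤ c) (hu : IsTravelingWave F c u)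
    {θ a x₀ b y : ℝ} (hθ : 0 ≤ θ) (ha : ∀ y, |pdx u a y| ≤ wellSpeed F (u a y) + θ)
    (hb : ∀ y, |pdx u b y| ≤ wellSpeed F (u b y) + θ) (hax : a ≤ x₀) (hxb : x₀ ≤ b) :
    ∫ x in a..x₀, profileDefect F u x y ^ 2 ≤
      4 * (wellEnergy F 1 - wellEnergy F (u x₀ y)) + 8 * θ + ∫ x in a..b, pdy u x y ^ 2 := by
  have hsol := hu.isSolution
  have hd : ∀ s, HasDerivAt (fun s => wellEnergy F s + θ * s) (wellSpeed F s + θ) s :=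
    fun s => ((hF.hasDerivAt_wellEnergy s).add ((hasDerivAt_id s).const_mul θ)).congr_deriv
      (by simp)
  have hcont : Continuous fun s => wellSpeed F s + θ :=
    hF.continuous_wellSpeed.add continuous_const
  have hflux := hu.energy_add_le hF hc (hax.trans hxb) hd hcont hd hcont (fun t _ => ha t)
    (fun t _ => hb t) (le_refl y)
  have hdiss : 0 ≤ c * ∫ p in Set.Icc (a, y) (b, y), pdy u p.1 p.2 ^ 2 :=
    mul_nonneg hc (integral_nonneg fun p => sq_nonneg _)
  have hright := hsol.wellEnergy_sub_le hF y hxb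
  have hleft := hsol.integral_sq_pdx_sub_wellSpeed hF (one_pow 2) a x₀ y
  have henergy := (hsol.continuous_waveEnergy_slice hF y).intervalIntegrable (μ := volume)
  have hpdy : ∀ s t, IntervalIntegrable (fun x => pdy u x y ^ 2) volume s t :=
    ((hsol.continuous_slice_pdy y).pow 2).intervalIntegrable
  have hsplit := intervalIntegral.integral_add_adjacent_intervals (henergy a x₀) (henergy x₀ b)
  have hsplit' := intervalIntegral.integral_add_adjacent_intervals (hpdy a x₀) (hpdy x₀ b)
  simp only [one_mul, mul_one] at hleft
  simp only [profileDefect]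
  linarith [mul_le_mul_of_nonneg_left (hsol.neg_one_lt a y).le hθ,
    mul_le_mul_of_nonneg_left (hsol.neg_one_lt b y).le hθ]

lemma exists_slice_integral_sq_profileDefect_lt (hF : IsDoubleWell F) (hc : 0 < c)
    (hu : IsTravelingWave F c u) (x₀ : ℝ) {T : ℝ} (hT : 0 < T) :
    ∃ Y : ℝ, ∀ a x y, a ≤ x → x ≤ x₀ → Y ≤ y →
      ∃ y' ∈ Set.Icc y (y + 1), ∫ t in a..x, profileDefect F u t y' ^ 2 < T := by
  have hsol := hu.isSolution
  obtain ⟨R₁, htail⟩ := hu.exists_integral_sq_pdy_lt hF hc (ε := T / 4) (by positivity)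
  obtain ⟨R₂, hmodica⟩ := hu.exists_abs_pdx_le hF hc (θ := T / 32) (by positivity)
  have hwell : Tendsto (fun y => wellEnergy F (u x₀ y)) atTop (nhds (wellEnergy F 1)) :=
    (hF.continuous_wellEnergy.tendsto 1).comp (hu.tendsto_snd_atTop x₀)
  obtain ⟨Y, hY⟩ := eventually_atTop.1 (hwell.eventually (lt_mem_nhds
    (show wellEnergy F 1 - T / 32 < wellEnergy F 1 by linarith)))
  refine ⟨max Y R₁, fun a x y hax hx hy => ?_⟩
  set a' := min a (-R₂)
  set b := max x₀ R₂
  have ha' : a' ≤ a := min_le_left _ _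
  have hb : x₀ ≤ b := le_max_left _ _
  have haR : R₂ ≤ |a'| := le_abs.2 (Or.inr (le_neg.1 (min_le_right _ _)))
  have hbR : R₂ ≤ |b| := (le_max_right _ _).trans (le_abs_self b)
  obtain ⟨y', hy', hslice⟩ :=
    exists_slice_le (hsol.contDiff_pdy.continuous.pow 2) (show a' ≤ b by linarith) y
  have hsmall : ∫ t in a'..b, pdy u t y' ^ 2 < T / 4 := hslice.trans_lt <| htail _ fun p hp =>
    (((le_max_right _ _).trans hy).trans (hp.1.2.trans (le_abs_self p.2))).trans (norm_snd_le p)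
  have hprofile := hu.integral_sq_profileDefect_le hF hc.le (y := y') (θ := T / 32)
    (by positivity) (fun y => hmodica a' y (haR.trans (norm_fst_le (a', y))))
    (fun y => hmodica b y (hbR.trans (norm_fst_le (b, y)))) (ha'.trans (hax.trans hx)) hb
  have hmono : ∫ t in a..x, profileDefect F u t y' ^ 2 ≤
      ∫ t in a'..x₀, profileDefect F u t y' ^ 2 :=
    intervalIntegral.integral_mono_interval ha' hax hx
      (Eventually.of_forall fun t => sq_nonneg _)
      (((hsol.continuous_slice_profileDefect hF y').pow 2).intervalIntegrable _ _)
  exact ⟨y', hy', by linarith [hY y' (((le_max_left _ _).trans hy).trans hy'.1)]⟩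

lemma exists_abs_profileDefect_le_of_le (hF : IsDoubleWell F) (hc : 0 < c)
    (hu : IsTravelingWave F c u) (x₀ : ℝ) {θ : ℝ} (hθ : 0 < θ) :
    ∃ Y : ℝ, ∀ x y, x ≤ x₀ → Y ≤ y → |profileDefect F u x y| ≤ θ := by
  have hsol := hu.isSolution
  obtain ⟨K, hK, hlipx⟩ := hsol.exists_lipschitz_profileDefect_fst hF
  obtain ⟨Λ, hΛ, hlip⟩ := hF.exists_lipschitz_wellSpeed
  set η := θ / (2 + Λ) with hη
  have hηpos : 0 < η := by positivity
  have hηθ : η * (2 + Λ) = θ := by rw [hη]; field_simp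
  obtain ⟨Y, hY⟩ := hu.exists_slice_integral_sq_profileDefect_lt hF hc x₀
    (T := η ^ 3 / (8 * K)) (by positivity)
  obtain ⟨R, hdecay⟩ := hu.exists_pdy_le hF hc hηpos
  refine ⟨max Y R, fun x y hx hy => ?_⟩
  obtain ⟨y', hy', hint⟩ := hY (x - η / (2 * K)) x y (sub_le_self _ (by positivity)) hx
    ((le_max_left _ _).trans hy)
  have hdefect' : |profileDefect F u x y'| ≤ η :=
    abs_le_of_integral_sq_le (f := fun x => profileDefect F u x y') hK hηpos (hlipx y') le_rfl hint
  have hsmall : ∀ t ∈ Set.Icc y y', |pdy u x t| ≤ η ∧ |pdx (pdy u) x t| ≤ η := fun t ht =>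
    have hRt : R ≤ ‖(x, t)‖ :=
      (((le_max_right _ _).trans hy).trans (ht.1.trans (le_abs_self t))).trans (norm_snd_le (x, t))
    ⟨(hdecay x t hRt).1, (hdecay x t hRt).2.1⟩
  have hηy : η * (y' - y) ≤ η := mul_le_of_le_one_right hηpos.le (by linarith [hy'.2])
  have hpdx : |pdx u x y' - pdx u x y| ≤ η := (abs_sub_le_of_hasDerivAt hy'.1
    (fun t => hsol.hasDerivAt_pdx_snd x t) fun t ht => (hsmall t ht).2).trans hηy
  have hval : |u x y' - u x y| ≤ η := (abs_sub_le_of_hasDerivAt hy'.1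
    (fun t => hsol.hasDerivAt_snd x t) fun t ht => (hsmall t ht).1).trans hηy
  calc |profileDefect F u x y|
      ≤ |profileDefect F u x y'| + |profileDefect F u x y' - profileDefect F u x y| := by
        linarith [abs_sub_abs_le_abs_sub (profileDefect F u x y) (profileDefect F u x y'),
          abs_sub_comm (profileDefect F u x y) (profileDefect F u x y')]
    _ ≤ η + (η + Λ * η) := by
        refine add_le_add hdefect' ((hsol.abs_profileDefect_sub_le hlip x y' x y).trans ?_)
        gcongr
    _ = θ := by rw [← hηθ]; ring

lemma exists_abs_profileDefect_le (hF : IsDoubleWell F) (hc : 0 < c) (hu : IsTravelingWave F c u)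
    (x₀ : ℝ) {θ : ℝ} (hθ : 0 < θ) :
    ∃ R : ℝ, ∀ x y, x ≤ x₀ → R ≤ ‖(x, y)‖ → |profileDefect F u x y| ≤ θ := by
  obtain ⟨Y, hY⟩ := hu.exists_abs_profileDefect_le_of_le hF hc x₀ hθ
  obtain ⟨Λ, hΛ, hlip⟩ := hF.exists_lipschitz_wellSpeed
  obtain ⟨R₁, hlow⟩ := hu.exists_le_of_le hF hc Y (ε := θ / (4 * Λ)) (by positivity)
  obtain ⟨R₂, hmodica⟩ := hu.exists_abs_pdx_le hF hc (θ := θ / 2) (by positivity)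
  refine ⟨max R₁ R₂, fun x y hx hR => ?_⟩
  rcases le_total Y y with hy | hy
  · exact hY x y hx hy
  · have hval := hlow x y hy ((le_max_left _ _).trans hR)
    have hpdx := abs_le.1 (hmodica x y ((le_max_right _ _).trans hR))
    have hspeed := hlip (u x y) (-1) (hu.isSolution.abs_le_one x y) (by norm_num)
    rw [hF.wellSpeed_neg_one, sub_zero, abs_of_nonneg (wellSpeed_nonneg F _),
      abs_of_nonneg (by linarith [hu.isSolution.neg_one_lt x y])] at hspeed
    have hsmall : wellSpeed F (u x y) ≤ θ / 4 :=
      calc wellSpeed F (u x y) ≤ Λ * (u x y - -1) := hspeed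
        _ ≤ Λ * (θ / (4 * Λ)) := by gcongr; linarith
        _ = θ / 4 := by field_simp
    rw [profileDefect, abs_le]
    constructor <;> linarith [wellSpeed_nonneg F (u x y)]

end IsTravelingWave

end ProfileEquation

/-! ### Ordering of a slice and its reflection -/

section SliceOrdering

variable {F : ℝ → ℝ} {c : ℝ} {u : ℝ → ℝ → ℝ}

/-- `f`, with derivative `f'`, solves the equation `f' = -√(2F(f))` of a decreasing
one-dimensional profile on `[a, ∞)` up to an error `θ`. -/
structure IsApproxProfile (F : ℝ → ℝ) (θ a : ℝ) (f f' : ℝ → ℝ) : Prop where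
  hasDerivAt (x : ℝ) : HasDerivAt f (f' x) x
  abs_le_one (x : ℝ) : |f x| ≤ 1
  abs_add_le {x : ℝ} (hx : a ≤ x) : |f' x + wellSpeed F (f x)| ≤ θ

namespace IsApproxProfile

variable {θ a : ℝ} {f f' g g' : ℝ → ℝ}

lemma mono (hf : IsApproxProfile F θ a f f') {θ' a' : ℝ} (hθ : θ ≤ θ') (ha : a ≤ a') :
    IsApproxProfile F θ' a' f f' :=
  ⟨hf.hasDerivAt, hf.abs_le_one, fun hx => (hf.abs_add_le (ha.trans hx)).trans hθ⟩

lemma le_sub_mul (hf : IsApproxProfile F θ a f f') {v k b : ℝ} (ha : f a ≤ k)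
    (hspeed : ∀ t ∈ Set.Ico a b, f t = k - v * (t - a) → θ + v < wellSpeed F (f t)) {x : ℝ}
    (hx : x ∈ Set.Icc a b) : f x ≤ k - v * (x - a) :=
  image_le_of_deriv_right_lt_deriv_boundary (B' := fun _ => -v)
    (fun t _ => (hf.hasDerivAt t).continuousAt.continuousWithinAt)
    (fun t _ => (hf.hasDerivAt t).hasDerivWithinAt) (by simpa using ha)
    (fun t => ((((hasDerivAt_id t).sub_const a).const_mul v).const_sub k).congr_deriv (by simp))
    (fun t ht hft => by
      linarith [hspeed t ht hft, (abs_le.1 (hf.abs_add_le ht.1)).2]) hx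

/-- Both slices are solutions of the same Lipschitz equation up to `θ`: Grönwall. -/
lemma abs_sub_le (hf : IsApproxProfile F θ a f f') (hg : IsApproxProfile F θ a g g') {Λ : ℝ}
    (hΛ : 0 < Λ)
    (hlip : ∀ s t, |s| ≤ 1 → |t| ≤ 1 → |wellSpeed F s - wellSpeed F t| ≤ Λ * |s - t|)
    {z x : ℝ} (haz : a ≤ z) (hzx : z ≤ x) (hz : f z = g z) :
    |f x - g x| ≤ 2 * θ / Λ * (exp (Λ * (x - z)) - 1) := by
  have hd : ∀ t, HasDerivAt (fun t => f t - g t) (f' t - g' t) t :=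
    fun t => (hf.hasDerivAt t).sub (hg.hasDerivAt t)
  have hgronwall := norm_le_gronwallBound_of_norm_deriv_right_le (δ := 0) (K := Λ) (ε := 2 * θ)
    (fun t _ => (hd t).continuousAt.continuousWithinAt) (fun t _ => (hd t).hasDerivWithinAt)
    (by rw [hz, sub_self, norm_zero]) (fun t ht => ?_) x ⟨hzx, le_rfl⟩
  · simpa only [gronwallBound_of_K_ne_0 hΛ.ne', zero_mul, zero_add, Real.norm_eq_abs]
      using hgronwall
  · have hft := abs_le.1 (hf.abs_add_le (haz.trans ht.1))
    have hgt := abs_le.1 (hg.abs_add_le (haz.trans ht.1))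
    have hspeed := abs_le.1 (hlip (f t) (g t) (hf.abs_le_one t) (hg.abs_le_one t))
    rw [Real.norm_eq_abs, Real.norm_eq_abs, abs_le]
    constructor <;> linarith

end IsApproxProfile

namespace IsDoubleWell

lemma exists_forall_isApproxProfile_le (hF : IsDoubleWell F) {ε : ℝ} (hε : 0 < ε) (hε₁ : ε < 1) :
    ∃ θ > 0, ∃ l > 0, ∀ {f f' : ℝ → ℝ} {a : ℝ}, IsApproxProfile F θ a f f' → f a ≤ 1 - ε →
      ∀ {x}, a + l ≤ x → f x ≤ -1 + ε := by
  obtain ⟨m, hm, hmid⟩ := hF.exists_le_wellSpeed hε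
  set l := (2 - 2 * ε) / (m / 4) with hl
  have hlpos : 0 < l := div_pos (by linarith) (by positivity)
  have hml : m / 4 * l = 2 - 2 * ε := by rw [hl]; field_simp
  refine ⟨m / 2, by positivity, l, hlpos, fun {f f' a} hf ha x hx => ?_⟩
  have hdescent : f (a + l) ≤ 1 - ε - m / 4 * (a + l - a) :=
    hf.le_sub_mul ha (fun t ht hft => by
      have hupper : m / 4 * (t - a) ≤ m / 4 * l := by gcongr; linarith [ht.2]
      have hlower : 0 ≤ m / 4 * (t - a) := mul_nonneg (by positivity) (by linarith [ht.1])
      linarith [hmid (f t) (by linarith) (by linarith)]) ⟨by linarith, le_rfl⟩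
  have hstay := (hf.mono le_rfl (show a ≤ a + l by linarith)).le_sub_mul (v := 0)
    (show f (a + l) ≤ -1 + ε by linarith) (fun t _ hft => by
      linarith [hmid (f t) (by linarith) (by linarith)]) ⟨hx, le_refl x⟩
  linarith

/-- Two approximate profiles can cross by `ε` only before the first is close to `-1`, hence within
a bounded distance, and over such a distance Grönwall's inequality forbids it. -/
lemma exists_forall_not_crossing (hF : IsDoubleWell F) {ε : ℝ} (hε : 0 < ε) (hε₁ : ε < 1) :
    ∃ θ > 0, ∀ {f f' g g' : ℝ → ℝ} {x₁ x₂ : ℝ}, IsApproxProfile F θ x₁ f f' →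
      IsApproxProfile F θ x₁ g g' → x₁ ≤ x₂ → f x₁ + ε < g x₁ → f x₂ ≤ g x₂ + ε := by
  obtain ⟨θ₁, hθ₁, l, _, hdecay⟩ := hF.exists_forall_isApproxProfile_le hε hε₁
  obtain ⟨Λ, hΛ, hlip⟩ := hF.exists_lipschitz_wellSpeed
  set θ₂ := ε * Λ / (2 * exp (Λ * l)) with hθ₂
  refine ⟨min θ₁ θ₂, by positivity, fun {f f' g g' x₁ x₂} hf hg hx hx₁ => ?_⟩
  by_contra! hx₂
  have hnear : x₂ < x₁ + l := by
    by_contra! hfar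
    have hlow := hdecay (hf.mono (min_le_left _ _) le_rfl)
      (by linarith [(abs_le.1 (hg.abs_le_one x₁)).2]) hfar
    linarith [(abs_le.1 (hg.abs_le_one x₂)).1]
  obtain ⟨z, hz, hfz⟩ := intermediate_value_Icc hx
    (fun t _ => ((hf.hasDerivAt t).sub (hg.hasDerivAt t)).continuousAt.continuousWithinAt)
    (show (0 : ℝ) ∈ Set.Icc (f x₁ - g x₁) (f x₂ - g x₂) from ⟨by linarith, by linarith⟩)
  have hgronwall := (hf.mono (min_le_right _ _) le_rfl).abs_sub_le
    (hg.mono (min_le_right _ _) le_rfl) hΛ hlip hz.1 hz.2 (sub_eq_zero.1 hfz)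
  have hbound : 2 * θ₂ / Λ * (exp (Λ * (x₂ - z)) - 1) ≤ ε :=
    calc 2 * θ₂ / Λ * (exp (Λ * (x₂ - z)) - 1) ≤ 2 * θ₂ / Λ * exp (Λ * l) := by
          gcongr
          exact (sub_le_self _ zero_le_one).trans
            (exp_le_exp.2 (mul_le_mul_of_nonneg_left (by linarith [hz.1]) hΛ.le))
      _ = ε := by rw [hθ₂]; field_simp
  linarith [le_abs_self (f x₂ - g x₂)]

lemma exists_forall_isApproxProfile_le_or_ge (hF : IsDoubleWell F) {ε : ℝ} (hε : 0 < ε)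
    (hε₁ : ε < 1) : ∃ θ > 0, ∀ {f f' g g' : ℝ → ℝ} {a : ℝ}, IsApproxProfile F θ a f f' →
      IsApproxProfile F θ a g g' →
        (∀ x, a ≤ x → f x ≤ g x + ε) ∨ (∀ x, a ≤ x → g x ≤ f x + ε) := by
  obtain ⟨θ, hθ, hcross⟩ := hF.exists_forall_not_crossing hε hε₁
  refine ⟨θ, hθ, fun {f f' g g' a} hf hg => ?_⟩
  by_contra! hcon
  obtain ⟨⟨x₂, hx₂, hgf⟩, x₁, hx₁, hfg⟩ := hcon
  rcases le_total x₁ x₂ with hx | hx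
  · exact (hcross (hf.mono le_rfl hx₁) (hg.mono le_rfl hx₁) hx hfg).not_gt hgf
  · exact (hcross (hg.mono le_rfl hx₂) (hf.mono le_rfl hx₂) hx hgf).not_gt hfg

end IsDoubleWell

namespace IsTravelingWave

lemma exists_isApproxProfile_reflected_slice (hF : IsDoubleWell F) (hc : 0 < c)
    (hu : IsTravelingWave F c u) (k a : ℝ) {θ : ℝ} (hθ : 0 < θ) :
    ∃ Y : ℝ, ∀ y, Y ≤ y →
      IsApproxProfile F θ a (fun x => u (k - x) y) (fun x => -pdx u (k - x) y) := by
  obtain ⟨Y, hY⟩ := hu.exists_abs_profileDefect_le_of_le hF hc (k - a) hθ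
  refine ⟨Y, fun y hy => ⟨fun x => ?_, fun x => hu.isSolution.abs_le_one _ y, fun {x} hx => ?_⟩⟩
  · exact ((hu.isSolution.hasDerivAt_fst (k - x) y).comp x
      ((hasDerivAt_id x).const_sub k)).congr_deriv (by simp)
  · rw [neg_add_eq_sub, abs_sub_comm]
    exact hY (k - x) y (by linarith) hy

lemma frequently_le_or_frequently_ge (hF : IsDoubleWell F) (hc : 0 < c)
    (hu : IsTravelingWave F c u) (l : ℝ) :
    (∀ ε > 0, ∀ Y : ℝ, ∃ y ≥ Y, ∀ x ≥ l, u x y ≤ u (2 * l - x) y + ε) ∨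
      (∀ ε > 0, ∀ Y : ℝ, ∃ y ≥ Y, ∀ x ≥ l, u (2 * l - x) y ≤ u x y + ε) := by
  by_contra! hcon
  obtain ⟨⟨ε₁, hε₁, Y₁, hgt₁⟩, ε₂, hε₂, Y₂, hgt₂⟩ := hcon
  set ε := min (min ε₁ ε₂) (1 / 2)
  have hle : ε ≤ min ε₁ ε₂ := min_le_left _ _
  obtain ⟨θ, hθ, horder⟩ := hF.exists_forall_isApproxProfile_le_or_ge (ε := ε) (by positivity)
    ((min_le_right _ _).trans_lt (by norm_num))
  obtain ⟨Y₃, hreflected⟩ := hu.exists_isApproxProfile_reflected_slice hF hc (2 * l) l hθ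
  obtain ⟨Y₄, hslice⟩ := hu.reflect.exists_isApproxProfile_reflected_slice hF hc 0 l hθ
  simp only [zero_sub, neg_neg] at hslice
  set y := max (max Y₁ Y₂) (max Y₃ Y₄)
  have hy₁ : max Y₁ Y₂ ≤ y := le_max_left _ _
  have hy₂ : max Y₃ Y₄ ≤ y := le_max_right _ _
  rcases horder (hslice y ((le_max_right _ _).trans hy₂))
    (hreflected y ((le_max_left _ _).trans hy₂)) with h | h
  · obtain ⟨x, hx, hlt⟩ := hgt₁ y ((le_max_left _ _).trans hy₁)
    linarith [h x hx, hle.trans (min_le_left _ _)]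
  · obtain ⟨x, hx, hlt⟩ := hgt₂ y ((le_max_right _ _).trans hy₁)
    linarith [h x hx, hle.trans (min_le_right _ _)]

end IsTravelingWave

end SliceOrdering

/-! ### The strong maximum principle -/

section DriftLaplacian

variable {v w : ℝ → ℝ → ℝ} {x y : ℝ}

/-- The linear part `Δw + c ∂w/∂y` of the traveling wave equation. -/
noncomputable def driftLaplacian (c : ℝ) (w : ℝ → ℝ → ℝ) (x y : ℝ) : ℝ :=
  pdxx w x y + pdyy w x y + c * pdy w x y

lemma driftLaplacian_eq_of_hasDerivAt (c : ℝ) {w₁ w₂ : ℝ → ℝ} {a b : ℝ}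
    (hx : ∀ t, HasDerivAt (fun t => w t y) (w₁ t) t)
    (hy : ∀ t, HasDerivAt (fun t => w x t) (w₂ t) t) (hxx : HasDerivAt w₁ a x)
    (hyy : HasDerivAt w₂ b y) : driftLaplacian c w x y = a + b + c * w₂ y := by
  have hpdx : (fun t => pdx w t y) = w₁ := funext fun t => (hx t).deriv
  have hpdy : (fun t => pdy w x t) = w₂ := funext fun t => (hy t).deriv
  rw [driftLaplacian, pdxx, pdyy, hpdx, hpdy, hxx.deriv, hyy.deriv, ← hpdy]

lemma driftLaplacian_const_mul (c η : ℝ) (w : ℝ → ℝ → ℝ) (x y : ℝ) :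
    driftLaplacian c (fun x y => η * w x y) x y = η * driftLaplacian c w x y := by
  simp only [driftLaplacian, pdxx, pdyy, pdx, pdy, deriv_const_mul_field]
  ring

lemma driftLaplacian_le_of_isLocalMin (c : ℝ) (hw : ContDiff ℝ 2 (fun p : ℝ × ℝ => w p.1 p.2))
    (hv : ContDiff ℝ 2 (fun p : ℝ × ℝ => v p.1 p.2))
    (hmin : IsLocalMin (fun p : ℝ × ℝ => w p.1 p.2 - v p.1 p.2) (x, y)) :
    driftLaplacian c v x y ≤ driftLaplacian c w x y := by
  have hdw := hw.differentiable (by simp)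
  have hdv := hv.differentiable (by simp)
  have hxmin : IsLocalMin (fun t => w t y - v t y) x :=
    (show ContinuousAt (fun t : ℝ => (t, y)) x by fun_prop).eventually hmin
  have hymin : IsLocalMin (fun t => w x t - v x t) y :=
    (show ContinuousAt (fun t : ℝ => (x, t)) y by fun_prop).eventually hmin
  have hdy : ∀ t, HasDerivAt (fun t => w x t - v x t) (pdy w x t - pdy v x t) t :=
    fun t => (hasDerivAt_pdy hdw x t).sub (hasDerivAt_pdy hdv x t)
  have hxx : 0 ≤ pdxx w x y - pdxx v x y := nonneg_of_isLocalMin_of_hasDerivAt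
    (fun t => (hasDerivAt_pdx hdw t y).sub (hasDerivAt_pdx hdv t y))
    ((hasDerivAt_pdx ((contDiff_pdx (m := 1) hw (by norm_num)).differentiable (by simp)) x y).sub
      (hasDerivAt_pdx ((contDiff_pdx (m := 1) hv (by norm_num)).differentiable (by simp)) x y))
    hxmin
  have hyy : 0 ≤ pdyy w x y - pdyy v x y := nonneg_of_isLocalMin_of_hasDerivAt hdy
    ((hasDerivAt_pdy ((contDiff_pdy (m := 1) hw (by norm_num)).differentiable (by simp)) x y).sub
      (hasDerivAt_pdy ((contDiff_pdy (m := 1) hv (by norm_num)).differentiable (by simp)) x y))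
    hymin
  have hdrift : pdy w x y = pdy v x y := sub_eq_zero.1 (hymin.hasDerivAt_eq_zero (hdy y))
  rw [driftLaplacian, driftLaplacian, hdrift]
  linarith

end DriftLaplacian

section StrongMaximumPrinciple

variable {w : ℝ → ℝ → ℝ} {c M : ℝ}

/-- The square of the Euclidean distance in the plane; `dist` on `ℝ × ℝ` is the sup distance. -/
def sqDist (p q : ℝ × ℝ) : ℝ := (p.1 - q.1) ^ 2 + (p.2 - q.2) ^ 2

lemma sqDist_nonneg (p q : ℝ × ℝ) : 0 ≤ sqDist p q := by
  unfold sqDist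
  positivity

lemma sqDist_self (p : ℝ × ℝ) : sqDist p p = 0 := by simp [sqDist]

lemma sqDist_pos {p q : ℝ × ℝ} (h : p ≠ q) : 0 < sqDist p q := by
  refine (sqDist_nonneg p q).lt_of_ne' fun hzero => h ?_
  obtain ⟨hfst, hsnd⟩ := (add_eq_zero_iff_of_nonneg (sq_nonneg _) (sq_nonneg _)).1 hzero
  exact Prod.ext (sub_eq_zero.1 (pow_eq_zero_iff two_ne_zero |>.1 hfst))
    (sub_eq_zero.1 (pow_eq_zero_iff two_ne_zero |>.1 hsnd))

lemma continuous_sqDist (q : ℝ × ℝ) : Continuous fun p => sqDist p q := by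
  unfold sqDist
  fun_prop

lemma dist_le_of_sqDist_le {p q : ℝ × ℝ} {r : ℝ} (hr : 0 ≤ r) (h : sqDist p q ≤ r ^ 2) :
    dist p q ≤ r := by
  rw [Prod.dist_eq, Real.dist_eq, Real.dist_eq]
  unfold sqDist at h
  exact max_le (abs_le_of_sq_le_sq (by linarith [sq_nonneg (p.2 - q.2)]) hr)
    (abs_le_of_sq_le_sq (by linarith [sq_nonneg (p.1 - q.1)]) hr)

lemma sqDist_le_two_mul_sq_dist (p q : ℝ × ℝ) : sqDist p q ≤ 2 * dist p q ^ 2 := by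
  have hfst : |p.1 - q.1| ≤ dist p q := le_max_left _ _
  have hsnd : |p.2 - q.2| ≤ dist p q := le_max_right _ _
  unfold sqDist
  linarith [sq_le_sq' (abs_le.1 hfst).1 (abs_le.1 hfst).2,
    sq_le_sq' (abs_le.1 hsnd).1 (abs_le.1 hsnd).2]

lemma isCompact_sqDist_le (q : ℝ × ℝ) {r : ℝ} (hr : 0 ≤ r) :
    IsCompact {p : ℝ × ℝ | sqDist p q ≤ r ^ 2} :=
  (isCompact_closedBall q r).of_isClosed_subset (isClosed_le (continuous_sqDist q)
    continuous_const) fun _ hp => mem_closedBall.2 (dist_le_of_sqDist_le hr hp)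

lemma sqDist_le_two_mul_add (p q z : ℝ × ℝ) :
    sqDist p q ≤ 2 * (sqDist p z + sqDist z q) := by
  unfold sqDist
  linarith [sq_nonneg (p.1 - z.1 - (z.1 - q.1)), sq_nonneg (p.2 - z.2 - (z.2 - q.2))]

lemma sqDist_add_sqDist_eq (p q z : ℝ × ℝ) :
    sqDist p q + sqDist p z =
      2 * sqDist p ((q.1 + z.1) / 2, (q.2 + z.2) / 2) + sqDist z q / 2 := by
  unfold sqDist
  ring

lemma driftLaplacian_exp_sqDist (c α k : ℝ) (q : ℝ × ℝ) (x y : ℝ) :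
    driftLaplacian c (fun x y => exp (-α * sqDist (x, y) q) - k) x y =
      (4 * α ^ 2 * sqDist (x, y) q - 4 * α - c * (2 * α * (y - q.2))) *
        exp (-α * sqDist (x, y) q) := by
  have hx : ∀ t, HasDerivAt (fun t => exp (-α * sqDist (t, y) q))
      (-2 * α * (t - q.1) * exp (-α * sqDist (t, y) q)) t := fun t =>
    (((((hasDerivAt_id t).sub_const q.1).pow 2).add_const
      ((y - q.2) ^ 2)).const_mul (-α)).exp.congr_deriv (by simp [sqDist]; ring)
  have hy : ∀ t, HasDerivAt (fun t => exp (-α * sqDist (x, t) q))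
      (-2 * α * (t - q.2) * exp (-α * sqDist (x, t) q)) t := fun t =>
    (((((hasDerivAt_id t).sub_const q.2).pow 2).const_add
      ((x - q.1) ^ 2)).const_mul (-α)).exp.congr_deriv (by simp [sqDist]; ring)
  refine (driftLaplacian_eq_of_hasDerivAt (w := fun x y => exp (-α * sqDist (x, y) q) - k) c
    (fun t => (hx t).sub_const k) (fun t => (hy t).sub_const k)
    ((((hasDerivAt_id x).sub_const q.1).const_mul (-2 * α)).mul (hx x))
    ((((hasDerivAt_id y).sub_const q.2).const_mul (-2 * α)).mul (hy y))).trans ?_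
  simp only [sqDist, id]
  ring

/-- Hopf's barrier `exp (-α |p - q|²) - exp (-α ρ²)` for large `α`. -/
lemma exists_hopf_barrier (c : ℝ) (hM : 0 ≤ M) (q : ℝ × ℝ) {ρ : ℝ} (hρ : 0 < ρ) :
    ∃ h : ℝ → ℝ → ℝ, ContDiff ℝ 2 (fun p : ℝ × ℝ => h p.1 p.2) ∧ (∀ x y, h x y ≤ 1) ∧
      (∀ x y, sqDist (x, y) q = ρ ^ 2 → h x y = 0) ∧
      (∀ x y, ρ ^ 2 < sqDist (x, y) q → h x y < 0) ∧
      ∀ x y, ρ ^ 2 / 4 ≤ sqDist (x, y) q → |y - q.2| ≤ 2 * ρ →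
        M * h x y < driftLaplacian c h x y := by
  set α := (4 + 4 * |c| * ρ + M) / ρ ^ 2 + 1 with hα
  have hα_one : 1 ≤ α := le_add_of_nonneg_left (by positivity)
  have hαρ : 4 + 4 * |c| * ρ + M < α * ρ ^ 2 := by
    rw [hα, add_mul, div_mul_cancel₀ _ (by positivity)]
    exact lt_add_of_pos_right _ (by positivity)
  refine ⟨fun x y => exp (-α * sqDist (x, y) q) - exp (-α * ρ ^ 2), by unfold sqDist; fun_prop,
    fun x y => ?_, fun x y hxy => by simp [hxy], fun x y hxy => ?_, fun x y hfar hy => ?_⟩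
  · have hle : exp (-α * sqDist (x, y) q) ≤ 1 :=
      exp_le_one_iff.2 (mul_nonpos_of_nonpos_of_nonneg (by linarith) (sqDist_nonneg _ _))
    linarith [exp_pos (-α * ρ ^ 2)]
  · exact sub_neg.2 (exp_lt_exp.2 (by nlinarith))
  rw [driftLaplacian_exp_sqDist]
  have hcoeff : M < 4 * α ^ 2 * sqDist (x, y) q - 4 * α - c * (2 * α * (y - q.2)) := by
    have hmain : 4 * α ^ 2 * (ρ ^ 2 / 4) ≤ 4 * α ^ 2 * sqDist (x, y) q := by gcongr
    have hdrift : c * (2 * α * (y - q.2)) ≤ |c| * (2 * α * (2 * ρ)) := by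
      refine (le_abs_self _).trans ?_
      rw [abs_mul, abs_mul, abs_of_pos (show 0 < 2 * α by linarith)]
      gcongr
    have hscaled : α * (4 + 4 * |c| * ρ + M) < α * (α * ρ ^ 2) := by gcongr
    linarith [le_mul_of_one_le_left hM hα_one]
  calc M * (exp (-α * sqDist (x, y) q) - exp (-α * ρ ^ 2))
      ≤ M * exp (-α * sqDist (x, y) q) := by
        gcongr
        exact sub_le_self _ (exp_pos _).le
    _ < _ := mul_lt_mul_of_pos_right hcoeff (exp_pos _)

/-- Hopf's lemma: otherwise `w` minus a small multiple of Hopf's barrier would attain its minimum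
over a disc around `z` in the interior. -/
lemma ne_zero_of_pos_on_disc (hw : ContDiff ℝ 2 fun p : ℝ × ℝ => w p.1 p.2)
    (hM : 0 ≤ M) {q z : ℝ × ℝ} {ρ : ℝ} (hρ : 0 < ρ) (hz : sqDist z q = ρ ^ 2)
    (hpos : ∀ p, sqDist p q ≤ ρ ^ 2 → p ≠ z → 0 < w p.1 p.2)
    (hnonneg : ∀ p, sqDist p z ≤ (ρ / 2) ^ 2 → 0 ≤ w p.1 p.2)
    (hsuper : ∀ p, sqDist p z ≤ (ρ / 2) ^ 2 → driftLaplacian c w p.1 p.2 ≤ M * w p.1 p.2) :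
    w z.1 z.2 ≠ 0 := by
  intro hwz
  obtain ⟨h, hh, hh_le, hh_zero, hh_neg, hh_sub⟩ := exists_hopf_barrier c hM q hρ
  have hcap : IsCompact ({p | sqDist p q ≤ ρ ^ 2} ∩ {p | sqDist p z = (ρ / 2) ^ 2}) :=
    (isCompact_sqDist_le q hρ.le).inter_right
      (isClosed_eq (continuous_sqDist z) continuous_const)
  obtain ⟨m, hm, hmcap⟩ := hcap.exists_forall_le' hw.continuous.continuousOn fun p hp =>
    hpos p hp.1 fun hpz => by
      have hcircle := hp.2
      rw [hpz, Set.mem_ofPred_eq, sqDist_self] at hcircle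
      exact (by positivity : (ρ / 2) ^ 2 ≠ 0) hcircle.symm
  have hz_mem : z ∈ {p | sqDist p z ≤ (ρ / 2) ^ 2} := by
    rw [Set.mem_ofPred_eq, sqDist_self]
    positivity
  obtain ⟨p, hp, hmin⟩ := (isCompact_sqDist_le z (by positivity)).exists_isMinOn
    ⟨z, hz_mem⟩ (hw.continuous.sub (hh.continuous.const_mul (m / 2))).continuousOn
  have hw_le : w p.1 p.2 ≤ m / 2 * h p.1 p.2 := by
    simpa [hh_zero z.1 z.2 hz, hwz] using hmin hz_mem
  have hinterior : sqDist p z < (ρ / 2) ^ 2 := by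
    refine hp.lt_of_ne fun hcircle => ?_
    rcases le_or_gt (sqDist p q) (ρ ^ 2) with hpq | hpq
    · linarith [hmcap p ⟨hpq, hcircle⟩,
        mul_le_mul_of_nonneg_left (hh_le p.1 p.2) (half_pos hm).le]
    · linarith [hnonneg p hp, mul_neg_of_pos_of_neg (half_pos hm) (hh_neg p.1 p.2 hpq)]
  have hlocal : IsLocalMin (fun p : ℝ × ℝ => w p.1 p.2 - m / 2 * h p.1 p.2) p :=
    hmin.isLocalMin (Filter.mem_of_superset
      ((isOpen_lt (continuous_sqDist z) continuous_const).mem_nhds hinterior) fun p' hp' =>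
      (show sqDist p' z < (ρ / 2) ^ 2 from hp').le)
  have hcompare := driftLaplacian_le_of_isLocalMin (v := fun x y => m / 2 * h x y) c hw
    (contDiff_const.mul hh) hlocal
  rw [driftLaplacian_const_mul] at hcompare
  have hfar : ρ ^ 2 / 4 ≤ sqDist p q := by
    unfold sqDist at hz hinterior ⊢
    linarith [sq_nonneg (z.1 - q.1 - 2 * (z.1 - p.1)), sq_nonneg (z.2 - q.2 - 2 * (z.2 - p.2))]
  have hnear : |p.2 - q.2| ≤ 2 * ρ := by
    have hsum := sqDist_le_two_mul_add p q z
    refine (le_max_right _ _).trans (dist_le_of_sqDist_le (p := p) (q := q) (by positivity) ?_)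
    linarith [sq_nonneg ρ]
  linarith [hsuper p hp, mul_le_mul_of_nonneg_left hw_le hM,
    mul_lt_mul_of_pos_left (hh_sub p.1 p.2 hfar hnear) (half_pos hm)]

/-- Hopf's lemma is applied in the disc with diameter `[q, z]`, where `z` is a zero closest
to `q`. -/
lemma eq_zero_of_sqDist_le (hw : ContDiff ℝ 2 fun p : ℝ × ℝ => w p.1 p.2) (hM : 0 ≤ M)
    {p₀ q : ℝ × ℝ} {r : ℝ} (hr : 0 ≤ r)
    (hnonneg : ∀ p, sqDist p q ≤ (2 * r) ^ 2 → 0 ≤ w p.1 p.2)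
    (hsuper : ∀ p, sqDist p q ≤ (2 * r) ^ 2 → driftLaplacian c w p.1 p.2 ≤ M * w p.1 p.2)
    (hp₀ : sqDist p₀ q ≤ r ^ 2) (hwp₀ : w p₀.1 p₀.2 = 0) : w q.1 q.2 = 0 := by
  by_contra hne
  have hzeros : IsCompact ({p | sqDist p q ≤ r ^ 2} ∩ {p : ℝ × ℝ | w p.1 p.2 = 0}) :=
    (isCompact_sqDist_le q hr).inter_right (isClosed_eq hw.continuous continuous_const)
  obtain ⟨z, ⟨hzr, hwz⟩, hclosest⟩ := hzeros.exists_isMinOn ⟨p₀, hp₀, hwp₀⟩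
    (continuous_sqDist q).continuousOn
  rw [Set.mem_ofPred_eq] at hzr hwz
  have hzq : z ≠ q := fun h => hne (h ▸ hwz)
  set ρ := √(sqDist z q) / 2
  have hρpos : 0 < ρ := half_pos (Real.sqrt_pos.2 (sqDist_pos hzq))
  have hρ : ρ ^ 2 = sqDist z q / 4 := by
    rw [div_pow, Real.sq_sqrt (sqDist_nonneg z q)]
    norm_num
  have hnear : ∀ p, sqDist p z ≤ (ρ / 2) ^ 2 → sqDist p q ≤ (2 * r) ^ 2 := fun p hp => by
    linarith [sqDist_le_two_mul_add p q z, sq_nonneg r]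
  refine ne_zero_of_pos_on_disc (q := ((q.1 + z.1) / 2, (q.2 + z.2) / 2)) hw hM hρpos ?_ ?_
    (fun p hp => hnonneg p (hnear p hp)) (fun p hp => hsuper p (hnear p hp)) hwz
  · linarith [sqDist_add_sqDist_eq z q z, sqDist_self z]
  · intro p hp hpz
    have hcloser : sqDist p q < sqDist z q := by
      linarith [sqDist_add_sqDist_eq p q z, sqDist_pos hpz]
    refine (hnonneg p (by nlinarith)).lt_of_ne' fun hzero => ?_
    exact hcloser.not_ge (hclosest ⟨hcloser.le.trans hzr, hzero⟩)

lemma eq_zero_of_nonneg_of_eq_zero (hw : ContDiff ℝ 2 fun p : ℝ × ℝ => w p.1 p.2) (hM : 0 ≤ M)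
    {Ω : Set (ℝ × ℝ)} (hΩ : IsOpen Ω) (hconn : IsPreconnected Ω)
    (hnonneg : ∀ p ∈ Ω, 0 ≤ w p.1 p.2)
    (hsuper : ∀ p ∈ Ω, driftLaplacian c w p.1 p.2 ≤ M * w p.1 p.2)
    {p₀ p : ℝ × ℝ} (hp₀ : p₀ ∈ Ω) (hwp₀ : w p₀.1 p₀.2 = 0) (hp : p ∈ Ω) : w p.1 p.2 = 0 := by
  have hopen : IsOpen (Ω ∩ {p : ℝ × ℝ | w p.1 p.2 = 0}) := by
    rw [Metric.isOpen_iff] at hΩ ⊢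
    rintro p₁ ⟨hp₁, hwp₁⟩
    obtain ⟨ε, hε, hball⟩ := hΩ p₁ hp₁
    refine ⟨ε / 8, by positivity, fun q hq => ?_⟩
    have hdisc : ∀ p, sqDist p q ≤ (2 * (ε / 4)) ^ 2 → p ∈ Ω := fun p hp => hball <| by
      have hpq := dist_le_of_sqDist_le (by positivity) hp
      rw [mem_ball] at hq ⊢
      linarith [dist_triangle p q p₁]
    have hp₁q : sqDist p₁ q ≤ (ε / 4) ^ 2 := by
      have hdist : dist p₁ q ≤ ε / 8 := by rw [dist_comm]; exact (mem_ball.1 hq).le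
      have hsq := pow_le_pow_left₀ dist_nonneg hdist 2
      linarith [sqDist_le_two_mul_sq_dist p₁ q, sq_nonneg ε]
    exact ⟨hdisc q (by rw [sqDist_self]; positivity), eq_zero_of_sqDist_le hw hM (by positivity)
      (fun p hp => hnonneg p (hdisc p hp)) (fun p hp => hsuper p (hdisc p hp)) hp₁q hwp₁⟩
  have hclosed : closure (Ω ∩ {p : ℝ × ℝ | w p.1 p.2 = 0}) ⊆ {p | w p.1 p.2 = 0} :=
    closure_minimal Set.inter_subset_right (isClosed_eq hw.continuous continuous_const)
  exact (hconn.subset_of_closure_inter_subset hopen ⟨p₀, hp₀, hp₀, hwp₀⟩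
    (fun p hp => ⟨hp.2, hclosed hp.1⟩) hp).2

end StrongMaximumPrinciple

/-! ### The sliding comparison function -/

section Sliding

variable {F : ℝ → ℝ} {c : ℝ} {u : ℝ → ℝ → ℝ}

/-- The vertical perturbation `ε e^{κ (y - Y)}`. -/
noncomputable def slideHeight (κ ε Y y : ℝ) : ℝ := ε * exp (κ * (y - Y))

/-- The horizontal shift compensating the vertical perturbation: its derivative in `y` is
`-b` times the height. -/
noncomputable def slideShift (b κ ε Y y : ℝ) : ℝ := b / κ * (ε - slideHeight κ ε Y y)

/-- The perturbed reflection of `u` across the line `x = l`. -/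
noncomputable def slideReflection (u : ℝ → ℝ → ℝ) (l b κ ε Y x y : ℝ) : ℝ :=
  u (2 * l + slideShift b κ ε Y y - x) y + slideHeight κ ε Y y

/-- The error, per unit of height `q`, with which the perturbed reflection solves the traveling
wave equation; `X`, `A`, `B` stand for `∂u/∂x`, `∂²u/∂x²`, `∂²u/∂x∂y` at the reflected point. -/
def slideError (c b κ q X A B : ℝ) : ℝ :=
  b ^ 2 * q * A - 2 * b * B - b * (κ + c) * X + κ * (κ + c)

lemma slideHeight_pos {ε : ℝ} (κ Y y : ℝ) (hε : 0 < ε) : 0 < slideHeight κ ε Y y :=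
  mul_pos hε (exp_pos _)

lemma slideHeight_le {κ ε Y y : ℝ} (hκ : 0 ≤ κ) (hε : 0 ≤ ε) (hy : y ≤ Y) :
    slideHeight κ ε Y y ≤ ε :=
  mul_le_of_le_one_right hε (exp_le_one_iff.2 (mul_nonpos_of_nonneg_of_nonpos hκ (by linarith)))

lemma slideHeight_self (κ ε Y : ℝ) : slideHeight κ ε Y Y = ε := by simp [slideHeight]

lemma slideShift_self (b κ ε Y : ℝ) : slideShift b κ ε Y Y = 0 := by
  simp [slideShift, slideHeight_self]

lemma slideShift_nonneg {b κ ε Y y : ℝ} (hb : 0 ≤ b) (hκ : 0 ≤ κ) (hε : 0 ≤ ε) (hy : y ≤ Y) :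
    0 ≤ slideShift b κ ε Y y :=
  mul_nonneg (div_nonneg hb hκ) (sub_nonneg.2 (slideHeight_le hκ hε hy))

lemma slideShift_le {b κ ε : ℝ} (Y y : ℝ) (hb : 0 ≤ b) (hκ : 0 ≤ κ) (hε : 0 < ε) :
    slideShift b κ ε Y y ≤ b / κ * ε :=
  mul_le_mul_of_nonneg_left (by linarith [slideHeight_pos κ Y y hε]) (div_nonneg hb hκ)

lemma contDiff_slideHeight (κ ε Y : ℝ) {n : WithTop ℕ∞} :
    ContDiff ℝ n (slideHeight κ ε Y) := by
  unfold slideHeight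
  fun_prop

lemma contDiff_slideShift (b κ ε Y : ℝ) {n : WithTop ℕ∞} :
    ContDiff ℝ n (slideShift b κ ε Y) :=
  contDiff_const.mul (contDiff_const.sub (contDiff_slideHeight κ ε Y))

lemma hasDerivAt_slideHeight (κ ε Y y : ℝ) :
    HasDerivAt (slideHeight κ ε Y) (κ * slideHeight κ ε Y y) y :=
  ((hasDerivAt_exp_mul_sub κ Y y).const_mul ε).congr_deriv (by rw [slideHeight]; ring)

lemma hasDerivAt_slideShift {κ : ℝ} (b ε Y y : ℝ) (hκ : κ ≠ 0) :
    HasDerivAt (slideShift b κ ε Y) (-b * slideHeight κ ε Y y) y :=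
  (((hasDerivAt_slideHeight κ ε Y y).const_sub ε).const_mul (b / κ)).congr_deriv
    (by field_simp)

lemma hasDerivAt_along_graph (h : Differentiable ℝ fun p : ℝ × ℝ => u p.1 p.2) {γ : ℝ → ℝ}
    {γ' t : ℝ} (hγ : HasDerivAt γ γ' t) :
    HasDerivAt (fun t => u (γ t) t) (pdx u (γ t) t * γ' + pdy u (γ t) t) t := by
  refine (HasFDerivAt.comp_hasDerivAt (l := fun p : ℝ × ℝ => u p.1 p.2)
    (f := fun t => (γ t, t)) t (h (γ t, t)).hasFDerivAt
    (hγ.prodMk (hasDerivAt_id t))).congr_deriv ?_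
  rw [pdx_eq_fderiv h, pdy_eq_fderiv h, mul_comm, ← smul_eq_mul, ← map_smul, ← map_add]
  simp

namespace IsSolution

lemma contDiff_slideReflection (hu : IsSolution F c u) (l b κ ε Y : ℝ) :
    ContDiff ℝ 2 (fun p : ℝ × ℝ => slideReflection u l b κ ε Y p.1 p.2) := by
  have hshift := (contDiff_slideShift b κ ε Y (n := 2)).comp (contDiff_snd (𝕜 := ℝ) (E := ℝ))
  have hheight := (contDiff_slideHeight κ ε Y (n := 2)).comp (contDiff_snd (𝕜 := ℝ) (E := ℝ))
  exact (hu.contDiff_two.comp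
    (((contDiff_const.add hshift).sub contDiff_fst).prodMk contDiff_snd)).add hheight

lemma driftLaplacian_slideReflection (hu : IsSolution F c u) {κ : ℝ} (l b ε Y x y : ℝ)
    (hκ : κ ≠ 0) : driftLaplacian c (slideReflection u l b κ ε Y) x y =
      deriv F (u (2 * l + slideShift b κ ε Y y - x) y) + slideHeight κ ε Y y *
        slideError c b κ (slideHeight κ ε Y y) (pdx u (2 * l + slideShift b κ ε Y y - x) y)
          (pdx (pdx u) (2 * l + slideShift b κ ε Y y - x) y)
          (pdx (pdy u) (2 * l + slideShift b κ ε Y y - x) y) := by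
  set γ : ℝ → ℝ := fun t => 2 * l + slideShift b κ ε Y t - x
  set q := slideHeight κ ε Y
  have hγd : ∀ t, HasDerivAt γ (-b * q t) t := fun t =>
    ((hasDerivAt_slideShift b ε Y t hκ).const_add (2 * l)).sub_const x
  have hqd : ∀ t, HasDerivAt q (κ * q t) t := hasDerivAt_slideHeight κ ε Y
  have hrefl : ∀ t, HasDerivAt (fun t => 2 * l + slideShift b κ ε Y y - t) (-1) t := fun t =>
    (hasDerivAt_id t).const_sub _
  have hx : ∀ t, HasDerivAt (fun t => slideReflection u l b κ ε Y t y)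
      (pdx u (2 * l + slideShift b κ ε Y y - t) y * -1) t := fun t =>
    ((hu.hasDerivAt_fst _ y).comp t (hrefl t)).add_const (q y)
  have hxx : HasDerivAt (fun t => pdx u (2 * l + slideShift b κ ε Y y - t) y * -1)
      (pdx (pdx u) (γ y) y * -1 * -1) x :=
    ((hu.hasDerivAt_pdx_fst _ y).comp x (hrefl x)).mul_const (-1)
  have hy : ∀ t, HasDerivAt (fun t => slideReflection u l b κ ε Y x t)
      (pdx u (γ t) t * (-b * q t) + pdy u (γ t) t + κ * q t) t := fun t =>
    (hasDerivAt_along_graph hu.differentiable (hγd t)).add (hqd t)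
  have hpdx := hasDerivAt_along_graph (hu.contDiff_pdx.differentiable (by simp)) (hγd y)
  have hpdy := hasDerivAt_along_graph (hu.contDiff_pdy.differentiable (by simp)) (hγd y)
  rw [hu.pdy_pdx] at hpdx
  rw [driftLaplacian_eq_of_hasDerivAt c hx hy hxx
    (((hpdx.mul ((hqd y).const_mul (-b))).add hpdy).add ((hqd y).const_mul κ)),
    ← hu.equation, slideError]
  ring

lemma driftLaplacian_comp_sub (hu : IsSolution F c u) (s x y : ℝ) :
    driftLaplacian c (fun x y => u x (y - s)) x y = deriv F (u x (y - s)) := by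
  have hsub : ∀ t, HasDerivAt (fun t => t - s) 1 t := fun t => (hasDerivAt_id t).sub_const s
  rw [driftLaplacian_eq_of_hasDerivAt c (w := fun x y => u x (y - s))
    (fun t => hu.hasDerivAt_fst t (y - s))
    (fun t => (hu.hasDerivAt_snd x (t - s)).comp t (hsub t)) (hu.hasDerivAt_pdx_fst x (y - s))
    (((hu.hasDerivAt_pdy_snd x (y - s)).comp y (hsub y)).mul_const 1), ← hu.equation]
  ring

end IsSolution

lemma exists_slideError_le {b K μ : ℝ} (hc : 0 < c) (hb : 0 < b) (hK : 0 < K) (hμ : 0 < μ) :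
    ∃ κ > 0, ∃ θ > 0, ∃ ε₀ > 0, b / κ * ε₀ ≤ 1 ∧ ∀ v q X A B, 0 ≤ v → 0 < q → q ≤ ε₀ →
      v - θ ≤ X → |A| ≤ K → |B| ≤ θ → slideError c b κ q X A B ≤ μ / 2 - b * c * v := by
  set κ := min 1 (μ / (8 * (1 + c)))
  have hκ : 0 < κ := by positivity
  have hκ_one : κ ≤ 1 := min_le_left _ _
  have hκμ : κ * (1 + c) ≤ μ / 8 := by
    have hle : κ ≤ μ / (8 * (1 + c)) := min_le_right _ _
    rw [le_div_iff₀ (by positivity)] at hle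
    linarith
  set θ := μ / (8 * b * (3 + c)) with hθ_def
  have hθμ : b * θ * (3 + c) = μ / 8 := by
    rw [hθ_def]
    field_simp
  have hθ : 0 < θ := by positivity
  refine ⟨κ, hκ, θ, hθ, min (μ / (8 * b ^ 2 * K)) (κ / b), by positivity, ?_, ?_⟩
  · calc b / κ * min (μ / (8 * b ^ 2 * K)) (κ / b) ≤ b / κ * (κ / b) := by
          gcongr
          exact min_le_right _ _
      _ = 1 := by field_simp
  intro v q X A B hv hq hqε hX hA hB
  have hAμ : b ^ 2 * q * A ≤ μ / 8 :=
    calc b ^ 2 * q * A ≤ b ^ 2 * q * K := by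
          gcongr
          exact (le_abs_self A).trans hA
      _ ≤ b ^ 2 * (μ / (8 * b ^ 2 * K)) * K := by
          gcongr
          exact hqε.trans (min_le_left _ _)
      _ = μ / 8 := by field_simp
  have hBθ : -(2 * b * B) ≤ 2 * b * θ := by
    nlinarith [mul_le_mul_of_nonneg_left (abs_le.1 hB).1 hb.le]
  have hXv : b * c * v - b * (1 + c) * θ ≤ b * (κ + c) * X :=
    calc b * c * v - b * (1 + c) * θ ≤ b * (κ + c) * v - b * (κ + c) * θ := by
          gcongr
          linarith
      _ = b * (κ + c) * (v - θ) := by ring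
      _ ≤ b * (κ + c) * X := by gcongr
  have hκκ : κ * (κ + c) ≤ κ * (1 + c) := by gcongr
  rw [slideError]
  linarith

namespace IsDoubleWell

/-- Near the wells the strict convexity of `F` absorbs the error `E`; between the wells
`√(2F)` is bounded below, and a large multiple of it makes `E` as negative as needed. -/
lemma exists_deriv_add_mul_lt (hF : IsDoubleWell F) :
    ∃ μ > 0, ∃ Γ > 0, ∃ δ > 0, ∀ q E p z, 0 < q → q ≤ δ / 2 →
      E ≤ μ / 2 - Γ * wellSpeed F p → -1 ≤ p → z ≤ 1 → p + q ≤ z →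
        (p + q = z ∨ z ≤ -1 + δ) → deriv F p + q * E < deriv F z := by
  obtain ⟨μ, hμ, δ, hδ, -, hleft, hright⟩ := hF.exists_deriv_slope_lower_bound
  obtain ⟨M, hM, hbound⟩ := hF.exists_bound
  obtain ⟨m, hm, hmid⟩ := hF.exists_le_wellSpeed (δ := δ / 2) (by positivity)
  have hΓ : 0 < (M + μ) / m := by positivity
  refine ⟨μ, hμ, (M + μ) / m, hΓ, δ, hδ, fun q E p z hq hqδ hE hp hz hpz hcase => ?_⟩
  have hqμ : 0 < q * μ := mul_pos hq hμ
  have hqE := mul_le_mul_of_nonneg_left hE hq.le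
  have hspeed : 0 ≤ q * ((M + μ) / m * wellSpeed F p) :=
    mul_nonneg hq.le (mul_nonneg hΓ.le (wellSpeed_nonneg F p))
  rcases le_or_gt z (-1 + δ) with hz_left | hz_left
  · have hslope := hleft p z hp (by linarith) hz_left
    have hgap : μ * q ≤ μ * (z - p) := by
      gcongr
      linarith
    linarith
  obtain rfl : p + q = z := hcase.resolve_right hz_left.not_ge
  rcases le_or_gt (1 - δ) p with hp_right | hp_right
  · have hslope := hright p (p + q) hp_right (by linarith) hz
    linarith
  · have hmp := hmid p (by linarith) (by linarith)
    have hlip := hF.abs_deriv_sub_le (fun s hs => (hbound s hs).2.2)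
      (abs_le.2 ⟨hp, by linarith⟩) (abs_le.2 ⟨by linarith, hz⟩) (s := p) (t := p + q)
    rw [add_sub_cancel_left, abs_of_pos hq] at hlip
    have hlower := (abs_le.1 hlip).1
    have hspeed' : q * (M + μ) ≤ q * ((M + μ) / m * wellSpeed F p) := by
      gcongr
      calc M + μ = (M + μ) / m * m := by field_simp
        _ ≤ (M + μ) / m * wellSpeed F p := by gcongr
    linarith

lemma exists_slide_constants (hF : IsDoubleWell F) (hc : 0 < c) {K : ℝ} (hK : 0 < K) :
    ∃ b > 0, ∃ κ > 0, ∃ θ > 0, ∃ ε₀ > 0, ∃ δ > 0, b / κ * ε₀ ≤ 1 ∧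
      ∀ q X A B p z : ℝ, 0 < q → q ≤ ε₀ → wellSpeed F p - θ ≤ X → |A| ≤ K → |B| ≤ θ →
        -1 ≤ p → z ≤ 1 → p + q ≤ z → (p + q = z ∨ z ≤ -1 + δ) →
          deriv F p + q * slideError c b κ q X A B < deriv F z := by
  obtain ⟨μ, hμ, Γ, hΓ, δ, hδ, hlt⟩ := hF.exists_deriv_add_mul_lt
  have hΓc : Γ / c * c = Γ := div_mul_cancel₀ Γ hc.ne'
  obtain ⟨κ, hκ, θ, hθ, ε₀, hε₀, hε₀_shift, herror⟩ :=
    exists_slideError_le hc (div_pos hΓ hc) hK hμ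
  refine ⟨Γ / c, div_pos hΓ hc, κ, hκ, θ, hθ, min ε₀ (δ / 2), by positivity, δ, hδ, ?_, ?_⟩
  · refine le_trans ?_ hε₀_shift
    gcongr
    exact min_le_left _ _
  · intro q X A B p z hq hqε hX hA hB
    refine hlt q _ p z hq (hqε.trans (min_le_right _ _)) ?_
    have hle := herror (wellSpeed F p) q X A B (wellSpeed_nonneg F p) hq
      (hqε.trans (min_le_left _ _)) hX hA hB
    rwa [hΓc] at hle

end IsDoubleWell

end Sliding

/-! ### Touching the perturbed reflection from below -/

section Touching

variable {F : ℝ → ℝ} {c : ℝ} {u : ℝ → ℝ → ℝ}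

/-- The region to the right of the perturbed axis and below height `Y`. -/
def slideDomain (l b κ ε Y : ℝ) : Set (ℝ × ℝ) :=
  {p | l + slideShift b κ ε Y p.2 / 2 ≤ p.1 ∧ p.2 ≤ Y}

/-- The difference of the perturbed reflection and the vertical translate by `s`. -/
noncomputable def slideGap (u : ℝ → ℝ → ℝ) (l b κ ε Y s : ℝ) (p : ℝ × ℝ) : ℝ :=
  slideReflection u l b κ ε Y p.1 p.2 - u p.1 (p.2 - s)

lemma isClosed_slideDomain (l b κ ε Y : ℝ) : IsClosed (slideDomain l b κ ε Y) := by
  have hshift := (contDiff_slideShift b κ ε Y (n := 0)).continuous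
  exact (isClosed_le (by fun_prop) continuous_fst).inter
    (isClosed_le continuous_snd continuous_const)

lemma isLocalMin_of_isMinOn_slideGap {l b κ ε Y s x y : ℝ}
    (hmin : IsMinOn (slideGap u l b κ ε Y s) (slideDomain l b κ ε Y) (x, y))
    (hx : l + slideShift b κ ε Y y / 2 < x) (hy : y < Y) :
    IsLocalMin (slideGap u l b κ ε Y s) (x, y) := by
  have hshift := (contDiff_slideShift b κ ε Y (n := 0)).continuous
  have haxis : Continuous fun p : ℝ × ℝ => l + slideShift b κ ε Y p.2 / 2 := by fun_prop
  refine hmin.isLocalMin ?_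
  filter_upwards [haxis.continuousAt.eventually_lt continuous_fst.continuousAt hx,
    continuous_snd.continuousAt.eventually_lt_const hy] with p hpx hpy
  exact ⟨hpx.le, hpy.le⟩

namespace IsSolution

lemma continuous_comp {α : Type*} [TopologicalSpace α] (hu : IsSolution F c u)
    {f g : α → ℝ} (hf : Continuous f) (hg : Continuous g) : Continuous fun a => u (f a) (g a) :=
  hu.continuous.comp (hf.prodMk hg)

lemma continuous_slideGap (hu : IsSolution F c u) (l b κ ε Y : ℝ) :
    Continuous fun r : (ℝ × ℝ) × ℝ => slideGap u l b κ ε Y r.2 r.1 :=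
  ((hu.contDiff_slideReflection l b κ ε Y).continuous.comp continuous_fst).sub
    (hu.continuous_comp (by fun_prop) (by fun_prop))

lemma lt_of_slideGap_nonpos (hu : IsSolution F c u) {l b κ ε Y s x y : ℝ}
    (hε : 0 < ε) (hs : 0 < s) (hY : ∀ x, l ≤ x → u x Y ≤ u (2 * l - x) Y + ε)
    (hp : (x, y) ∈ slideDomain l b κ ε Y) (hgap : slideGap u l b κ ε Y s (x, y) ≤ 0) :
    l + slideShift b κ ε Y y / 2 < x ∧ y < Y := by
  obtain ⟨hpx, hpy⟩ := hp
  have hmono := hu.strictMono x (sub_lt_self y hs)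
  simp only [slideGap, slideReflection] at hpx hpy hgap
  refine ⟨hpx.lt_of_ne fun haxis => ?_, hpy.lt_of_ne fun htop => ?_⟩
  · have hfixed : 2 * l + slideShift b κ ε Y y - x = x := by linarith
    rw [hfixed] at hgap
    linarith [slideHeight_pos κ Y y hε]
  · subst htop
    rw [slideShift_self] at hgap hpx
    rw [slideHeight_self, add_zero] at hgap
    linarith [hY x (by linarith)]

lemma deriv_le_of_isMinOn_slideGap (hu : IsSolution F c u) {l b κ ε Y s x y : ℝ}
    (hmin : IsMinOn (slideGap u l b κ ε Y s) (slideDomain l b κ ε Y) (x, y))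
    (hx : l + slideShift b κ ε Y y / 2 < x) (hy : y < Y) :
    deriv F (u x (y - s)) ≤ driftLaplacian c (slideReflection u l b κ ε Y) x y := by
  rw [← hu.driftLaplacian_comp_sub]
  exact driftLaplacian_le_of_isLocalMin c (hu.contDiff_slideReflection l b κ ε Y)
    (v := fun x y => u x (y - s))
    (hu.contDiff_two.comp (contDiff_fst.prodMk (contDiff_snd.sub contDiff_const)))
    (isLocalMin_of_isMinOn_slideGap hmin hx hy)

end IsSolution

namespace IsTravelingWave

lemma exists_isMinOn_slideGap (hF : IsDoubleWell F) (hc : 0 < c)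
    (hu : IsTravelingWave F c u) {l b κ ε Y s : ℝ} {p₀ : ℝ × ℝ} (hε : 0 < ε) (hs : 0 ≤ s)
    (hp₀ : p₀ ∈ slideDomain l b κ ε Y) (hgap : slideGap u l b κ ε Y s p₀ < 0) :
    ∃ p ∈ slideDomain l b κ ε Y,
      IsMinOn (slideGap u l b κ ε Y s) (slideDomain l b κ ε Y) p := by
  have hcont : Continuous (slideGap u l b κ ε Y s) :=
    Continuous.comp (f := fun p : ℝ × ℝ => (p, s))
      (hu.isSolution.continuous_slideGap l b κ ε Y) (by fun_prop)
  refine hcont.continuousOn.exists_isMinOn' (isClosed_slideDomain l b κ ε Y) hp₀ ?_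
  obtain ⟨R, hR⟩ := hu.exists_le_of_le hF hc Y (neg_pos.2 hgap)
  rw [eventually_inf_principal]
  filter_upwards [(tendsto_norm_cocompact_atTop (E := ℝ × ℝ)).eventually_ge_atTop (R + s)]
    with ⟨x, y⟩ hp hpD
  have hfar : R ≤ ‖(x, y - s)‖ := by
    have hnorm : ‖((0 : ℝ), s)‖ = s := by simp [Prod.norm_def, abs_of_nonneg hs, hs]
    have hsub := norm_sub_norm_le (x, y) ((0 : ℝ), s)
    rw [Prod.mk_sub_mk, sub_zero, hnorm] at hsub
    linarith
  have hlow := hR x (y - s) (by linarith [hpD.2]) hfar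
  have hreflection : -1 ≤ slideReflection u l b κ ε Y x y := by
    have hneg := hu.isSolution.neg_one_lt (2 * l + slideShift b κ ε Y y - x) y
    rw [slideReflection]
    linarith [slideHeight_pos κ Y y hε]
  change slideGap u l b κ ε Y s p₀ ≤ slideReflection u l b κ ε Y x y - u x (y - s)
  linarith

/-- At a minimum point far out, `u` would violate the differential inequality that holds at
local minima. -/
lemma exists_slide_alternative (hF : IsDoubleWell F) (hc : 0 < c)
    (hu : IsTravelingWave F c u) (l : ℝ) : ∃ b > 0, ∃ κ > 0, ∃ ε₀ > 0, ∃ δ > 0, ∃ R : ℝ,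
      ∀ ε Y s x y, 0 < ε → ε ≤ ε₀ → 0 < s →
        (∀ x, l ≤ x → u x Y ≤ u (2 * l - x) Y + ε) → (x, y) ∈ slideDomain l b κ ε Y →
        IsMinOn (slideGap u l b κ ε Y s) (slideDomain l b κ ε Y) (x, y) →
        slideGap u l b κ ε Y s (x, y) ≤ 0 →
        ‖(2 * l + slideShift b κ ε Y y - x, y)‖ ≤ R ∨
          slideGap u l b κ ε Y s (x, y) ≠ 0 ∧ -1 + δ ≤ u x (y - s) := by
  have hsol := hu.isSolution
  obtain ⟨K, hK, hbound⟩ := hsol.exists_bound hF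
  obtain ⟨b, hb, κ, hκ, θ, hθ, ε₀, hε₀, δ, hδ, hbκ, hlt⟩ := hF.exists_slide_constants hc hK
  obtain ⟨R₁, hR₁⟩ := hu.exists_pdy_le hF hc hθ
  obtain ⟨R₂, hR₂⟩ := hu.exists_abs_profileDefect_le hF hc (l + 1) hθ
  refine ⟨b, hb, κ, hκ, ε₀, hε₀, δ, hδ, max R₁ R₂, ?_⟩
  intro ε Y s x y hε hεε₀ hs hY hp hmin hgap
  obtain ⟨hx, hy⟩ := hsol.lt_of_slideGap_nonpos hε hs hY hp hgap
  by_contra! hcon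
  obtain ⟨hR, halt⟩ := hcon
  have hle := hsol.deriv_le_of_isMinOn_slideGap hmin hx hy
  rw [hsol.driftLaplacian_slideReflection l b ε Y x y hκ.ne'] at hle
  have hshift : slideShift b κ ε Y y ≤ 1 := (slideShift_le Y y hb.le hκ.le hε).trans
    ((mul_le_mul_of_nonneg_left hεε₀ (by positivity)).trans hbκ)
  have hprofile : wellSpeed F (u (2 * l + slideShift b κ ε Y y - x) y) - θ ≤
      pdx u (2 * l + slideShift b κ ε Y y - x) y := by
    have hdefect := hR₂ _ y (by linarith) ((le_max_right _ _).trans hR.le)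
    rw [profileDefect] at hdefect
    linarith [(abs_le.1 hdefect).1]
  refine hle.not_gt (hlt _ _ _ _ _ _ (slideHeight_pos κ Y y hε)
    ((slideHeight_le hκ.le hε.le hy.le).trans hεε₀) hprofile (hbound _ _).2.2.1
    (hR₁ _ _ ((le_max_left _ _).trans hR.le)).2.1
    (hsol.neg_one_lt _ _).le (hsol.lt_one _ _).le (sub_nonpos.1 hgap) ?_)
  rcases eq_or_ne (slideGap u l b κ ε Y s (x, y)) 0 with hzero | hzero
  · exact Or.inl (sub_eq_zero.1 hzero)
  · exact Or.inr (halt hzero).le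

lemma exists_slide_bounds (hF : IsDoubleWell F) (hc : 0 < c)
    (hu : IsTravelingWave F c u) (l : ℝ) : ∃ b > 0, ∃ κ > 0, ∃ ε₀ > 0, ∃ η > 0, ∃ R : ℝ,
      ∀ ε Y s x y, 0 < ε → ε ≤ ε₀ → 0 < s →
        (∀ x, l ≤ x → u x Y ≤ u (2 * l - x) Y + ε) → (x, y) ∈ slideDomain l b κ ε Y →
        IsMinOn (slideGap u l b κ ε Y s) (slideDomain l b κ ε Y) (x, y) →
        slideGap u l b κ ε Y s (x, y) ≤ 0 → -1 + η ≤ u x (y - s) ∧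
          (slideGap u l b κ ε Y s (x, y) = 0 →
            ‖(2 * l + slideShift b κ ε Y y - x, y)‖ ≤ R ∧ ‖(x, y - s)‖ ≤ R) := by
  obtain ⟨b, hb, κ, hκ, ε₀, hε₀, δ, hδ, R, halt⟩ := hu.exists_slide_alternative hF hc l
  obtain ⟨m, hm, hmle⟩ := (isCompact_closedBall (0 : ℝ × ℝ) R).exists_forall_le'
    hu.isSolution.continuous.continuousOn fun p _ => hu.isSolution.neg_one_lt p.1 p.2
  have hm_pos : 0 < m + 1 := by linarith
  obtain ⟨R₁, hR₁⟩ := hu.exists_le_of_le hF hc R (half_pos hm_pos)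
  refine ⟨b, hb, κ, hκ, ε₀, hε₀, min (m + 1) δ, lt_min hm_pos hδ, max R R₁, ?_⟩
  intro ε Y s x y hε hεε₀ hs hY hp hmin hgap
  rcases halt ε Y s x y hε hεε₀ hs hY hp hmin hgap with hnorm | ⟨hne, hlow⟩
  · have hball := hmle _ (mem_closedBall_zero_iff.2 hnorm)
    have hle : slideReflection u l b κ ε Y x y ≤ u x (y - s) := sub_nonpos.1 hgap
    rw [slideReflection] at hle
    have hlow : -1 + (m + 1) ≤ u x (y - s) := by linarith [slideHeight_pos κ Y y hε]
    refine ⟨by linarith [min_le_left (m + 1) δ], fun _ => ⟨hnorm.trans (le_max_left _ _), ?_⟩⟩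
    by_contra! hfar
    have hyR : y ≤ R := (le_abs_self y).trans ((norm_snd_le (_, y)).trans hnorm)
    linarith [hR₁ x (y - s) (by linarith) ((le_max_right _ _).trans hfar.le)]
  · exact ⟨by linarith [min_le_right (m + 1) δ], fun hzero => absurd hzero hne⟩

lemma isCompact_slideContact (hF : IsDoubleWell F) (hc : 0 < c) (hu : IsTravelingWave F c u)
    (l b κ ε Y : ℝ) {s₀ η : ℝ} (hs₀ : 0 ≤ s₀) (hη : 0 < η) :
    IsCompact {r : (ℝ × ℝ) × ℝ | r.1 ∈ slideDomain l b κ ε Y ∧ s₀ ≤ r.2 ∧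
      slideGap u l b κ ε Y r.2 r.1 ≤ 0 ∧ -1 + η ≤ u r.1.1 (r.1.2 - r.2)} := by
  refine Metric.isCompact_of_isClosed_isBounded ?_ ?_
  · exact ((isClosed_slideDomain l b κ ε Y).preimage continuous_fst).inter
      ((isClosed_le continuous_const continuous_snd).inter
        ((isClosed_le (hu.isSolution.continuous_slideGap l b κ ε Y) continuous_const).inter
          (isClosed_le continuous_const
            (hu.isSolution.continuous_comp (by fun_prop) (by fun_prop)))))
  obtain ⟨R, hR⟩ := hu.exists_le_of_le hF hc Y (half_pos hη)
  refine ((isBounded_Icc (-R) R).prod (isBounded_Icc (s₀ - R) Y)).prod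
    (isBounded_Icc s₀ (Y + R)) |>.subset ?_
  rintro ⟨⟨x, y⟩, s⟩ ⟨⟨-, hyY : y ≤ Y⟩, hs : s₀ ≤ s, -, hlow : -1 + η ≤ u x (y - s)⟩
  have hnorm : ‖(x, y - s)‖ < R := by
    by_contra! hfar
    linarith [hR x (y - s) (by linarith) hfar]
  obtain ⟨hxR, hyR⟩ := max_lt_iff.1 hnorm
  obtain ⟨hx₁, hx₂⟩ := abs_lt.1 hxR
  obtain ⟨hy₁, hy₂⟩ := abs_lt.1 hyR
  simp only at hx₁ hx₂ hy₁ hy₂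
  exact ⟨⟨⟨hx₁.le, hx₂.le⟩, ⟨by linarith, hyY⟩⟩, ⟨hs, by linarith⟩⟩

/-- The touching translate is the last one that is not strictly below the perturbed
reflection. -/
lemma exists_touching (hF : IsDoubleWell F) (hc : 0 < c)
    (hu : IsTravelingWave F c u) (l : ℝ) : ∃ b > 0, ∃ κ > 0, ∃ ε₀ > 0, ∃ R : ℝ,
      ∀ ε Y s₀ : ℝ, ∀ p₀ ∈ slideDomain l b κ ε Y, 0 < ε → ε ≤ ε₀ → 0 < s₀ →
        (∀ x, l ≤ x → u x Y ≤ u (2 * l - x) Y + ε) → slideGap u l b κ ε Y s₀ p₀ < 0 →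
        ∃ s, s₀ ≤ s ∧ ∃ p ∈ slideDomain l b κ ε Y,
          ‖(2 * l + slideShift b κ ε Y p.2 - p.1, p.2)‖ ≤ R ∧ ‖(p.1, p.2 - s)‖ ≤ R ∧
            slideGap u l b κ ε Y s p = 0 ∧
              ∀ p' ∈ slideDomain l b κ ε Y, 0 ≤ slideGap u l b κ ε Y s p' := by
  obtain ⟨b, hb, κ, hκ, ε₀, hε₀, η, hη, R, hbounds⟩ := hu.exists_slide_bounds hF hc l
  refine ⟨b, hb, κ, hκ, ε₀, hε₀, R, fun ε Y s₀ p₀ hp₀ hε hεε₀ hs₀ hY hgap₀ => ?_⟩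
  have hcompact := hu.isCompact_slideContact hF hc l b κ ε Y hs₀.le hη
  have hmem : ∀ s p, s₀ ≤ s → p ∈ slideDomain l b κ ε Y → slideGap u l b κ ε Y s p < 0 →
      ∃ p', p' ∈ slideDomain l b κ ε Y ∧ s₀ ≤ s ∧ slideGap u l b κ ε Y s p' ≤ 0 ∧
        -1 + η ≤ u p'.1 (p'.2 - s) := by
    intro s p hs hp hneg
    obtain ⟨p', hp', hmin⟩ := hu.exists_isMinOn_slideGap hF hc hε (hs₀.le.trans hs) hp hneg
    have hle : slideGap u l b κ ε Y s p' ≤ 0 := (isMinOn_iff.1 hmin p hp).trans hneg.le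
    exact ⟨p', hp', hs, hle,
      (hbounds ε Y s _ _ hε hεε₀ (hs₀.trans_le hs) hY hp' hmin hle).1⟩
  obtain ⟨p₁, hp₁⟩ := hmem s₀ p₀ le_rfl hp₀ hgap₀
  obtain ⟨⟨p, s⟩, ⟨hp, hs, hgap, -⟩, hlast⟩ :=
    hcompact.exists_isMaxOn ⟨(p₁, s₀), hp₁⟩ continuous_snd.continuousOn
  have hnonneg : ∀ p' ∈ slideDomain l b κ ε Y, 0 ≤ slideGap u l b κ ε Y s p' := by
    intro p' hp'
    by_contra! hneg
    have hcont : Continuous fun t => slideGap u l b κ ε Y t p' :=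
      Continuous.comp (f := fun t : ℝ => (p', t))
        (hu.isSolution.continuous_slideGap l b κ ε Y) (by fun_prop)
    obtain ⟨t, hst, ht⟩ := (hcont.continuousAt.eventually_lt_const hneg).exists_gt
    obtain ⟨p'', hp''⟩ := hmem t p' (hs.trans hst.le) hp' ht
    exact hst.not_ge (isMaxOn_iff.1 hlast (p'', t) hp'')
  have hzero : slideGap u l b κ ε Y s p = 0 := hgap.antisymm (hnonneg p hp)
  have hmin : IsMinOn (slideGap u l b κ ε Y s) (slideDomain l b κ ε Y) p :=
    isMinOn_iff.2 fun p' hp' => hzero.trans_le (hnonneg p' hp')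
  obtain ⟨hreflection, htranslate⟩ :=
    (hbounds ε Y s _ _ hε hεε₀ (hs₀.trans_le hs) hY hp hmin hgap).2 hzero
  exact ⟨s, hs, p, hp, hreflection, htranslate, hzero, hnonneg⟩

end IsTravelingWave

end Touching

/-! ### Comparison of the wave with its reflections -/

section Comparison

variable {F : ℝ → ℝ} {c : ℝ} {u : ℝ → ℝ → ℝ}

lemma eq_zero_of_nonneg_of_eq_zero_of_lt {w : ℝ → ℝ → ℝ} {M a x y x' : ℝ}
    (hw : ContDiff ℝ 2 fun p : ℝ × ℝ => w p.1 p.2) (hM : 0 ≤ M)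
    (hnonneg : ∀ x y, a < x → 0 ≤ w x y)
    (hsuper : ∀ x y, a < x → driftLaplacian c w x y ≤ M * w x y) (hx : a < x)
    (hzero : w x y = 0) (y' : ℝ) (hx' : a < x') : w x' y' = 0 := by
  have hconn : IsPreconnected {p : ℝ × ℝ | a < p.1} := (convex_halfSpace_gt (𝕜 := ℝ)
    (f := fun p : ℝ × ℝ => p.1) ⟨fun _ _ => rfl, fun _ _ => rfl⟩ a).isPreconnected
  exact eq_zero_of_nonneg_of_eq_zero hw hM (isOpen_lt continuous_const continuous_fst) hconn
    (fun p => hnonneg p.1 p.2) (fun p => hsuper p.1 p.2) (p₀ := (x, y)) (p := (x', y')) hx hzero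
    hx'

namespace IsSolution

lemma exists_abs_slideReflection_sub_le (hF : IsDoubleWell F) (hu : IsSolution F c u) (l : ℝ)
    {b κ : ℝ} (hb : 0 < b) (hκ : 0 < κ) : ∃ C > 0, ∀ ε Y x y, 0 < ε → y ≤ Y →
      slideShift b κ ε Y y ≤ C * ε ∧
        |slideReflection u l b κ ε Y x y - u (2 * l - x) y| ≤ C * ε := by
  obtain ⟨K, hK, hbound⟩ := hu.exists_bound hF
  refine ⟨(K + 1) * (b / κ) + 1, by positivity, fun ε Y x y hε hy => ?_⟩
  have hshift : slideShift b κ ε Y y ≤ b / κ * ε := slideShift_le Y y hb.le hκ.le hε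
  have hshift_nonneg := slideShift_nonneg hb.le hκ.le hε.le hy
  have hheight : slideHeight κ ε Y y ≤ ε := slideHeight_le hκ.le hε.le hy
  have hscale : 0 ≤ b / κ * ε := by positivity
  have hKscale : 0 ≤ K * (b / κ * ε) := by positivity
  have hexpand : ((K + 1) * (b / κ) + 1) * ε = K * (b / κ * ε) + b / κ * ε + ε := by ring
  have hlip := abs_sub_le_of_hasDerivAt
    (show 2 * l - x ≤ 2 * l + slideShift b κ ε Y y - x by linarith)
    (fun t => hu.hasDerivAt_fst t y) (fun t _ => (hbound t y).1)
  have hslope : K * (2 * l + slideShift b κ ε Y y - x - (2 * l - x)) ≤ K * (b / κ * ε) :=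
    mul_le_mul_of_nonneg_left (by linarith) hK.le
  obtain ⟨hlow, hupp⟩ := abs_le.1 (hlip.trans hslope)
  rw [hexpand, slideReflection, abs_le]
  refine ⟨by linarith [hKscale], ?_, ?_⟩ <;> linarith [slideHeight_pos κ Y y hε, hscale, hKscale]

lemma driftLaplacian_reflection_sub (hu : IsSolution F c u) (l s x y : ℝ) :
    driftLaplacian c (fun x y => u (2 * l - x) y - u x (y - s)) x y =
      deriv F (u (2 * l - x) y) - deriv F (u x (y - s)) := by
  have hrefl : ∀ t, HasDerivAt (fun t => 2 * l - t) (-1) t := fun t =>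
    (hasDerivAt_id t).const_sub _
  have hsub : ∀ t, HasDerivAt (fun t => t - s) 1 t := fun t => (hasDerivAt_id t).sub_const s
  rw [driftLaplacian_eq_of_hasDerivAt c (w := fun x y => u (2 * l - x) y - u x (y - s))
    (fun t => ((hu.hasDerivAt_fst (2 * l - t) y).comp t (hrefl t)).sub
      (hu.hasDerivAt_fst t (y - s)))
    (fun t => (hu.hasDerivAt_snd (2 * l - x) t).sub
      ((hu.hasDerivAt_snd x (t - s)).comp t (hsub t)))
    ((((hu.hasDerivAt_pdx_fst (2 * l - x) y).comp x (hrefl x)).mul_const (-1)).sub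
      (hu.hasDerivAt_pdx_fst x (y - s)))
    ((hu.hasDerivAt_pdy_snd (2 * l - x) y).sub
      (((hu.hasDerivAt_pdy_snd x (y - s)).comp y (hsub y)).mul_const 1)),
    ← hu.equation, ← hu.equation]
  ring

lemma reflection_eq_of_touching (hF : IsDoubleWell F) (hu : IsSolution F c u) {l s x y x' : ℝ}
    (hle : ∀ x y, l < x → u x (y - s) ≤ u (2 * l - x) y) (hx : l < x)
    (htouch : u (2 * l - x) y = u x (y - s)) (y' : ℝ) (hx' : l < x') :
    u (2 * l - x') y' = u x' (y' - s) := by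
  obtain ⟨M, hM, hbound⟩ := hF.exists_bound
  have hw : ContDiff ℝ 2 fun p : ℝ × ℝ => u (2 * l - p.1) p.2 - u p.1 (p.2 - s) :=
    (ContDiff.comp (f := fun p : ℝ × ℝ => (2 * l - p.1, p.2)) hu.contDiff_two (by fun_prop)).sub
      (ContDiff.comp (f := fun p : ℝ × ℝ => (p.1, p.2 - s)) hu.contDiff_two (by fun_prop))
  refine sub_eq_zero.1 (eq_zero_of_nonneg_of_eq_zero_of_lt (c := c)
    (w := fun x y => u (2 * l - x) y - u x (y - s)) hw hM.le
    (fun x y hx => sub_nonneg.2 (hle x y hx)) (fun x y hx => ?_) hx (sub_eq_zero.2 htouch) y' hx')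
  have hlip := hF.abs_deriv_sub_le (fun s hs => (hbound s hs).2.2) (hu.abs_le_one x (y - s))
    (hu.abs_le_one (2 * l - x) y)
  rw [abs_of_nonneg (sub_nonneg.2 (hle x y hx))] at hlip
  exact (hu.driftLaplacian_reflection_sub l s x y).trans_le (le_of_abs_le hlip)

lemma not_touching_reflection (hF : IsDoubleWell F) (hu : IsSolution F c u) {l s x y : ℝ}
    (hs : 0 < s) (hx : l ≤ x) (htouch : u (2 * l - x) y = u x (y - s)) :
    ¬ ∀ x y, l < x → u x (y - s) ≤ u (2 * l - x) y := by
  intro hle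
  have haxis : u l (y - s) < u (2 * l - l) y := by
    rw [two_mul, add_sub_cancel_right]
    exact hu.strictMono l (sub_lt_self y hs)
  rcases hx.eq_or_lt with rfl | hlx
  · exact haxis.ne' htouch
  have hleft : Continuous fun t => u t (y - s) := hu.continuous_slice (y - s)
  have hright : Continuous fun t => u (2 * l - t) y :=
    hu.continuous_comp (by fun_prop) continuous_const
  obtain ⟨t, hlt, ht⟩ :=
    (hleft.continuousAt.eventually_lt hright.continuousAt haxis).exists_gt
  exact ht.ne' (hu.reflection_eq_of_touching hF hle hlx htouch y hlt)

end IsSolution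

namespace IsTravelingWave

lemma exists_approximate_touching (hF : IsDoubleWell F) (hc : 0 < c)
    (hu : IsTravelingWave F c u) (l : ℝ) : ∃ C > 0, ∃ ε₀ > 0, ∃ B : ℝ,
      ∀ ε Y s₀ x₀ y₀, 0 < ε → ε ≤ ε₀ → 0 < s₀ → (∀ x, l ≤ x → u x Y ≤ u (2 * l - x) Y + ε) →
        l + C * ε ≤ x₀ → y₀ ≤ Y → u (2 * l - x₀) y₀ + C * ε < u x₀ (y₀ - s₀) →
        ∃ x y s : ℝ, |x| ≤ B ∧ |y| ≤ B ∧ s₀ ≤ s ∧ s ≤ B ∧ l ≤ x ∧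
          |u (2 * l - x) y - u x (y - s)| ≤ C * ε ∧
            ∀ x' y', l + C * ε ≤ x' → y' ≤ Y → u x' (y' - s) ≤ u (2 * l - x') y' + C * ε := by
  obtain ⟨b, hb, κ, hκ, ε₀, hε₀, R, htouching⟩ := hu.exists_touching hF hc l
  obtain ⟨C, hC, hclose⟩ := hu.isSolution.exists_abs_slideReflection_sub_le hF l hb hκ
  refine ⟨C, hC, ε₀, hε₀, 2 * R, fun ε Y s₀ x₀ y₀ hε hεε₀ hs₀ hY hx₀ hy₀ hlt => ?_⟩
  have hdomain : ∀ x y, l + C * ε ≤ x → y ≤ Y → (x, y) ∈ slideDomain l b κ ε Y := fun x y hx hy =>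
    ⟨by linarith [(hclose ε Y x y hε hy).1, slideShift_nonneg hb.le hκ.le hε.le hy], hy⟩
  have hneg : slideGap u l b κ ε Y s₀ (x₀, y₀) < 0 := by
    rw [slideGap]
    linarith [(abs_le.1 (hclose ε Y x₀ y₀ hε hy₀).2).2]
  obtain ⟨s, hs, ⟨x, y⟩, ⟨hxD, hyY⟩, hreflection, htranslate, hzero, hnonneg⟩ :=
    htouching ε Y s₀ _ (hdomain x₀ y₀ hx₀ hy₀) hε hεε₀ hs₀ hY hneg
  have hxR : |x| ≤ R := (norm_fst_le (x, y - s)).trans htranslate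
  have hysR : |y - s| ≤ R := (norm_snd_le (x, y - s)).trans htranslate
  have hyR : |y| ≤ R := (norm_snd_le (_, y)).trans hreflection
  have hR : 0 ≤ R := (abs_nonneg y).trans hyR
  refine ⟨x, y, s, by linarith, by linarith, hs, by linarith [le_abs_self y, neg_abs_le (y - s)],
    by linarith [slideShift_nonneg hb.le hκ.le hε.le hyY], ?_, fun x' y' hx' hy' => ?_⟩
  · rw [← sub_eq_zero.1 hzero, abs_sub_comm]
    exact (hclose ε Y x y hε hyY).2
  · have hgap := hnonneg (x', y') (hdomain x' y' hx' hy')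
    rw [slideGap] at hgap
    linarith [(abs_le.1 (hclose ε Y x' y' hε hy').2).2]

lemma exists_approximate_touching_reflection (hF : IsDoubleWell F) (hc : 0 < c)
    (hu : IsTravelingWave F c u) {l x₀ y₀ : ℝ}
    (hfreq : ∀ ε > 0, ∀ Y, ∃ y ≥ Y, ∀ x ≥ l, u x y ≤ u (2 * l - x) y + ε) (hx₀ : l < x₀)
    (hlt : u (2 * l - x₀) y₀ < u x₀ y₀) :
    ∃ s₀ > 0, ∃ B : ℝ, ∀ η > 0, ∃ x y s : ℝ, |x| ≤ B ∧ |y| ≤ B ∧ s₀ ≤ s ∧ s ≤ B ∧ l ≤ x ∧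
      |u (2 * l - x) y - u x (y - s)| ≤ η ∧
        ∀ x' y', l + η ≤ x' → y' ≤ 1 / η → u x' (y' - s) ≤ u (2 * l - x') y' + η := by
  obtain ⟨s₀, hs₀, hgap⟩ : ∃ s₀ > 0, u (2 * l - x₀) y₀ < u x₀ (y₀ - s₀) := by
    have hcont : Continuous fun t => u x₀ (y₀ - t) :=
      hu.isSolution.continuous_comp continuous_const (by fun_prop)
    exact (hcont.continuousAt.eventually_const_lt (by simpa only [sub_zero])).exists_gt
  obtain ⟨C, hC, ε₀, hε₀, B, happrox⟩ := hu.exists_approximate_touching hF hc l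
  refine ⟨s₀, hs₀, B, fun η hη => ?_⟩
  obtain ⟨ε₁, hε₁, hCε₁⟩ := exists_pos_mul_lt
    (lt_min hη (lt_min (sub_pos.2 hgap) (sub_pos.2 hx₀))) C
  obtain ⟨hη_lt, hgap_lt, hx₀_lt⟩ : C * ε₁ < η ∧ _ ∧ C * ε₁ < x₀ - l := by
    simpa only [lt_min_iff] using hCε₁
  set ε := min ε₀ ε₁
  have hε : 0 < ε := lt_min hε₀ hε₁
  have hCε : C * ε ≤ C * ε₁ := mul_le_mul_of_nonneg_left (min_le_right _ _) hC.le
  obtain ⟨Y, hYge, hY⟩ := hfreq ε hε (max y₀ (1 / η))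
  obtain ⟨hy₀Y, hηY⟩ := max_le_iff.1 hYge
  obtain ⟨x, y, s, hx, hy, hs, hsB, hlx, hdist, hle⟩ := happrox ε Y s₀ x₀ y₀ hε (min_le_left _ _)
    hs₀ hY (by linarith) hy₀Y (by linarith)
  refine ⟨x, y, s, hx, hy, hs, hsB, hlx, by linarith, fun x' y' hx' hy' => ?_⟩
  linarith [hle x' y' (by linarith) (hy'.trans hηY)]

lemma exists_touching_reflection (hF : IsDoubleWell F) (hc : 0 < c)
    (hu : IsTravelingWave F c u) {l x₀ y₀ : ℝ}
    (hfreq : ∀ ε > 0, ∀ Y, ∃ y ≥ Y, ∀ x ≥ l, u x y ≤ u (2 * l - x) y + ε) (hx₀ : l < x₀)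
    (hlt : u (2 * l - x₀) y₀ < u x₀ y₀) :
    ∃ s > 0, ∃ x y, l ≤ x ∧ u (2 * l - x) y = u x (y - s) ∧
      ∀ x' y', l < x' → u x' (y' - s) ≤ u (2 * l - x') y' := by
  obtain ⟨s₀, hs₀, B, happrox⟩ := hu.exists_approximate_touching_reflection hF hc hfreq hx₀ hlt
  choose x y s hx hy hs hsB hlx hdist hle using
    fun n : ℕ => happrox (1 / ((n : ℝ) + 1)) Nat.one_div_pos_of_nat
  have hcompact : IsCompact (Set.Icc (-B) B ×ˢ (Set.Icc (-B) B ×ˢ Set.Icc s₀ B)) :=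
    isCompact_Icc.prod (isCompact_Icc.prod isCompact_Icc)
  obtain ⟨⟨a, d, σ⟩, ⟨-, -, hσ⟩, φ, hφ, hlim⟩ := hcompact.tendsto_subseq
    (x := fun n => (x n, y n, s n))
    (fun n => ⟨abs_le.1 (hx n), abs_le.1 (hy n), hs n, hsB n⟩)
  have hxlim : Tendsto (fun n => x (φ n)) atTop (nhds a) := hlim.fst_nhds
  have hylim : Tendsto (fun n => y (φ n)) atTop (nhds d) := hlim.snd_nhds.fst_nhds
  have hslim : Tendsto (fun n => s (φ n)) atTop (nhds σ) := hlim.snd_nhds.snd_nhds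
  have hη : Tendsto (fun n => 1 / ((φ n : ℝ) + 1)) atTop (nhds 0) :=
    tendsto_one_div_add_atTop_nhds_zero_nat.comp hφ.tendsto_atTop
  have hφ_top : Tendsto (fun n => (φ n : ℝ)) atTop atTop :=
    tendsto_natCast_atTop_atTop.comp hφ.tendsto_atTop
  have hcomp : ∀ {f g : ℕ → ℝ} {f₀ g₀ : ℝ}, Tendsto f atTop (nhds f₀) →
      Tendsto g atTop (nhds g₀) → Tendsto (fun n => u (f n) (g n)) atTop (nhds (u f₀ g₀)) :=
    fun {_ _ f₀ g₀} hf hg => (hu.isSolution.continuous.tendsto (f₀, g₀)).comp (hf.prodMk_nhds hg)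
  refine ⟨σ, hs₀.trans_le hσ.1, a, d, ge_of_tendsto' hxlim fun n => hlx _, ?_, ?_⟩
  · have hdist_lim := ((hcomp (hxlim.const_sub (2 * l)) hylim).sub
      (hcomp hxlim (hylim.sub hslim))).abs
    exact sub_eq_zero.1 (abs_nonpos_iff.1
      (le_of_tendsto_of_tendsto' hdist_lim hη fun n => hdist (φ n)))
  · intro x' y' hx'
    refine le_of_tendsto_of_tendsto (hcomp tendsto_const_nhds (hslim.const_sub y'))
      ((hη.const_add (u (2 * l - x') y')).trans_eq (by rw [add_zero])) ?_
    filter_upwards [hη.eventually_le_const (sub_pos.2 hx'), hφ_top.eventually_ge_atTop y']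
      with n hηn hφn
    exact hle (φ n) x' y' (by linarith) (by rw [one_div_one_div]; linarith)

lemma le_reflection (hF : IsDoubleWell F) (hc : 0 < c) (hu : IsTravelingWave F c u) {l x : ℝ}
    (hfreq : ∀ ε > 0, ∀ Y, ∃ y ≥ Y, ∀ x ≥ l, u x y ≤ u (2 * l - x) y + ε) (hx : l ≤ x) (y : ℝ) :
    u x y ≤ u (2 * l - x) y := by
  rcases hx.eq_or_lt with rfl | hlx
  · rw [two_mul, add_sub_cancel_right]
  by_contra! hlt
  obtain ⟨s, hs, a, d, hla, htouch, hle⟩ := hu.exists_touching_reflection hF hc hfreq hlx hlt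
  exact hu.isSolution.not_touching_reflection hF hs hla htouch hle

lemma le_reflection_or_reflection_le (hF : IsDoubleWell F) (hc : 0 < c)
    (hu : IsTravelingWave F c u) (l : ℝ) :
    (∀ x y, l ≤ x → u x y ≤ u (2 * l - x) y) ∨ ∀ x y, l ≤ x → u (2 * l - x) y ≤ u x y := by
  refine (hu.frequently_le_or_frequently_ge hF hc l).imp
    (fun hfreq x y hx => hu.le_reflection hF hc hfreq hx y) fun hfreq x y hx => ?_
  have hreflected := hu.reflect.le_reflection hF hc (l := -l) (x := x - 2 * l) (fun ε hε Y => ?_)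
    (by linarith) y
  · convert hreflected using 2 <;> ring
  · obtain ⟨y, hy, hle⟩ := hfreq ε hε Y
    refine ⟨y, hy, fun x hx => ?_⟩
    convert hle (x + 2 * l) (by linarith) using 2 <;> ring_nf

end IsTravelingWave

end Comparison

/-! ### Symmetry -/

section Symmetry

variable {F : ℝ → ℝ} {c x₀ : ℝ} {u : ℝ → ℝ → ℝ}

namespace IsTravelingWave

lemma add_le_sub_or_sub_le_add (hF : IsDoubleWell F) (hc : 0 < c) (hu : IsTravelingWave F c u)
    (l : ℝ) : (∀ t y, 0 ≤ t → u (l + t) y ≤ u (l - t) y) ∨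
      ∀ t y, 0 ≤ t → u (l - t) y ≤ u (l + t) y := by
  have hreflect : ∀ t, 2 * l - (l + t) = l - t := fun t => by ring
  refine (hu.le_reflection_or_reflection_le hF hc l).imp (fun hle t y ht => ?_)
    fun hle t y ht => ?_
  all_goals
    rw [← hreflect]
    exact hle _ y (le_add_of_nonneg_right ht)

lemma not_forall_sub_le_add (hF : IsDoubleWell F) (hc : 0 < c) (hu : IsTravelingWave F c u) :
    ¬ ∀ l t y, 0 ≤ t → u (l - t) y ≤ u (l + t) y := by
  intro hle
  refine (hu.isSolution.neg_one_lt 0 0).not_ge (ge_of_tendsto (hu.tendsto_fst_atTop hF hc 0) ?_)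
  filter_upwards [eventually_ge_atTop 0] with x hx
  simpa only [sub_self, add_halves] using hle (x / 2) (x / 2) 0 (div_nonneg hx zero_le_two)

lemma not_forall_add_le_sub (hF : IsDoubleWell F) (hc : 0 < c) (hu : IsTravelingWave F c u) :
    ¬ ∀ l t y, 0 ≤ t → u (l + t) y ≤ u (l - t) y := by
  intro hle
  refine hu.reflect.not_forall_sub_le_add hF hc fun l t y ht => ?_
  convert hle (-l) t y ht using 2 <;> ring

/-- The axes on which the wave compares with its reflection in either direction form two closed
nonempty sets covering the line, so they meet by connectedness. -/
lemma exists_even_axis (hF : IsDoubleWell F) (hc : 0 < c) (hu : IsTravelingWave F c u) :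
    ∃ x₀ : ℝ, ∀ x y : ℝ, u (x₀ + x) y = u (x₀ - x) y := by
  set A : Set ℝ := {l | ∀ t y, 0 ≤ t → u (l + t) y ≤ u (l - t) y} with hA
  set B : Set ℝ := {l | ∀ t y, 0 ≤ t → u (l - t) y ≤ u (l + t) y} with hB
  have hcover : ∀ l, l ∈ A ∨ l ∈ B := hu.add_le_sub_or_sub_le_add hF hc
  have hadd : ∀ t y, Continuous fun l => u (l + t) y := fun t y =>
    hu.isSolution.continuous_comp (by fun_prop) continuous_const
  have hsub : ∀ t y, Continuous fun l => u (l - t) y := fun t y =>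
    hu.isSolution.continuous_comp (by fun_prop) continuous_const
  have hA_closed : IsClosed A := by
    simp only [hA, Set.ofPred_forall]
    exact isClosed_iInter fun t => isClosed_iInter fun y => isClosed_iInter fun _ =>
      isClosed_le (hadd t y) (hsub t y)
  have hB_closed : IsClosed B := by
    simp only [hB, Set.ofPred_forall]
    exact isClosed_iInter fun t => isClosed_iInter fun y => isClosed_iInter fun _ =>
      isClosed_le (hsub t y) (hadd t y)
  have hA_nonempty : A.Nonempty := by
    by_contra! hempty
    exact hu.not_forall_sub_le_add hF hc fun l => (hcover l).resolve_left (by simp [hempty])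
  have hB_nonempty : B.Nonempty := by
    by_contra! hempty
    exact hu.not_forall_add_le_sub hF hc fun l => (hcover l).resolve_right (by simp [hempty])
  obtain ⟨x₀, -, hxA, hxB⟩ := isPreconnected_closed_iff.1 isPreconnected_univ A B hA_closed
    hB_closed (fun l _ => hcover l) (by simpa using hA_nonempty) (by simpa using hB_nonempty)
  refine ⟨x₀, fun x y => ?_⟩
  rcases le_total 0 x with hx | hx
  · exact (hxA x y hx).antisymm (hxB x y hx)
  · simpa only [sub_neg_eq_add, ← sub_eq_add_neg] using
      (hxB (-x) y (neg_nonneg.2 hx)).antisymm (hxA (-x) y (neg_nonneg.2 hx))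

/-- Two distinct reflections compose to a translation, along which `u` would be nondecreasing
although it tends to `-1`. -/
lemma not_forall_reflection_le_of_even (hF : IsDoubleWell F) (hc : 0 < c)
    (hu : IsTravelingWave F c u) (heven : ∀ x y : ℝ, u (x₀ + x) y = u (x₀ - x) y) {l : ℝ}
    (hl : x₀ < l) (y : ℝ) : ¬ ∀ x, l ≤ x → u (2 * l - x) y ≤ u x y := by
  intro hle
  have hperiod : 0 < 2 * (l - x₀) := by linarith
  have htranslate : ∀ x, l ≤ x → u x y ≤ u (x + 2 * (l - x₀)) y := fun x hx => by
    convert hle (x + 2 * (l - x₀)) (by linarith) using 1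
    convert heven (x - x₀) y using 2 <;> ring
  have hmono : Monotone fun n : ℕ => u (l + n * (2 * (l - x₀))) y := by
    refine monotone_nat_of_le_succ fun n => ?_
    rw [Nat.cast_succ, add_one_mul, ← add_assoc]
    exact htranslate _ (le_add_of_nonneg_right (by positivity))
  have htop : Tendsto (fun n : ℕ => l + (n : ℝ) * (2 * (l - x₀))) atTop atTop :=
    tendsto_atTop_add_const_left _ _ (tendsto_natCast_atTop_atTop.atTop_mul_const hperiod)
  exact (hu.isSolution.neg_one_lt _ y).not_ge
    (hmono.ge_of_tendsto ((hu.tendsto_fst_atTop hF hc y).comp htop) 0)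

lemma antitoneOn_of_even (hF : IsDoubleWell F) (hc : 0 < c) (hu : IsTravelingWave F c u)
    (heven : ∀ x y : ℝ, u (x₀ + x) y = u (x₀ - x) y) (y : ℝ) :
    AntitoneOn (fun x => u x y) (Set.Ioi x₀) := by
  intro a (ha : x₀ < a) b (hb : x₀ < b) hab
  rcases hu.le_reflection_or_reflection_le hF hc ((a + b) / 2) with hle | hge
  · have hreflect : 2 * ((a + b) / 2) - b = a := by ring
    simpa only [hreflect] using hle b y (by linarith)
  · exact absurd (fun x => hge x y)
      (hu.not_forall_reflection_le_of_even hF hc heven (by linarith) y)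

end IsTravelingWave

lemma IsSolution.pdx_eq_zero_of_nonpos (hF : IsDoubleWell F) (hu : IsSolution F c u) {a x y x' : ℝ}
    (hle : ∀ x y, a < x → pdx u x y ≤ 0) (hx : a < x) (hzero : pdx u x y = 0) (y' : ℝ)
    (hx' : a < x') : pdx u x' y' = 0 := by
  obtain ⟨M, hM, hbound⟩ := hF.exists_bound
  refine neg_eq_zero.1 (eq_zero_of_nonneg_of_eq_zero_of_lt (c := c) (w := fun x y => -pdx u x y)
    hu.contDiff_pdx.neg hM.le (fun x y hx => neg_nonneg.2 (hle x y hx)) (fun x y hx => ?_) hx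
    (neg_eq_zero.2 hzero) y' hx')
  have hderiv := mul_le_mul_of_nonneg_right
    (le_of_abs_le (hbound (u x y) (hu.abs_le_one x y)).2.2) (neg_nonneg.2 (hle x y hx))
  simp only [driftLaplacian, pdxx_neg, pdyy_neg, pdy_neg]
  linarith [hu.equation_pdx hF x y]

lemma IsTravelingWave.pdx_neg_of_even (hF : IsDoubleWell F) (hc : 0 < c)
    (hu : IsTravelingWave F c u) (heven : ∀ x y : ℝ, u (x₀ + x) y = u (x₀ - x) y) {x : ℝ} (y : ℝ)
    (hx : x₀ < x) : pdx u x y < 0 := by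
  have hle : ∀ x y, x₀ < x → pdx u x y ≤ 0 := fun x y hx => by
    have hderiv := (hu.antitoneOn_of_even hF hc heven y).derivWithin_nonpos (x := x)
    rwa [derivWithin_of_isOpen isOpen_Ioi hx] at hderiv
  refine (hle x y hx).lt_of_ne fun hzero => ?_
  have hconst : ∀ t, x ≤ t → u x y = u t y := fun t ht => by
    have hdist := abs_sub_le_of_hasDerivAt ht (fun t => hu.isSolution.hasDerivAt_fst t y) (C := 0)
      fun t ht => by
        rw [hu.isSolution.pdx_eq_zero_of_nonpos hF hle hx hzero y (hx.trans_le ht.1), abs_zero]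
    rw [zero_mul, abs_nonpos_iff, sub_eq_zero] at hdist
    exact hdist.symm
  refine (hu.isSolution.neg_one_lt x y).not_ge (ge_of_tendsto (hu.tendsto_fst_atTop hF hc y) ?_)
  filter_upwards [eventually_ge_atTop x] with t ht
  exact (hconst t ht).le

end Symmetry

theorem even_symmetry_of_traveling_wave_general {F : ℝ → ℝ} (hF : IsDoubleWell F) {c : ℝ}
    (hc : 0 < c) {u : ℝ → ℝ → ℝ} (hu : IsTravelingWave F c u) :
    ∃ x₀ : ℝ, (∀ x y : ℝ, u (x₀ + x) y = u (x₀ - x) y) ∧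
      (∀ x y : ℝ, x₀ < x → pdx u x y < 0) := by
  obtain ⟨x₀, heven⟩ := hu.exists_even_axis hF hc
  exact ⟨x₀, heven, fun x y hx => hu.pdx_neg_of_even hF hc heven y hx⟩

/-- Even symmetry of monotone traveling wave solutions of the balanced
Allen-Cahn equation in the plane (Theorem 1.1). -/
theorem even_symmetry_of_traveling_wave
    (F : ℝ → ℝ) (hF : BalancedDoubleWell F) (c : ℝ) (hc : 0 < c)
    (u : ℝ → ℝ → ℝ) (hu : IsTravelingWave F c u) :
    ∃ x₀ : ℝ, (∀ x y : ℝ, u (x₀ + x) y = u (x₀ - x) y) ∧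
      (∀ x y : ℝ, x₀ < x → pdx u x y < 0) :=
  even_symmetry_of_traveling_wave_general hF.isDoubleWell hc hu
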